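/- arXiv:1502.05332 — 5 statements merged into one kernel-verified Lean document; each statement's English description precedes it below -/
import Mathlib

section
/- Let S be a set of 2k points in the plane in general position such that at least two points of S lie in the interior of the convex hull of S. Then S has a non-crossing perfect matching with the piercing property. -/
open scoped Classical

/-- Points in the plane. -/
abbrev Pt : Type := ℝ × ℝ

/-- A finite planar point set is in *general position* if no three of its
points are collinear. -/
def GeneralPosition (S : Finset Pt) : Prop :=
  ∀ p ∈ S, ∀ q ∈ S, ∀ r ∈ S, p ≠ q → p ≠ r → q ≠ r →
    ¬ Collinear ℝ ({p, q, r} : Set Pt)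

/-- The closed straight-line segment spanned by an unordered pair of points. -/
noncomputable def seg : Sym2 Pt → Set Pt :=
  Sym2.lift ⟨fun a b => segment ℝ a b, fun a b => segment_symm ℝ a b⟩

/-- `M` is a non-crossing perfect matching of `S`: a partition of `S` into
unordered pairs (of distinct points) whose closed segments are pairwise disjoint. -/
def IsNCMatching (S : Finset Pt) (M : Finset (Sym2 Pt)) : Prop :=
  (∀ e ∈ M, ¬ e.IsDiag) ∧
  (∀ e ∈ M, ∀ p, p ∈ e → p ∈ S) ∧
  (∀ p ∈ S, ∃! e, e ∈ M ∧ p ∈ e) ∧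
  (∀ e ∈ M, ∀ f ∈ M, e ≠ f → Disjoint (seg e) (seg f))

/-- The number of non-crossing perfect matchings of `S`. -/
noncomputable def pm (S : Finset Pt) : ℕ :=
  Set.ncard {M : Finset (Sym2 Pt) | IsNCMatching S M}

/-- `S` is in convex position: no point of `S` lies in the convex hull of the
other points. -/
def ConvexPosition (S : Finset Pt) : Prop :=
  ∀ p ∈ S, p ∉ convexHull ℝ (↑(S.erase p) : Set Pt)

/-- The signed side of `X` with respect to the directed line from `Q` to `P`.
The two open half-planes bounded by the line through `Q` and `P` are
`{X | 0 < sideOf Q P X}` and `{X | sideOf Q P X < 0}`. -/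
def sideOf (Q P X : Pt) : ℝ :=
  (P.1 - Q.1) * (X.2 - Q.2) - (P.2 - Q.2) * (X.1 - Q.1)

/-- Segment `AB` pierces segment `CD`: the closed segments are disjoint, but the
affine line through `A` and `B` meets the closed segment `CD`. -/
def Pierces (A B C D : Pt) : Prop :=
  Disjoint (segment ℝ A B) (segment ℝ C D) ∧
  ((affineSpan ℝ ({A, B} : Set Pt) : Set Pt) ∩ segment ℝ C D).Nonempty

/-- The matching `M` of `S` has the *piercing property*: it contains pairs
`{A,B}` and `{C,D}` with `A` on the boundary of the convex hull of `S`
and `AB` piercing `CD`. -/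
def HasPiercing (S : Finset Pt) (M : Finset (Sym2 Pt)) : Prop :=
  ∃ A B C D : Pt, s(A, B) ∈ M ∧ s(C, D) ∈ M ∧
    A ∈ frontier (convexHull ℝ (S : Set Pt)) ∧ Pierces A B C D

/-- The exceptional order type with interior point `Q`: `Q` is the unique point
of `S` interior to the convex hull of `S`, and for every other point `P` of `S`
each open half-plane bounded by the line through `Q` and `P` contains exactly
two points of `S`. -/
def ExceptionalAt (S : Finset Pt) (Q : Pt) : Prop :=
  (↑S ∩ interior (convexHull ℝ (S : Set Pt))) = {Q} ∧
  ∀ P ∈ S, P ≠ Q →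
    (S.filter (fun X => 0 < sideOf Q P X)).card = 2 ∧
    (S.filter (fun X => sideOf Q P X < 0)).card = 2

/-- The exceptional order type of Figure 1. -/
def Exceptional (S : Finset Pt) : Prop :=
  ∃ Q ∈ S, ExceptionalAt S Q

namespace PM

def Gs (T : Finset Pt) : Prop :=
  ∀ p ∈ T, ∀ q ∈ T, ∀ r ∈ T, p ≠ q → p ≠ r → q ≠ r → sideOf p q r ≠ 0

def Edge (S : Finset Pt) (P Q : Pt) : Prop :=
  P ∈ S ∧ Q ∈ S ∧ P ≠ Q ∧ ∀ X ∈ S, X ≠ P → X ≠ Q → 0 < sideOf P Q X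

def Inn (S : Finset Pt) (B : Pt) : Prop :=
  ∀ a b : ℝ, (a ≠ 0 ∨ b ≠ 0) → ∃ X ∈ S, a * B.1 + b * B.2 < a * X.1 + b * X.2

def Good (S : Finset Pt) : Prop := ∃ M : Finset (Sym2 Pt), IsNCMatching S M ∧ HasPiercing S M

lemma line_param {p q r : Pt} (hpq : p ≠ q) (h0 : sideOf p q r = 0) :
    ∃ t : ℝ, r = t • (q - p) + p := by
  obtain ⟨p1, p2⟩ := p
  obtain ⟨q1, q2⟩ := q
  obtain ⟨r1, r2⟩ := r
  simp only [sideOf] at h0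
  by_cases h1 : q1 = p1
  · have h2 : q2 - p2 ≠ 0 := by
      intro h2
      apply hpq
      ext
      · exact h1.symm
      · simp; linarith
    subst h1
    refine ⟨(r2 - p2) / (q2 - p2), ?_⟩
    have : r1 = q1 := by
      have : (q2 - p2) * (r1 - q1) = 0 := by linarith
      rcases mul_eq_zero.1 this with h | h
      · exact absurd h h2
      · linarith
    ext
    · simp [this]
    · simp; field_simp; ring
  · have h2 : q1 - p1 ≠ 0 := sub_ne_zero.2 h1
    refine ⟨(r1 - p1) / (q1 - p1), ?_⟩
    ext
    · simp; field_simp; ring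
    · simp; field_simp; linarith

lemma gs_of {S : Finset Pt} (h : GeneralPosition S) : Gs S := by
  intro p hp q hq r hr hpq hpr hqr h0
  apply h p hp q hq r hr hpq hpr hqr
  rw [collinear_iff_of_mem (p₀ := p) (by simp)]
  refine ⟨q - p, ?_⟩
  have key := line_param hpq h0
  rintro x (rfl | rfl | rfl)
  · exact ⟨0, by simp⟩
  · exact ⟨1, by simp⟩
  · exact key

lemma Gs.mono {S T : Finset Pt} (h : Gs S) (hT : T ⊆ S) : Gs T :=
  fun p hp q hq r hr => h p (hT hp) q (hT hq) r (hT hr)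

lemma side_self1 (P Q : Pt) : sideOf P Q P = 0 := by simp [sideOf]
lemma side_self2 (P Q : Pt) : sideOf P Q Q = 0 := by simp [sideOf]; ring
lemma side_swap (P Q X : Pt) : sideOf Q P X = - sideOf P Q X := by simp [sideOf]; ring
lemma side_rot (P Q X : Pt) : sideOf Q X P = sideOf P Q X := by simp [sideOf]; ring
lemma side_swap2 (P Q X : Pt) : sideOf P X Q = - sideOf P Q X := by simp [sideOf]; ring
lemma side_comb (P Q X Y : Pt) (a b : ℝ) (h : a + b = 1) :
    sideOf P Q (a • X + b • Y) = a * sideOf P Q X + b * sideOf P Q Y := by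
  obtain rfl : b = 1 - a := by linarith
  simp [sideOf]; ring

lemma inn_of {S : Finset Pt} {B : Pt} (h : B ∈ interior (convexHull ℝ (S : Set Pt))) : Inn S B := by
  intro a b hab
  by_contra hc
  push Not at hc
  have hsub : convexHull ℝ (S : Set Pt) ⊆ {X : Pt | a * X.1 + b * X.2 ≤ a * B.1 + b * B.2} := by
    apply convexHull_min
    · intro X hX
      exact hc X hX
    · intro X hX Y hY s t hs ht hst
      simp only [Set.mem_ofPred_eq] at *
      obtain rfl : t = 1 - s := by linarith
      simp
      nlinarith
  have hcont : Continuous (fun e : ℝ => (B.1 + e * a, B.2 + e * b) : ℝ → Pt) := by fun_prop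
  have ho : IsOpen ((fun e : ℝ => (B.1 + e * a, B.2 + e * b) : ℝ → Pt) ⁻¹'
      interior (convexHull ℝ (S : Set Pt))) := isOpen_interior.preimage hcont
  rw [Metric.isOpen_iff] at ho
  obtain ⟨e, he, hb⟩ := ho 0 (by simpa using h)
  have h1 : (e / 2) ∈ Metric.ball (0 : ℝ) e := by
    simp [abs_of_pos he]; exact he
  have h2 := hsub (interior_subset (hb h1))
  simp only [Set.mem_ofPred_eq] at h2
  have h3 : 0 < a ^ 2 + b ^ 2 := by
    rcases hab with h | h <;> positivity
  nlinarith [mul_pos he h3]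

lemma Inn.side {S : Finset Pt} {B : Pt} (h : Inn S B) {P Q : Pt} (hPQ : P ≠ Q) :
    ∃ X ∈ S, sideOf P Q X < sideOf P Q B := by
  obtain ⟨X, hX, h1⟩ := h (Q.2 - P.2) (-(Q.1 - P.1)) (by
    by_contra hc
    push Not at hc
    apply hPQ
    ext <;> linarith [hc.1, hc.2])
  refine ⟨X, hX, ?_⟩
  simp only [sideOf]
  nlinarith

lemma Inn.not_edge {S : Finset Pt} {B P Q : Pt} (h : Inn S B) (he : Edge S P Q) : B ≠ P ∧ B ≠ Q := by
  obtain ⟨hP, hQ, hne, hh⟩ := he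
  obtain ⟨X, hX, h1⟩ := h.side hne
  have : 0 ≤ sideOf P Q X := by
    by_cases h2 : X = P
    · rw [h2, side_self1]
    by_cases h3 : X = Q
    · rw [h3, side_self2]
    exact (hh X hX h2 h3).le
  constructor
  · rintro rfl
    rw [side_self1] at h1; linarith
  · rintro rfl
    rw [side_self2] at h1; linarith

lemma Edge.nonneg {S : Finset Pt} {P Q X : Pt} (h : Edge S P Q) (hX : X ∈ S) : 0 ≤ sideOf P Q X := by
  by_cases h2 : X = P
  · rw [h2, side_self1]
  by_cases h3 : X = Q
  · rw [h3, side_self2]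
  exact (h.2.2.2 X hX h2 h3).le

lemma Edge.frontier {S : Finset Pt} {P Q : Pt} (h : Edge S P Q) :
    P ∈ frontier (convexHull ℝ (S : Set Pt)) ∧ Q ∈ frontier (convexHull ℝ (S : Set Pt)) := by
  constructor
  · exact ⟨subset_closure (subset_convexHull ℝ _ h.1), fun hi => ((inn_of hi).not_edge h).1 rfl⟩
  · exact ⟨subset_closure (subset_convexHull ℝ _ h.2.1), fun hi => ((inn_of hi).not_edge h).2 rfl⟩

lemma ang {T : Finset Pt} (hT : T.Nonempty) (Q : Pt) (a b : ℝ)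
    (hu : ∀ X ∈ T, 0 < a * (X.1 - Q.1) + b * (X.2 - Q.2))
    (hg : ∀ X ∈ T, ∀ Y ∈ T, X ≠ Y → sideOf Q X Y ≠ 0) :
    ∃ R ∈ T, ∀ X ∈ T, X ≠ R → 0 < sideOf Q R X := by
  obtain ⟨R, hR, hmin⟩ := T.exists_min_image
    (fun X => (a * (X.2 - Q.2) - b * (X.1 - Q.1)) / (a * (X.1 - Q.1) + b * (X.2 - Q.2))) hT
  refine ⟨R, hR, fun X hX hne => lt_of_le_of_ne ?_ (hg R hR X hX hne.symm).symm⟩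
  have h1 := hmin X hX
  have uX := hu X hX
  have uR := hu R hR
  rw [div_le_div_iff₀ uR uX] at h1
  have h2 : 0 ≤ (a ^ 2 + b ^ 2) * sideOf Q R X := by
    simp only [sideOf]; nlinarith
  have h3 : 0 < a ^ 2 + b ^ 2 := by
    by_contra hc
    have ha : a = 0 := by nlinarith
    have hb : b = 0 := by nlinarith
    subst ha hb
    simp at uX
  exact nonneg_of_mul_nonneg_right h2 h3

lemma ang' {T : Finset Pt} (hT : T.Nonempty) (Q : Pt) (a b : ℝ)
    (hu : ∀ X ∈ T, 0 < a * (X.1 - Q.1) + b * (X.2 - Q.2))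
    (hg : ∀ X ∈ T, ∀ Y ∈ T, X ≠ Y → sideOf Q X Y ≠ 0) :
    ∃ R ∈ T, ∀ X ∈ T, X ≠ R → 0 < sideOf R Q X := by
  obtain ⟨R, hR, hmin⟩ := T.exists_max_image
    (fun X => (a * (X.2 - Q.2) - b * (X.1 - Q.1)) / (a * (X.1 - Q.1) + b * (X.2 - Q.2))) hT
  refine ⟨R, hR, fun X hX hne => lt_of_le_of_ne ?_ ?_⟩
  rotate_left
  · rw [side_swap]
    intro h
    exact hg R hR X hX hne.symm (by linarith)
  have h1 := hmin X hX
  have uX := hu X hX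
  have uR := hu R hR
  rw [div_le_div_iff₀ uX uR] at h1
  have h2 : 0 ≤ (a ^ 2 + b ^ 2) * sideOf R Q X := by
    simp only [sideOf]; nlinarith
  have h3 : 0 < a ^ 2 + b ^ 2 := by
    by_contra hc
    have ha : a = 0 := by nlinarith
    have hb : b = 0 := by nlinarith
    subst ha hb
    simp at uX
  exact nonneg_of_mul_nonneg_right h2 h3

lemma exists_edge {T : Finset Pt} (hg : Gs T) (h2 : 2 ≤ T.card) : ∃ C D, Edge T C D := by
  have hne : T.Nonempty := Finset.card_pos.1 (by omega)
  obtain ⟨P, hP, hmax⟩ := T.exists_max_image (fun X => X.1 ^ 2 + X.2 ^ 2) hne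
  obtain ⟨R, hR, hh⟩ := ang (T := T.erase P)
    (Finset.card_pos.1 (by rw [Finset.card_erase_of_mem hP]; omega)) P (-P.1) (-P.2) (by
      intro X hX
      rw [Finset.mem_erase] at hX
      have h1 := hmax X hX.2
      have : 0 < (X.1 - P.1) ^ 2 + (X.2 - P.2) ^ 2 := by
        by_contra hc
        apply hX.1
        ext <;> nlinarith
      nlinarith) (by
      intro X hX Y hY hXY
      rw [Finset.mem_erase] at hX hY
      exact hg P hP X hX.2 Y hY.2 hX.1.symm hY.1.symm hXY)
  rw [Finset.mem_erase] at hR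
  exact ⟨P, R, hP, hR.2, hR.1.symm, fun X hX h1 h3 => hh X (by simp [h1, hX]) h3⟩

lemma exists_next {S : Finset Pt} (hg : Gs S) (h3 : 3 ≤ S.card) {P Q : Pt} (he : Edge S P Q) :
    ∃ R, Edge S Q R ∧ R ≠ P := by
  obtain ⟨hP, hQ, hne, hh⟩ := he
  obtain ⟨R, hR, hm⟩ := ang (T := (S.erase P).erase Q)
    (Finset.card_pos.1 (by
      rw [Finset.card_erase_of_mem (by simp [hQ, hne.symm]), Finset.card_erase_of_mem hP]; omega))
    Q (-(Q.2 - P.2)) (Q.1 - P.1) (by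
      intro X hX
      simp only [Finset.mem_erase] at hX
      have := hh X hX.2.2 hX.2.1 hX.1
      simp only [sideOf] at this
      nlinarith) (by
      intro X hX Y hY hXY
      simp only [Finset.mem_erase] at hX hY
      exact hg Q hQ X hX.2.2 Y hY.2.2 hX.1.symm hY.1.symm hXY)
  simp only [Finset.mem_erase] at hR
  refine ⟨R, ⟨hQ, hR.2.2, hR.1.symm, fun X hX h1 h4 => ?_⟩, hR.2.1⟩
  by_cases hXP : X = P
  · subst hXP
    rw [side_rot]
    exact hh R hR.2.2 hR.2.1 hR.1
  · exact hm X (by simp [h1, hX, hXP]) h4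

lemma exists_prev {S : Finset Pt} (hg : Gs S) (h3 : 3 ≤ S.card) {P Q : Pt} (he : Edge S P Q) :
    ∃ R, Edge S R P ∧ R ≠ Q := by
  obtain ⟨hP, hQ, hne, hh⟩ := he
  obtain ⟨R, hR, hm⟩ := ang' (T := (S.erase P).erase Q)
    (Finset.card_pos.1 (by
      rw [Finset.card_erase_of_mem (by simp [hQ, hne.symm]), Finset.card_erase_of_mem hP]; omega))
    P (-(Q.2 - P.2)) (Q.1 - P.1) (by
      intro X hX
      simp only [Finset.mem_erase] at hX
      have := hh X hX.2.2 hX.2.1 hX.1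
      simp only [sideOf] at this
      nlinarith) (by
      intro X hX Y hY hXY
      simp only [Finset.mem_erase] at hX hY
      exact hg P hP X hX.2.2 Y hY.2.2 hX.2.1.symm hY.2.1.symm hXY)
  simp only [Finset.mem_erase] at hR
  refine ⟨R, ⟨hR.2.2, hP, hR.2.1, fun X hX h1 h4 => ?_⟩, hR.1⟩
  by_cases hXQ : X = Q
  · subst hXQ
    rw [← side_rot]
    exact hh R hR.2.2 hR.2.1 hR.1
  · exact hm X (by simp [h4, hX, hXQ]) h1

/-- exit edge -/
lemma exit {T : Finset Pt} (A B : Pt) (hg : Gs T)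
    (hoff : ∀ X ∈ T, sideOf A B X ≠ 0)
    (hL : ∃ X ∈ T, sideOf A B X < 0) (hR : ∃ X ∈ T, 0 < sideOf A B X) :
    ∃ C D, Edge T C D ∧ sideOf A B C < 0 ∧ 0 < sideOf A B D := by
  set L := T.filter (fun X => sideOf A B X < 0) with hLd
  set R := T.filter (fun X => 0 < sideOf A B X) with hRd
  obtain ⟨⟨C, D⟩, hCD, hmax⟩ := (L ×ˢ R).exists_max_image
    (fun p => sideOf p.1 p.2 A / (sideOf A B p.2 - sideOf A B p.1)) (by
      obtain ⟨X, hX, h1⟩ := hL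
      obtain ⟨Y, hY, h2⟩ := hR
      exact ⟨(X, Y), by simp [hLd, hRd, hX, hY, h1, h2]⟩)
  simp only [Finset.mem_product, hLd, hRd, Finset.mem_filter] at hCD
  obtain ⟨⟨hC, uC⟩, hD, uD⟩ := hCD
  have hCD : C ≠ D := by rintro rfl; linarith
  refine ⟨C, D, ⟨hC, hD, hCD, fun X hX hXC hXD => ?_⟩, uC, uD⟩
  refine lt_of_le_of_ne ?_ (hg C hC D hD X hX hCD hXC.symm hXD.symm).symm
  by_contra hneg
  push Not at hneg
  rcases lt_or_gt_of_ne (hoff X hX) with h | h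
  · have h1 := hmax (X, D) (by simp [hLd, hRd, hX, hD, h, uD])
    simp only at h1
    rw [div_le_div_iff₀ (by linarith) (by linarith)] at h1
    have : sideOf X D A * (sideOf A B D - sideOf A B C) - sideOf C D A * (sideOf A B D - sideOf A B X)
      = - (sideOf A B D * sideOf C D X) := by simp only [sideOf]; ring
    nlinarith [mul_pos uD (neg_pos.2 hneg)]
  · have h1 := hmax (C, X) (by simp [hLd, hRd, hX, hC, h, uC])
    simp only at h1
    rw [div_le_div_iff₀ (by linarith) (by linarith)] at h1
    have : sideOf C X A * (sideOf A B D - sideOf A B C) - sideOf C D A * (sideOf A B X - sideOf A B C)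
      = (sideOf A B C * sideOf C D X) := by simp only [sideOf]; ring
    nlinarith [mul_pos (neg_pos.2 uC) (neg_pos.2 hneg)]

lemma seg_mk (a b : Pt) : seg s(a, b) = segment ℝ a b := rfl

lemma convex_le (P Q : Pt) : Convex ℝ {X : Pt | sideOf P Q X ≤ 0} := by
  intro X hX Y hY s t hs ht hst
  simp only [Set.mem_ofPred_eq] at *
  rw [side_comb _ _ _ _ _ _ hst]
  nlinarith

lemma convex_gt (P Q : Pt) : Convex ℝ {X : Pt | 0 < sideOf P Q X} := by
  intro X hX Y hY s t hs ht hst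
  simp only [Set.mem_ofPred_eq] at *
  rw [side_comb _ _ _ _ _ _ hst]
  rcases hs.eq_or_lt with h | h
  · obtain rfl : t = 1 := by linarith
    subst h; simpa using hY
  · have := mul_pos h hX
    have := mul_nonneg ht hY.le
    linarith

lemma seg_sub {K : Set Pt} (hK : Convex ℝ K) {e : Sym2 Pt} (h : ∀ p ∈ e, p ∈ K) : seg e ⊆ K := by
  induction e with
  | _ a b =>
    rw [seg_mk]
    exact hK.segment_subset (h a (by simp)) (h b (by simp))

lemma nc_union {T1 T2 : Finset Pt} {M1 M2 : Finset (Sym2 Pt)} (h1 : IsNCMatching T1 M1)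
    (h2 : IsNCMatching T2 M2) (P Q : Pt) (hs1 : ∀ X ∈ T1, sideOf P Q X ≤ 0)
    (hs2 : ∀ X ∈ T2, 0 < sideOf P Q X) : IsNCMatching (T1 ∪ T2) (M1 ∪ M2) := by
  obtain ⟨a1, b1, c1, d1⟩ := h1
  obtain ⟨a2, b2, c2, d2⟩ := h2
  have dis : ∀ e ∈ M1, ∀ f ∈ M2, Disjoint (seg e) (seg f) := by
    intro e he f hf
    have s1 : seg e ⊆ _ := seg_sub (convex_le P Q) (fun p hp => hs1 p (b1 e he p hp))
    have s2 : seg f ⊆ _ := seg_sub (convex_gt P Q) (fun p hp => hs2 p (b2 f hf p hp))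
    rw [Set.disjoint_left]
    intro x hx hx2
    have := s1 hx
    have := s2 hx2
    simp only [Set.mem_ofPred_eq] at *
    linarith
  refine ⟨?_, ?_, ?_, ?_⟩
  · intro e he
    rcases Finset.mem_union.1 he with h | h
    · exact a1 e h
    · exact a2 e h
  · intro e he p hp
    rcases Finset.mem_union.1 he with h | h
    · exact Finset.mem_union_left _ (b1 e h p hp)
    · exact Finset.mem_union_right _ (b2 e h p hp)
  · intro p hp
    rcases Finset.mem_union.1 hp with h | h
    · obtain ⟨e, ⟨he, hpe⟩, hu⟩ := c1 p h
      refine ⟨e, ⟨Finset.mem_union_left _ he, hpe⟩, ?_⟩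
      rintro f ⟨hf, hpf⟩
      rcases Finset.mem_union.1 hf with h' | h'
      · exact hu f ⟨h', hpf⟩
      · have := hs2 p (b2 f h' p hpf)
        have := hs1 p h
        linarith
    · obtain ⟨e, ⟨he, hpe⟩, hu⟩ := c2 p h
      refine ⟨e, ⟨Finset.mem_union_right _ he, hpe⟩, ?_⟩
      rintro f ⟨hf, hpf⟩
      rcases Finset.mem_union.1 hf with h' | h'
      · have := hs1 p (b1 f h' p hpf)
        have := hs2 p h
        linarith
      · exact hu f ⟨h', hpf⟩
  · intro e he f hf hne
    rcases Finset.mem_union.1 he with h | h <;> rcases Finset.mem_union.1 hf with h' | h'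
    · exact d1 e h f h' hne
    · exact dis e h f h'
    · exact (dis f h' e h).symm
    · exact d2 e h f h' hne

lemma nc_pair {C D : Pt} (h : C ≠ D) : IsNCMatching {C, D} {s(C, D)} := by
  refine ⟨?_, ?_, ?_, ?_⟩
  · simpa using h
  · simp
  · intro p hp
    refine ⟨s(C, D), by simpa using hp, ?_⟩
    rintro f ⟨hf, -⟩
    simpa using hf
  · intro e he f hf hne
    simp at he hf
    exact absurd (he.trans hf.symm) hne

lemma nc_empty : IsNCMatching ∅ ∅ := by
  refine ⟨?_, ?_, ?_, ?_⟩ <;> simp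

/-- add a hull edge -/
lemma nc_add {T : Finset Pt} {C D : Pt} (he : Edge T C D) {M : Finset (Sym2 Pt)}
    (hM : IsNCMatching ((T.erase C).erase D) M) : IsNCMatching T ({s(C, D)} ∪ M) := by
  have := nc_union (nc_pair he.2.2.1) hM C D (by
    intro X hX
    simp only [Finset.mem_insert, Finset.mem_singleton] at hX
    rcases hX with rfl | rfl
    · rw [side_self1]
    · rw [side_self2]) (by
    intro X hX
    simp only [Finset.mem_erase] at hX
    exact he.2.2.2 X hX.2.2 hX.2.1 hX.1)
  convert this using 1
  ext X
  simp only [Finset.mem_union, Finset.mem_insert, Finset.mem_singleton, Finset.mem_erase]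
  have h1 := he.1
  have h2 := he.2.1
  by_cases hX : X = C
  · subst hX; simp [h1]
  by_cases hX2 : X = D
  · subst hX2; simp [h2]
  simp [hX, hX2]

lemma card_ee {T : Finset Pt} {C D : Pt} (hC : C ∈ T) (hD : D ∈ T) (h : C ≠ D) :
    ((T.erase C).erase D).card + 2 = T.card := by
  have h1 := Finset.card_erase_add_one hC
  have h2 := Finset.card_erase_add_one (s := T.erase C) (a := D) (by simp [hD, h.symm])
  omega

lemma ee_sub (T : Finset Pt) (C D : Pt) : (T.erase C).erase D ⊆ T :=
  (Finset.erase_subset _ _).trans (Finset.erase_subset _ _)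

lemma nc_exists (n : ℕ) : ∀ T : Finset Pt, Gs T → T.card = 2 * n → ∃ M, IsNCMatching T M := by
  induction n with
  | zero =>
    intro T _ h
    simp at h
    subst h
    exact ⟨∅, nc_empty⟩
  | succ n ih =>
    intro T hg hc
    obtain ⟨C, D, he⟩ := exists_edge hg (by omega)
    have := card_ee he.1 he.2.1 he.2.2.1
    obtain ⟨M, hM⟩ := ih ((T.erase C).erase D) (hg.mono (ee_sub T C D)) (by omega)
    exact ⟨_, nc_add he hM⟩

lemma nc_exists' {T : Finset Pt} (hg : Gs T) (h : Even T.card) : ∃ M, IsNCMatching T M := by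
  obtain ⟨n, hn⟩ := h
  exact nc_exists n T hg (by omega)

lemma card_split {T : Finset Pt} {A B : Pt} (hg : Gs T) (hA : A ∈ T) (hB : B ∈ T) (hAB : A ≠ B) :
    T = ({A, B} ∪ T.filter (fun X => 0 < sideOf A B X)) ∪ T.filter (fun X => sideOf A B X < 0) ∧
    T.card = 2 + (T.filter (fun X => 0 < sideOf A B X)).card +
      (T.filter (fun X => sideOf A B X < 0)).card := by
  set L := T.filter (fun X => sideOf A B X < 0) with hLd
  set R := T.filter (fun X => 0 < sideOf A B X) with hRd
  have hTe : T = ({A, B} ∪ R) ∪ L := by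
    ext X
    simp only [hLd, hRd, Finset.mem_union, Finset.mem_insert, Finset.mem_singleton, Finset.mem_filter]
    constructor
    · intro hX
      by_cases h1 : X = A
      · simp [h1]
      by_cases h2 : X = B
      · simp [h2]
      rcases lt_or_gt_of_ne (hg A hA B hB X hX hAB (Ne.symm h1) (Ne.symm h2)) with h | h
      · simp [hX, h]
      · simp [hX, h]
    · rintro (((rfl | rfl) | h) | h)
      · exact hA
      · exact hB
      · exact h.1
      · exact h.1
  have d1 : Disjoint ({A, B} : Finset Pt) R := by
    rw [Finset.disjoint_left]
    intro X hX hX2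
    simp only [Finset.mem_insert, Finset.mem_singleton, hRd, Finset.mem_filter] at hX hX2
    rcases hX with rfl | rfl
    · rw [side_self1] at hX2; linarith [hX2.2]
    · rw [side_self2] at hX2; linarith [hX2.2]
  have d2 : Disjoint (({A, B} : Finset Pt) ∪ R) L := by
    rw [Finset.disjoint_left]
    intro X hX hX2
    simp only [Finset.mem_union, Finset.mem_insert, Finset.mem_singleton, hRd, hLd,
      Finset.mem_filter] at hX hX2
    rcases hX with (rfl | rfl) | hX
    · rw [side_self1] at hX2; linarith [hX2.2]
    · rw [side_self2] at hX2; linarith [hX2.2]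
    · linarith [hX.2, hX2.2]
  have hc : T.card = 2 + R.card + L.card := by
    conv_lhs => rw [hTe]
    rw [Finset.card_union_of_disjoint d2, Finset.card_union_of_disjoint d1, Finset.card_pair hAB]
  exact ⟨hTe, hc⟩

lemma inner {T : Finset Pt} {A B : Pt} (hg : Gs T) (hA : A ∈ T) (hB : B ∈ T) (hAB : A ≠ B)
    (hT : Even T.card) (hL : Even (T.filter (fun X => sideOf A B X < 0)).card) :
    ∃ M, IsNCMatching T M ∧ s(A, B) ∈ M := by
  set L := T.filter (fun X => sideOf A B X < 0) with hLd
  set R := T.filter (fun X => 0 < sideOf A B X) with hRd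
  obtain ⟨hTe, hc⟩ := card_split hg hA hB hAB
  rw [← hRd, ← hLd] at hc
  have hR : Even R.card := by
    rcases hT with ⟨a, ha⟩
    rcases hL with ⟨b, hb⟩
    exact ⟨a - 1 - b, by omega⟩
  obtain ⟨ML, hML⟩ := nc_exists' (hg.mono (Finset.filter_subset _ _)) hL
  obtain ⟨MR, hMR⟩ := nc_exists' (hg.mono (Finset.filter_subset _ _)) hR
  have u1 := nc_union (nc_pair hAB) hMR A B (by
    intro X hX
    simp only [Finset.mem_insert, Finset.mem_singleton] at hX
    rcases hX with rfl | rfl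
    · rw [side_self1]
    · rw [side_self2]) (by
    intro X hX
    exact (Finset.mem_filter.1 hX).2)
  have u2 := nc_union u1 hML B A (by
    intro X hX
    simp only [Finset.mem_union, Finset.mem_insert, Finset.mem_singleton] at hX
    rw [side_swap]
    rcases hX with (rfl | rfl) | hX
    · rw [side_self1]; simp
    · rw [side_self2]; simp
    · have := (Finset.mem_filter.1 hX).2
      linarith) (by
    intro X hX
    rw [side_swap]
    have := (Finset.mem_filter.1 hX).2
    linarith)
  exact ⟨{s(A, B)} ∪ MR ∪ ML, (congrArg (fun Z => IsNCMatching Z _) hTe).mpr u2, by simp⟩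

lemma finish {S : Finset Pt} {M : Finset (Sym2 Pt)} {A B C D : Pt} (hM : IsNCMatching S M)
    (hAB : s(A, B) ∈ M) (hCD : s(C, D) ∈ M) (hA : A ∈ frontier (convexHull ℝ (S : Set Pt)))
    (uC : sideOf A B C < 0) (uD : 0 < sideOf A B D) : Good S := by
  refine ⟨M, hM, A, B, C, D, hAB, hCD, hA, ?_, ?_⟩
  · have := hM.2.2.2 _ hAB _ hCD (by
      intro h
      have : C ∈ s(A, B) := by rw [h]; simp
      rcases Sym2.mem_iff.1 this with rfl | rfl
      · rw [side_self1] at uC; linarith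
      · rw [side_self2] at uC; linarith)
    exact this
  · have hd : 0 < sideOf A B D - sideOf A B C := by linarith
    refine ⟨AffineMap.lineMap A B (sideOf C D A / (sideOf A B D - sideOf A B C)),
      AffineMap.lineMap_mem_affineSpan_pair _ _ _, ?_⟩
    refine ⟨sideOf A B D / (sideOf A B D - sideOf A B C),
      - sideOf A B C / (sideOf A B D - sideOf A B C), by positivity,
      div_nonneg (by linarith) hd.le, by field_simp; ring, ?_⟩
    ext
    · simp [AffineMap.lineMap_apply]
      field_simp
      simp only [sideOf]
      ring
    · simp [AffineMap.lineMap_apply]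
      field_simp
      simp only [sideOf]
      ring

lemma filter_ee (T : Finset Pt) (C D : Pt) (p : Pt → Prop) :
    (((T.erase C).erase D).filter p) = ((T.filter p).erase C).erase D := by
  ext X; simp only [Finset.mem_filter, Finset.mem_erase]; tauto

lemma card_filter_ee {T : Finset Pt} {A B C D : Pt} (hC : C ∈ T) 
    (uC : sideOf A B C < 0) (uD : 0 < sideOf A B D) :
    (((T.erase C).erase D).filter (fun X => sideOf A B X < 0)).card + 1 =
      (T.filter (fun X => sideOf A B X < 0)).card := by
  rw [filter_ee, Finset.erase_eq_of_notMem (a := D), Finset.card_erase_add_one]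
  · simp [hC, uC]
  · simp only [Finset.mem_erase, Finset.mem_filter]
    rintro ⟨-, -, h⟩
    linarith

lemma ne_of_side {A B C : Pt} (h : sideOf A B C ≠ 0) : C ≠ A ∧ C ≠ B ∧ A ≠ B := by
  refine ⟨?_, ?_, ?_⟩
  · rintro rfl; exact h (side_self1 _ _)
  · rintro rfl; exact h (side_self2 _ _)
  · rintro rfl; exact h (by simp [sideOf])

lemma mem_ee {T : Finset Pt} {C D X : Pt} (hX : X ∈ T) (uC : X ≠ C) (uD : X ≠ D) :
    X ∈ (T.erase C).erase D := by simp [hX, uC, uD]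

lemma fin_odd {S : Finset Pt} {A B C D : Pt} (hS : Even S.card) (hg : Gs S) (he : Edge S C D)
    (hA : A ∈ S) (hB : B ∈ S) (hf : A ∈ frontier (convexHull ℝ (S : Set Pt)))
    (uC : sideOf A B C < 0) (uD : 0 < sideOf A B D)
    (hL : Odd (S.filter (fun X => sideOf A B X < 0)).card) : Good S := by
  have nC := ne_of_side uC.ne
  have nD := ne_of_side uD.ne'
  have c1 := card_ee he.1 he.2.1 he.2.2.1
  have c2 := card_filter_ee he.1 uC uD
  obtain ⟨M, hM, hm⟩ := inner (T := (S.erase C).erase D) (A := A) (B := B)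
    (hg.mono (ee_sub _ _ _)) (by simp [hA, nC.1.symm, nD.1.symm])
    (by simp [hB, nC.2.1.symm, nD.2.1.symm]) nC.2.2 (by
      rw [← c1] at hS; revert hS; simp [Nat.even_add]) (by
      rw [← c2] at hL; revert hL; simp [Nat.odd_add_one])
  exact finish (nc_add he hM) (by simp [hm]) (by simp) hf uC uD

lemma fin_even {S : Finset Pt} {A B C D C' D' : Pt} (hS : Even S.card) (hg : Gs S) (he : Edge S C D)
    (he' : Edge ((S.erase C).erase D) C' D')
    (hA : A ∈ S) (hB : B ∈ S) (hf : A ∈ frontier (convexHull ℝ (S : Set Pt)))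
    (uC : sideOf A B C < 0) (uD : 0 < sideOf A B D)
    (uC' : sideOf A B C' < 0) (uD' : 0 < sideOf A B D')
    (hL : Even (S.filter (fun X => sideOf A B X < 0)).card) : Good S := by
  have nC := ne_of_side uC.ne
  have nD := ne_of_side uD.ne'
  have nC' := ne_of_side uC'.ne
  have nD' := ne_of_side uD'.ne'
  have c1 := card_ee he.1 he.2.1 he.2.2.1
  have c2 := card_filter_ee he.1 uC uD
  have c3 := card_ee he'.1 he'.2.1 he'.2.2.1
  have c4 := card_filter_ee he'.1 uC' uD'
  obtain ⟨M, hM, hm⟩ := inner (T := (((S.erase C).erase D).erase C').erase D') (A := A) (B := B)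
    ((hg.mono (ee_sub _ _ _)).mono (ee_sub _ _ _))
    (by simp [hA, nC.1.symm, nD.1.symm, nC'.1.symm, nD'.1.symm])
    (by simp [hB, nC.2.1.symm, nD.2.1.symm, nC'.2.1.symm, nD'.2.1.symm]) nC.2.2 (by
      rw [← c1, ← c3] at hS; revert hS; simp [Nat.even_add]) (by
      rw [← c2, ← c4] at hL; revert hL; simp [Nat.even_add_one])
  exact finish (nc_add he (nc_add he' hM)) (by simp [hm]) (by simp) hf uC uD

lemma ear {S : Finset Pt} (hG : ¬ Good S) (hS : Even S.card) (hg : Gs S) {P Q R : Pt}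
    (h1 : Edge S P Q) (h2 : Edge S Q R) (hPR : P ≠ R) {X : Pt} (hX : X ∈ S) (hXP : X ≠ P)
    (hXQ : X ≠ Q) (hXR : X ≠ R) : 0 < sideOf P R X := by
  obtain ⟨Z, hZ, hm⟩ := ang (T := (S.erase P).erase Q) ⟨X, by simp [hX, hXP, hXQ]⟩
    P (-(Q.2 - P.2)) (Q.1 - P.1) (by
      intro X hX
      simp only [Finset.mem_erase] at hX
      have := h1.2.2.2 X hX.2.2 hX.2.1 hX.1
      simp only [sideOf] at this
      nlinarith) (by
      intro X hX Y hY hXY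
      simp only [Finset.mem_erase] at hX hY
      exact hg P h1.1 X hX.2.2 Y hY.2.2 hX.2.1.symm hY.2.1.symm hXY)
  simp only [Finset.mem_erase] at hZ
  by_cases hZR : Z = R
  · subst hZR
    exact hm X (by simp [hX, hXP, hXQ]) hXR
  exfalso
  apply hG
  have uQ : sideOf P Z Q < 0 := by
    rw [side_swap2]
    linarith [h1.2.2.2 Z hZ.2.2 hZ.2.1 hZ.1]
  refine fin_odd hS hg h2 h1.1 hZ.2.2 h1.frontier.1 uQ
    (hm R (by simp [h2.2.1, hPR.symm, h2.2.2.1.symm]) (Ne.symm hZR)) ?_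
  have : S.filter (fun X => sideOf P Z X < 0) = {Q} := by
    ext Y
    simp only [Finset.mem_filter, Finset.mem_singleton]
    constructor
    · rintro ⟨hY, hu⟩
      by_contra hYQ
      have n := ne_of_side hu.ne
      have := hm Y (by simp [hY, n.1, hYQ]) n.2.1
      linarith
    · rintro rfl
      exact ⟨h1.2.1, uQ⟩
  rw [this]
  simp

lemma pent {S : Finset Pt} (hG : ¬ Good S) (hS : Even S.card) (hg : Gs S) {a b c d e Q R : Pt}
    (h1 : Edge S a b) (h2 : Edge S b c) (h3 : Edge S c d) (h4 : Edge S d e) (h5 : Edge S e a)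
    (hac : a ≠ c) (hda : d ≠ a)
    (hQ : Q ∈ S) (hR : R ∈ S) (hQi : Inn S Q) (hRi : Inn S R) (hQR : Q ≠ R) : False := by
  set I := ((((S.erase a).erase b).erase c).erase d).erase e with hI
  have memI : ∀ X, X ∈ I ↔ X ≠ e ∧ X ≠ d ∧ X ≠ c ∧ X ≠ b ∧ X ≠ a ∧ X ∈ S := by
    intro X; simp [hI]
  have hQI : Q ∈ I := (memI Q).2 ⟨(hQi.not_edge h4).2, (hQi.not_edge h4).1, (hQi.not_edge h2).2,
    (hQi.not_edge h2).1, (hQi.not_edge h1).1, hQ⟩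
  have hRI : R ∈ I := (memI R).2 ⟨(hRi.not_edge h4).2, (hRi.not_edge h4).1, (hRi.not_edge h2).2,
    (hRi.not_edge h2).1, (hRi.not_edge h1).1, hR⟩
  have hu : ∀ X ∈ I, 0 < (-(b.2 - a.2)) * (X.1 - a.1) + (b.1 - a.1) * (X.2 - a.2) := by
    intro X hX
    obtain ⟨n1, n2, n3, n4, n5, n6⟩ := (memI X).1 hX
    have := h1.2.2.2 X n6 n5 n4
    simp only [sideOf] at this
    nlinarith
  have hgI : ∀ X ∈ I, ∀ Y ∈ I, X ≠ Y → sideOf a X Y ≠ 0 := by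
    intro X hX Y hY hXY
    obtain ⟨n1, n2, n3, n4, n5, n6⟩ := (memI X).1 hX
    obtain ⟨m1, m2, m3, m4, m5, m6⟩ := (memI Y).1 hY
    exact hg a h1.1 X n6 Y m6 n5.symm m5.symm hXY
  obtain ⟨X, hX, hXm⟩ := ang ⟨Q, hQI⟩ a _ _ hu hgI
  obtain ⟨Y, hY, hYm⟩ := ang (T := I.erase X) (by
      by_cases h : Q = X
      · exact ⟨R, by simp [hRI, ← h, hQR.symm]⟩
      · exact ⟨Q, by simp [hQI, h]⟩) a _ _ (fun Z hZ => hu Z (Finset.mem_of_mem_erase hZ))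
      (fun Z hZ W hW => hgI Z (Finset.mem_of_mem_erase hZ) W (Finset.mem_of_mem_erase hW))
  rw [Finset.mem_erase] at hY
  obtain ⟨n1, n2, n3, n4, n5, n6⟩ := (memI X).1 hX
  obtain ⟨m1, m2, m3, m4, m5, m6⟩ := (memI Y).1 hY.2
  have ub : sideOf a Y b < 0 := by
    rw [side_swap2]; linarith [h1.2.2.2 Y m6 m5 m4]
  have uc : sideOf a Y c < 0 := by
    rw [side_swap2]; linarith [ear hG hS hg h1 h2 hac m6 m5 m4 m3]
  have uX : sideOf a Y X < 0 := by
    rw [side_swap2]; linarith [hXm Y hY.2 hY.1]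
  have ud : 0 < sideOf a Y d := by
    rw [side_rot]; exact ear hG hS hg h4 h5 hda m6 m2 m1 m5
  have ue : 0 < sideOf a Y e := by
    rw [side_rot]; exact h5.2.2.2 Y m6 m1 m5
  apply hG
  refine fin_odd hS hg h3 h1.1 m6 h1.frontier.1 uc ud ?_
  have : S.filter (fun Z => sideOf a Y Z < 0) = {b, c, X} := by
    ext Z
    simp only [Finset.mem_filter, Finset.mem_singleton, Finset.mem_insert]
    constructor
    · rintro ⟨hZ, hz⟩
      by_contra hn
      push Not at hn
      have n := ne_of_side hz.ne
      have hZd : Z ≠ d := by rintro rfl; linarith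
      have hZe : Z ≠ e := by rintro rfl; linarith
      have := hYm Z (Finset.mem_erase.2 ⟨hn.2.2, (memI Z).2 ⟨hZe, hZd, hn.2.1, hn.1, n.1, hZ⟩⟩) n.2.1
      linarith
    · rintro (rfl | rfl | rfl)
      · exact ⟨h1.2.1, ub⟩
      · exact ⟨h2.2.1, uc⟩
      · exact ⟨n6, uX⟩
  rw [this, Finset.card_insert_of_notMem, Finset.card_pair n3.symm]
  · decide
  · simp [h2.2.2.1, n4.symm]

lemma pos_A {S : Finset Pt} {A A' B C D : Pt} (hA : Edge S A A') (hB : B ∈ S) (hBA' : B ≠ A')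
    (hC : C ∈ S) (hD : D ∈ S) (uC : sideOf A B C < 0) (uD : 0 < sideOf A B D) :
    0 < sideOf C D A := by
  have nC := ne_of_side uC.ne
  have nD := ne_of_side uD.ne'
  have fB := hA.2.2.2 B hB nC.2.2.symm hBA'
  have fC := hA.nonneg hC
  have fD := hA.nonneg hD
  have id : sideOf C D A * sideOf A A' B =
      sideOf A B D * sideOf A A' C + (- sideOf A B C) * sideOf A A' D := by
    simp only [sideOf]; ring
  have : 0 < sideOf C D A * sideOf A A' B := by
    rw [id]
    by_cases h : C = A'
    · have : D ≠ A' := by rintro rfl; subst h; linarith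
      have fD' := hA.2.2.2 D hD nD.1 this
      have := mul_pos (neg_pos.2 uC) fD'
      have := mul_nonneg uD.le fC
      linarith
    · have fC' := hA.2.2.2 C hC nC.1 h
      have := mul_nonneg (neg_pos.2 uC).le fD
      have := mul_pos uD fC'
      linarith
  exact pos_of_mul_pos_left this fB.le

lemma wcontra {A B p0 p1 p2 p3 C D : Pt} (gA : 0 < sideOf C D A) (gB : sideOf C D B < 0)
    (g0 : 0 ≤ sideOf C D p0) (g3 : 0 ≤ sideOf C D p3) (hB : 0 < sideOf p0 p3 B)
    (u1 : sideOf A B p1 < 0) (u2 : 0 < sideOf A B p2)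
    (qB : 0 < sideOf p1 p2 B)
    (eB : 0 < sideOf p0 p1 B) (kB : 0 < sideOf p2 p3 B) (e2 : 0 < sideOf p0 p1 p2)
    (e3 : 0 < sideOf p0 p1 p3) (k0 : 0 < sideOf p2 p3 p0) (k1 : 0 < sideOf p2 p3 p1) : False := by
  have h1 : sideOf p0 p3 p1 < 0 := by rw [side_swap2]; linarith
  have h2 : sideOf p0 p3 p2 < 0 := by rw [side_swap2, ← side_rot p0 p2 p3]; linarith
  have hd : 0 < sideOf A B p2 - sideOf A B p1 := by linarith
  -- unnormalised functional values at Y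
  obtain ⟨a, b, ha, hb, hab, hY⟩ : ∃ a b : ℝ, 0 < a ∧ 0 < b ∧ a + b = 1 ∧
      sideOf C D (a • p1 + b • p2) < 0 := by
    refine ⟨sideOf A B p2 / (sideOf A B p2 - sideOf A B p1),
      - sideOf A B p1 / (sideOf A B p2 - sideOf A B p1), by positivity,
      div_pos (by linarith) hd, by field_simp; ring, ?_⟩
    rw [side_comb _ _ _ _ _ _ (by field_simp; ring)]
    have id : sideOf A B p2 * sideOf C D p1 + (- sideOf A B p1) * sideOf C D p2 =
      sideOf p1 p2 A * sideOf C D B + (- sideOf p1 p2 B) * sideOf C D A := by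
      simp only [sideOf]; ring
    have id2 : sideOf A B p2 - sideOf A B p1 = sideOf p1 p2 A - sideOf p1 p2 B := by
      simp only [sideOf]; ring
    have qA : 0 < sideOf p1 p2 A := by linarith
    have : sideOf A B p2 * sideOf C D p1 + (- sideOf A B p1) * sideOf C D p2 < 0 := by
      rw [id]
      have := mul_pos qA (neg_pos.2 gB)
      have := mul_pos qB gA
      linarith
    have h := div_neg_of_neg_of_pos this hd
    calc _ = (sideOf A B p2 * sideOf C D p1 + (- sideOf A B p1) * sideOf C D p2) /
          (sideOf A B p2 - sideOf A B p1) := by ring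
      _ < 0 := h
  set Y := a • p1 + b • p2 with hYd
  have hhY : sideOf p0 p3 Y < 0 := by
    rw [hYd, side_comb _ _ _ _ _ _ hab]; nlinarith
  have eY : 0 < sideOf p0 p1 Y := by
    rw [hYd, side_comb _ _ _ _ _ _ hab, side_self2]; nlinarith
  have kY : 0 < sideOf p2 p3 Y := by
    rw [hYd, side_comb _ _ _ _ _ _ hab, side_self1]; nlinarith
  have hd2 : 0 < sideOf p0 p3 B - sideOf p0 p3 Y := by linarith
  obtain ⟨c, d, hc, hd', hcd, hW⟩ : ∃ c d : ℝ, 0 < c ∧ 0 < d ∧ c + d = 1 ∧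
      sideOf p0 p3 (c • B + d • Y) = 0 := by
    refine ⟨- sideOf p0 p3 Y / (sideOf p0 p3 B - sideOf p0 p3 Y),
      sideOf p0 p3 B / (sideOf p0 p3 B - sideOf p0 p3 Y), div_pos (by linarith) hd2,
      by positivity, by field_simp; ring, ?_⟩
    rw [side_comb _ _ _ _ _ _ (by field_simp; ring)]
    ring
  set W := c • B + d • Y with hWd
  have gW : sideOf C D W < 0 := by
    rw [hWd, side_comb _ _ _ _ _ _ hcd]; nlinarith
  have eW : 0 < sideOf p0 p1 W := by
    rw [hWd, side_comb _ _ _ _ _ _ hcd]; positivity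
  have kW : 0 < sideOf p2 p3 W := by
    rw [hWd, side_comb _ _ _ _ _ _ hcd]; positivity
  obtain ⟨s, hs⟩ := line_param (ne_of_side hB.ne').2.2 hW
  have hs' : W = (1 - s) • p0 + s • p3 := by
    rw [hs]; module
  rw [hs', side_comb _ _ _ _ _ _ (by ring)] at gW eW kW
  rw [side_self1] at eW
  rw [side_self2] at kW
  have s0 : 0 < s := by
    by_contra hn; push Not at hn; nlinarith
  have s1 : 0 < 1 - s := by
    by_contra hn; push Not at hn; nlinarith
  have := mul_nonneg s0.le g3
  have := mul_nonneg s1.le g0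
  linarith

lemma step {S : Finset Pt} (hG : ¬ Good S) (hS : Even S.card) (hg : Gs S) {A A' B p0 p1 p2 p3 : Pt}
    (hB : B ∈ S) (hBi : Inn S B) (hA : Edge S A A')
    (h1 : Edge S p0 p1) (h2 : Edge S p1 p2) (h3 : Edge S p2 p3)
    (n02 : p0 ≠ p2) (n13 : p1 ≠ p3) (n03 : p0 ≠ p3)
    (u1 : sideOf A B p1 < 0) (u2 : 0 < sideOf A B p2) : sideOf p0 p3 B < 0 := by
  have b0 := (hBi.not_edge h1).1
  have b1 := (hBi.not_edge h1).2
  have b2 := (hBi.not_edge h3).1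
  have b3 := (hBi.not_edge h3).2
  have bA := (hBi.not_edge hA).1
  have bA' := (hBi.not_edge hA).2
  by_contra hcon
  have hpos : 0 < sideOf p0 p3 B :=
    lt_of_le_of_ne (not_lt.1 hcon) (hg p0 h1.1 p3 h3.2.1 B hB n03 b0.symm b3.symm).symm
  have hE : Even (S.filter (fun X => sideOf A B X < 0)).card := by
    by_contra hne
    exact hG (fin_odd hS hg h2 hA.1 hB hA.frontier.1 u1 u2 (Nat.not_even_iff_odd.1 hne))
  have hcs := (card_split hg hA.1 hB bA.symm).2
  have hE2 : Even (S.filter (fun X => 0 < sideOf A B X)).card := by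
    rcases hS with ⟨x, hx⟩
    rcases hE with ⟨y, hy⟩
    exact ⟨x - 1 - y, by omega⟩
  have nA1 := ne_of_side u1.ne
  have nA2 := ne_of_side u2.ne'
  set T := (((S.erase p1).erase p2).erase A).erase B with hT
  have memT : ∀ X, X ∈ T ↔ X ≠ B ∧ X ≠ A ∧ X ≠ p2 ∧ X ≠ p1 ∧ X ∈ S := by
    intro X; simp [hT]
  have hTS : T ⊆ S := fun X hX => ((memT X).1 hX).2.2.2.2
  obtain ⟨C, D, hCD, uC, uD⟩ := exit (T := T) A B (hg.mono hTS) (by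
      intro X hX
      obtain ⟨m1, m2, m3, m4, m5⟩ := (memT X).1 hX
      exact hg A hA.1 B hB X m5 bA.symm m2.symm m1.symm) (by
      have h1' : p1 ∈ S.filter (fun X => sideOf A B X < 0) := by simp [h2.1, u1]
      have : 1 < (S.filter (fun X => sideOf A B X < 0)).card := by
        have := Finset.card_pos.2 ⟨_, h1'⟩
        rcases hE with ⟨y, hy⟩
        omega
      obtain ⟨X, hX, hne⟩ := Finset.exists_mem_ne this p1
      rw [Finset.mem_filter] at hX
      have n := ne_of_side hX.2.ne
      exact ⟨X, (memT X).2 ⟨n.2.1, n.1, by rintro rfl; linarith [hX.2], hne, hX.1⟩, hX.2⟩) (by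
      have h1' : p2 ∈ S.filter (fun X => 0 < sideOf A B X) := by simp [h3.1, u2]
      have : 1 < (S.filter (fun X => 0 < sideOf A B X)).card := by
        have := Finset.card_pos.2 ⟨_, h1'⟩
        rcases hE2 with ⟨y, hy⟩
        omega
      obtain ⟨X, hX, hne⟩ := Finset.exists_mem_ne this p2
      rw [Finset.mem_filter] at hX
      have n := ne_of_side hX.2.ne'
      exact ⟨X, (memT X).2 ⟨n.2.1, n.1, hne, by rintro rfl; linarith [hX.2], hX.1⟩, hX.2⟩)
  obtain ⟨c1, c2, c3, c4, c5⟩ := (memT C).1 hCD.1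
  obtain ⟨d1, d2, d3, d4, d5⟩ := (memT D).1 hCD.2.1
  have gA := pos_A hA hB bA' c5 d5 uC uD
  rcases lt_or_gt_of_ne (hg C c5 D d5 B hB hCD.2.2.1 c1 d1) with gB | gB
  · have gge : ∀ X ∈ S, X ≠ B → X ≠ p1 → X ≠ p2 → 0 ≤ sideOf C D X := by
      intro X hX m1 m2 m3
      by_cases hXA : X = A
      · subst hXA; exact gA.le
      · exact hCD.nonneg ((memT X).2 ⟨m1, hXA, m3, m2, hX⟩)
    exact wcontra gA gB (gge p0 h1.1 b0.symm h1.2.2.1 n02)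
      (gge p3 h3.2.1 b3.symm n13.symm h3.2.2.1.symm) hpos u1 u2
      (h2.2.2.2 B hB b1 b2) (h1.2.2.2 B hB b0 b1) (h3.2.2.2 B hB b2 b3)
      (h1.2.2.2 p2 h3.1 n02.symm h2.2.2.1.symm) (h1.2.2.2 p3 h3.2.1 n03.symm n13.symm)
      (h3.2.2.2 p0 h1.1 n02 n03) (h3.2.2.2 p1 h2.1 h2.2.2.1 n13)
  · refine hG (fin_even hS hg h2 (C' := C) (D' := D) ?_ hA.1 hB hA.frontier.1 u1 u2 uC uD hE)
    refine ⟨by simp [c3, c4, c5], by simp [d3, d4, d5], hCD.2.2.1, fun X hX m1 m2 => ?_⟩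
    simp only [Finset.mem_erase] at hX
    by_cases hXA : X = A
    · subst hXA; exact gA
    by_cases hXB : X = B
    · subst hXB; exact gB
    exact hCD.2.2.2 X ((memT X).2 ⟨hXB, hXA, hX.1, hX.2.1, hX.2.2⟩) m1 m2

lemma main {S : Finset Pt} (hS : Even S.card) (hg : Gs S) {B R : Pt}
    (hB : B ∈ S) (hBi : Inn S B) (hR : R ∈ S) (hRi : Inn S R) (hBR : B ≠ R) : Good S := by
  by_contra hG
  obtain ⟨A, A', hA⟩ := exists_edge hg (by
    have := Finset.one_lt_card.2 ⟨B, hB, R, hR, hBR⟩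
    omega)
  have bA := (hBi.not_edge hA).1
  have bA' := (hBi.not_edge hA).2
  have hc3 : 3 ≤ S.card := by
    have : ({A, A', B} : Finset Pt) ⊆ S := by
      intro X hX
      simp only [Finset.mem_insert, Finset.mem_singleton] at hX
      rcases hX with rfl | rfl | rfl
      exacts [hA.1, hA.2.1, hB]
    have h := Finset.card_le_card this
    rwa [Finset.card_insert_of_notMem (by simp [hA.2.2.1, bA.symm]), Finset.card_pair bA'.symm] at h
  have memT : ∀ X, X ∈ (S.erase A).erase B ↔ X ≠ B ∧ X ≠ A ∧ X ∈ S := by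
    intro X; simp
  obtain ⟨p1, p2, h12T, u1, u2⟩ := exit (T := (S.erase A).erase B) A B (hg.mono (ee_sub _ _ _)) (by
      intro X hX
      obtain ⟨m1, m2, m5⟩ := (memT X).1 hX
      exact hg A hA.1 B hB X m5 bA.symm m2.symm m1.symm) (by
      obtain ⟨X, hX, hlt⟩ := hBi.side bA.symm
      rw [side_self2] at hlt
      have n := ne_of_side hlt.ne
      exact ⟨X, (memT X).2 ⟨n.2.1, n.1, hX⟩, hlt⟩) (by
      obtain ⟨X, hX, hlt⟩ := hBi.side bA
      rw [side_self1, side_swap] at hlt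
      have hlt' : 0 < sideOf A B X := by linarith
      have n := ne_of_side hlt'.ne'
      exact ⟨X, (memT X).2 ⟨n.2.1, n.1, hX⟩, hlt'⟩)
  obtain ⟨c1, c2, c5⟩ := (memT p1).1 h12T.1
  obtain ⟨d1, d2, d5⟩ := (memT p2).1 h12T.2.1
  have gA := pos_A hA hB bA' c5 d5 u1 u2
  have gB : 0 < sideOf p1 p2 B := by
    rcases lt_or_gt_of_ne (hg p1 c5 p2 d5 B hB h12T.2.2.1 c1 d1) with gB | gB
    · obtain ⟨X, hX, hlt⟩ := hBi.side h12T.2.2.1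
      have hXB : X ≠ B := by rintro rfl; linarith
      have hXA : X ≠ A := by rintro rfl; linarith
      have := h12T.nonneg ((memT X).2 ⟨hXB, hXA, hX⟩)
      linarith
    · exact gB
  have h12 : Edge S p1 p2 := by
    refine ⟨c5, d5, h12T.2.2.1, fun X hX m1 m2 => ?_⟩
    by_cases hXA : X = A
    · subst hXA; exact gA
    by_cases hXB : X = B
    · subst hXB; exact gB
    exact h12T.2.2.2 X ((memT X).2 ⟨hXB, hXA, hX⟩) m1 m2
  have earB : ∀ {a b c : Pt}, Edge S a b → Edge S b c → a ≠ c → 0 < sideOf a c B := by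
    intro a b c hab hbc hac
    exact ear hG hS hg hab hbc hac hB (hBi.not_edge hab).1 (hBi.not_edge hab).2 (hBi.not_edge hbc).2
  have dist3 : ∀ {a b c d : Pt}, Edge S a b → Edge S b c → Edge S c d → a ≠ c → a ≠ d := by
    rintro a b c d hab hbc hcd hac rfl
    have h1 := earB hab hbc hac
    have h2 := hcd.nonneg hB
    rw [side_swap] at h2
    linarith
  have dist4 : ∀ {a b c d e : Pt}, Edge S a b → Edge S b c → Edge S c d → Edge S d e →
      a ≠ c → a ≠ e := by
    rintro a b c d e hab hbc hcd hde hac rfl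
    have h1 := earB hab hbc hac
    have h2 := earB hcd hde hac.symm
    rw [side_swap] at h2
    linarith
  have dist5 : ∀ {a b c d e f : Pt}, Edge S a b → Edge S b c → Edge S c d → Edge S d e →
      Edge S e f → a ≠ c → a ≠ f := by
    rintro a b c d e f hab hbc hcd hde hef hac rfl
    exact pent hG hS hg hab hbc hcd hde hef hac (dist3 hab hbc hcd hac).symm hB hR hBi hRi hBR
  obtain ⟨p0, h01, n02⟩ := exists_prev hg hc3 h12
  obtain ⟨p3, h23, n31⟩ := exists_next hg hc3 h12
  obtain ⟨p4, h34, n42⟩ := exists_next hg hc3 h23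
  obtain ⟨p5, h45, n53⟩ := exists_next hg hc3 h34
  obtain ⟨p6, h56, n64⟩ := exists_next hg hc3 h45
  have n03 := dist3 h01 h12 h23 n02
  have n14 := dist3 h12 h23 h34 n31.symm
  have n25 := dist3 h23 h34 h45 n42.symm
  have n36 := dist3 h34 h45 h56 n53.symm
  have n04 := dist4 h01 h12 h23 h34 n02
  have n15 := dist4 h12 h23 h34 h45 n31.symm
  have n05 := dist5 h01 h12 h23 h34 h45 n02
  have n16 := dist5 h12 h23 h34 h45 h56 n31.symm
  have s1 := step hG hS hg hB hBi hA h01 h12 h23 n02 n31.symm n03 u1 u2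
  have s2 := step hG hS hg hB hBi h01 h12 h23 h34 n31.symm n42.symm n14
    (by rw [side_swap2]; linarith [earB h01 h12 n02]) (by rw [side_swap2]; linarith)
  have s3 := step hG hS hg hB hBi h12 h23 h34 h45 n42.symm n53.symm n25
    (by rw [side_swap2]; linarith [earB h12 h23 n31.symm]) (by rw [side_swap2]; linarith)
  have s4 := step hG hS hg hB hBi h23 h34 h45 h56 n53.symm n64.symm n36
    (by rw [side_swap2]; linarith [earB h23 h34 n42.symm]) (by rw [side_swap2]; linarith)
  by_cases n06 : p0 = p6
  · subst n06
    rw [side_swap] at s4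
    linarith
  have t1 := ear hG hS hg h34 h45 n53.symm h01.1 n03 n04 n05
  have t2 := h56.2.2.2 p0 h01.1 n05 n06
  have f3 := h01.2.2.2 p3 h34.1 n03.symm n31
  have f5 := h01.2.2.2 p5 h56.1 n05.symm n15.symm
  have f6 := h01.2.2.2 p6 h56.2.1 (Ne.symm n06) n16.symm
  have t3 : 0 ≤ sideOf p3 p6 p0 := by
    by_contra hn
    push Not at hn
    have id : sideOf p3 p5 p0 * sideOf p0 p1 p6 + sideOf p5 p6 p0 * sideOf p0 p1 p3
      + (- sideOf p3 p6 p0) * sideOf p0 p1 p5 = 0 := by simp only [sideOf]; ring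
    have := mul_pos t1 f6
    have := mul_pos t2 f3
    have := mul_pos (neg_pos.2 hn) f5
    linarith
  have v6 := h34.2.2.2 p6 h56.2.1 n36.symm n64
  have v0 := h34.2.2.2 p0 h01.1 n03 n04
  have vB := h34.2.2.2 B hB (hBi.not_edge h34).1 (hBi.not_edge h34).2
  have id : sideOf p3 p4 p6 * (- sideOf p0 p3 B) + sideOf p3 p4 p0 * (- sideOf p3 p6 B)
      + sideOf p3 p4 B * sideOf p3 p6 p0 = 0 := by simp only [sideOf]; ring
  have := mul_pos v6 (neg_pos.2 s1)
  have := mul_pos v0 (neg_pos.2 s4)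
  have := mul_nonneg vB.le t3
  linarith

end PM

/-- If a set `S` of `2k` points in general position has at least
two points interior to its convex hull, then `S` has a non-crossing perfect
matching with the piercing property. -/
theorem piercing_matching_of_two_interior_points (k : ℕ) (S : Finset Pt)
    (hcard : S.card = 2 * k) (hgp : GeneralPosition S) (Q R : Pt)
    (hQS : Q ∈ S) (hRS : R ∈ S) (hQR : Q ≠ R)
    (hQ : Q ∈ interior (convexHull ℝ (S : Set Pt)))
    (hR : R ∈ interior (convexHull ℝ (S : Set Pt))) :
    ∃ M : Finset (Sym2 Pt), IsNCMatching S M ∧ HasPiercing S M := by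
  exact PM.main (hcard ▸ even_two_mul k) (PM.gs_of hgp) hQS (PM.inn_of hQ) hRS (PM.inn_of hR) hQR
end

section
/- Let S be a set of 6 points in the plane in general position such that exactly one point Q of S lies in the interior of the convex hull of S, and for every point P of S other than Q, each of the two open half-planes bounded by the line through Q and P contains exactly 2 points of S. Then the number of non-crossing perfect matchings of S is exactly 5 (which equals C_3). -/
open scoped Classical

theorem sideOf_lin (C D A B : Pt) (a b : ℝ) (h : a + b = 1) :
    sideOf C D (a • A + b • B) = a * sideOf C D A + b * sideOf C D B := by
  simp only [sideOf, Prod.fst_add, Prod.snd_add, Prod.smul_fst, Prod.smul_snd, smul_eq_mul]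
  have : a = 1 - b := by linarith
  subst this
  ring

theorem disj_pos {A B C D : Pt} (h1 : 0 < sideOf A B C) (h2 : 0 < sideOf A B D) :
    Disjoint (segment ℝ A B) (segment ℝ C D) := by
  rw [Set.disjoint_left]
  rintro x ⟨a, b, ha, hb, hab, rfl⟩ ⟨c, d, hc, hd, hcd, hx⟩
  have e1 := sideOf_lin A B A B a b hab
  have e2 := sideOf_lin A B C D c d hcd
  rw [hx, e1] at e2
  have z1 : sideOf A B A = 0 := by simp [sideOf]
  have z2 : sideOf A B B = 0 := by simp only [sideOf]; ring
  rw [z1, z2] at e2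
  rcases hc.lt_or_eq with hc' | hc'
  · nlinarith [mul_pos hc' h1, mul_nonneg hd h2.le]
  · have : d = 1 := by linarith
    subst this; subst hc'
    linarith

theorem side_swap (A B C : Pt) : sideOf B A C = - sideOf A B C := by
  simp only [sideOf]; ring

theorem side_rot (A B C : Pt) : sideOf B C A = sideOf A B C := by
  simp only [sideOf]; ring

theorem disj_neg {A B C D : Pt} (h1 : sideOf A B C < 0) (h2 : sideOf A B D < 0) :
    Disjoint (segment ℝ A B) (segment ℝ C D) := by
  rw [segment_symm ℝ A B]
  apply disj_pos <;> rw [side_swap] <;> linarith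

theorem cross {A B C D : Pt} (h1 : 0 < sideOf A B C) (h2 : sideOf A B D < 0)
    (h3 : 0 < sideOf C D B) (h4 : sideOf C D A < 0) :
    ¬ Disjoint (segment ℝ A B) (segment ℝ C D) := by
  rw [Set.not_disjoint_iff]
  set p := sideOf A B C with hp
  set q := sideOf A B D with hq
  set r := sideOf C D B with hr
  set s := sideOf C D A with hs
  have n1 : 0 < p - q := by linarith
  have n2 : 0 < r - s := by linarith
  have e : r - s = p - q := by
    simp only [hp, hq, hr, hs, sideOf]; ring
  have n1' := n1.ne'
  refine ⟨(r / (r - s)) • A + (-s / (r - s)) • B,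
    ⟨_, _, by positivity, div_nonneg (by linarith) n2.le, by field_simp; ring, rfl⟩,
    ⟨-q / (p - q), p / (p - q), div_nonneg (by linarith) n1.le, by positivity,
      by field_simp; ring, ?_⟩⟩
  rw [e]
  ext
  · simp only [Prod.fst_add, Prod.smul_fst, smul_eq_mul]
    field_simp
    simp only [hp, hq, hr, hs, sideOf]; ring
  · simp only [Prod.snd_add, Prod.smul_snd, smul_eq_mul]
    field_simp
    simp only [hp, hq, hr, hs, sideOf]; ring

theorem mem_tri {Q A C X : Pt} (h1 : 0 < sideOf Q A X) (h2 : 0 < sideOf A C X)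
    (h3 : 0 < sideOf C Q X) : X ∈ convexHull ℝ ({Q, A, C} : Set Pt) := by
  set p := sideOf Q A X with hp
  set q := sideOf A C X with hq
  set r := sideOf C Q X with hr
  have hn : 0 < p + q + r := by linarith
  have hX : X = (q / (p + q + r)) • Q + (r / (p + q + r)) • A + (p / (p + q + r)) • C := by
    ext
    · simp only [Prod.fst_add, Prod.smul_fst, smul_eq_mul]
      field_simp
      simp only [hp, hq, hr, sideOf]; ring
    · simp only [Prod.snd_add, Prod.smul_snd, smul_eq_mul]
      field_simp
      simp only [hp, hq, hr, sideOf]; ring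
  have cv := convex_convexHull ℝ ({Q, A, C} : Set Pt)
  have s0 : Q ∈ convexHull ℝ ({Q, A, C} : Set Pt) := subset_convexHull _ _ (by simp)
  have s1 : A ∈ convexHull ℝ ({Q, A, C} : Set Pt) := subset_convexHull _ _ (by simp)
  have s2 : C ∈ convexHull ℝ ({Q, A, C} : Set Pt) := subset_convexHull _ _ (by simp)
  clear_value p q r
  rw [hX]
  have hh := cv.sum_mem (t := Finset.univ) (w := ![q / (p + q + r), r / (p + q + r), p / (p + q + r)])
    (z := ![Q, A, C]) ?_ ?_ ?_
  · simpa [Fin.sum_univ_three] using hh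
  · intro i _
    fin_cases i <;> simp <;> positivity
  · simp [Fin.sum_univ_three]; field_simp; ring
  · intro i _
    fin_cases i
    · exact s0
    · exact s1
    · exact s2

theorem cont_side (A B : Pt) : Continuous (fun X => sideOf A B X) := by
  unfold sideOf; fun_prop

theorem mem_int {S : Finset Pt} {Q A C X : Pt} (hQ : Q ∈ S) (hA : A ∈ S) (hC : C ∈ S)
    (h1 : 0 < sideOf Q A X) (h2 : 0 < sideOf A C X)
    (h3 : 0 < sideOf C Q X) : X ∈ interior (convexHull ℝ (S : Set Pt)) := by
  rw [mem_interior]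
  refine ⟨{Y | 0 < sideOf Q A Y} ∩ {Y | 0 < sideOf A C Y} ∩ {Y | 0 < sideOf C Q Y}, ?_, ?_,
    ⟨⟨h1, h2⟩, h3⟩⟩
  · rintro Y ⟨⟨k1, k2⟩, k3⟩
    refine convexHull_mono ?_ (mem_tri k1 k2 k3)
    intro Z hZ
    simp only [Set.mem_insert_iff, Set.mem_singleton_iff] at hZ
    rcases hZ with rfl | rfl | rfl <;> assumption
  · exact ((isOpen_lt continuous_const (cont_side _ _)).inter
      (isOpen_lt continuous_const (cont_side _ _))).inter
      (isOpen_lt continuous_const (cont_side _ _))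

theorem collinear_of_side {A B C : Pt} (h : sideOf A B C = 0) (hAB : A ≠ B) :
    Collinear ℝ ({A, B, C} : Set Pt) := by
  rw [collinear_iff_of_mem (p₀ := A) (by simp)]
  have : ∃ t : ℝ, C = t • (B - A) + A := by
    simp only [sideOf] at h
    by_cases h1 : B.1 - A.1 = 0
    · have h2 : B.2 - A.2 ≠ 0 := by
        intro h2
        exact hAB (Prod.ext (by linarith) (by linarith))
      refine ⟨(C.2 - A.2) / (B.2 - A.2), ?_⟩
      ext <;> simp <;> field_simp <;> linarith
    · refine ⟨(C.1 - A.1) / (B.1 - A.1), ?_⟩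
      ext <;> simp <;> field_simp <;> linarith
  obtain ⟨t, ht⟩ := this
  refine ⟨B - A, ?_⟩
  intro p hp
  simp only [Set.mem_insert_iff, Set.mem_singleton_iff] at hp
  rcases hp with rfl | rfl | rfl
  · exact ⟨0, by simp⟩
  · exact ⟨1, by simp⟩
  · exact ⟨t, by simpa using ht⟩

theorem consec {S : Finset Pt} (hgp : GeneralPosition S) {Q A B C : Pt}
    (hint : (↑S ∩ interior (convexHull ℝ (S : Set Pt))) = {Q})
    (hQ : Q ∈ S) (hA : A ∈ S) (hB : B ∈ S) (hC : C ∈ S)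
    (h1 : 0 < sideOf Q A B) (h2 : 0 < sideOf Q B C) (h3 : 0 < sideOf Q A C) :
    0 < sideOf A B C := by
  have nBQ : B ≠ Q := by rintro rfl; simp [sideOf] at h2
  have nAB : A ≠ B := by rintro rfl; simp only [sideOf] at h1; linarith
  have nAC : A ≠ C := by rintro rfl; simp only [sideOf] at h3; linarith
  have nBC : B ≠ C := by rintro rfl; simp only [sideOf] at h2; linarith
  by_contra hneg
  rcases (not_lt.mp hneg).lt_or_eq with h | h
  · have : B ∈ (↑S ∩ interior (convexHull ℝ (S : Set Pt))) := by
      refine ⟨hB, mem_int hQ hA hC h1 ?_ ?_⟩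
      · have : sideOf A C B = - sideOf A B C := by simp only [sideOf]; ring
        linarith
      · rw [← side_rot] at h2; rw [← side_rot] at h2
        exact h2
    rw [hint] at this
    exact nBQ this
  · exact hgp A hA B hB C hC nAB nAC nBC (collinear_of_side h nAB)

structure Conf (Q A B C D E : Pt) : Prop where
  qab : 0 < sideOf Q A B
  qbc : 0 < sideOf Q B C
  qcd : 0 < sideOf Q C D
  qde : 0 < sideOf Q D E
  qea : 0 < sideOf Q E A
  qac : 0 < sideOf Q A C
  qbd : 0 < sideOf Q B D
  qce : 0 < sideOf Q C E
  qda : 0 < sideOf Q D A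
  qeb : 0 < sideOf Q E B
  abc : 0 < sideOf A B C
  bcd : 0 < sideOf B C D
  cde : 0 < sideOf C D E
  dea : 0 < sideOf D E A
  eab : 0 < sideOf E A B

theorem Conf.rot {Q A B C D E : Pt} (h : Conf Q A B C D E) : Conf Q B C D E A :=
  ⟨h.qbc, h.qcd, h.qde, h.qea, h.qab, h.qbd, h.qce, h.qda, h.qeb, h.qac,
    h.bcd, h.cde, h.dea, h.eab, h.abc⟩

theorem ne_of_side {Q A B : Pt} (h : 0 < sideOf Q A B) : Q ≠ A ∧ A ≠ B ∧ Q ≠ B := by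
  refine ⟨?_, ?_, ?_⟩ <;> rintro rfl <;> simp only [sideOf] at h <;> linarith

noncomputable def mtch (Q A B C D E : Pt) : Finset (Sym2 Pt) := {s(Q, A), s(B, C), s(D, E)}

theorem Conf.nc {S : Finset Pt} {Q A B C D E : Pt} (h : Conf Q A B C D E)
    (hS : ∀ p, p ∈ S ↔ p = Q ∨ p = A ∨ p = B ∨ p = C ∨ p = D ∨ p = E) :
    IsNCMatching S (mtch Q A B C D E) := by
  obtain ⟨n1, n2, n3⟩ := ne_of_side h.qab
  obtain ⟨-, n4, n5⟩ := ne_of_side h.qcd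
  obtain ⟨-, n6, n7⟩ := ne_of_side h.qea
  obtain ⟨-, n8, -⟩ := ne_of_side h.qbc
  obtain ⟨-, n9, -⟩ := ne_of_side h.qde
  obtain ⟨-, n10, -⟩ := ne_of_side h.qac
  obtain ⟨-, n11, -⟩ := ne_of_side h.qbd
  obtain ⟨-, n12, -⟩ := ne_of_side h.qce
  obtain ⟨-, n13, -⟩ := ne_of_side h.qda
  obtain ⟨n15, n14, -⟩ := ne_of_side h.qeb
  have n16 := (ne_of_side h.qcd).1
  have d1 : Disjoint (seg s(Q, A)) (seg s(B, C)) := disj_pos h.qab h.qac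
  have d2 : Disjoint (seg s(Q, A)) (seg s(D, E)) := by
    refine disj_neg (A := Q) (B := A) (C := D) (D := E) ?_ ?_
    · have : sideOf Q A D = - sideOf Q D A := by simp only [sideOf]; ring
      have := h.qda; linarith
    · have : sideOf Q A E = - sideOf Q E A := by simp only [sideOf]; ring
      have := h.qea; linarith
  have d3 : Disjoint (seg s(B, C)) (seg s(D, E)) := by
    refine disj_pos (A := B) (B := C) (C := D) (D := E) h.bcd ?_
    have : sideOf B C E = sideOf Q B C + sideOf Q C E + sideOf Q E B := by
      simp only [sideOf]; ring
    have := h.qbc; have := h.qce; have := h.qeb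
    linarith
  refine ⟨?_, ?_, ?_, ?_⟩
  · intro e he
    simp only [mtch, Finset.mem_insert, Finset.mem_singleton] at he
    rcases he with rfl | rfl | rfl <;> simpa
  · intro e he p hp
    rw [hS]
    simp only [mtch, Finset.mem_insert, Finset.mem_singleton] at he
    rcases he with rfl | rfl | rfl <;> rw [Sym2.mem_iff] at hp <;> tauto
  · intro p hp
    rw [hS] at hp
    have key : ∀ e ∈ mtch Q A B C D E, p ∈ e → ∃! e, e ∈ mtch Q A B C D E ∧ p ∈ e := by
      intro e he hpe
      refine ⟨e, ⟨he, hpe⟩, ?_⟩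
      rintro f ⟨hf, hpf⟩
      simp only [mtch, Finset.mem_insert, Finset.mem_singleton] at he hf
      rcases he with rfl | rfl | rfl <;> rcases hf with rfl | rfl | rfl <;>
        first
        | rfl
        | (exfalso; rw [Sym2.mem_iff] at hpe hpf; grind)
    rcases hp with rfl | rfl | rfl | rfl | rfl | rfl
    · exact key s(p, A) (by simp [mtch]) (by simp)
    · exact key s(Q, p) (by simp [mtch]) (by simp)
    · exact key s(p, C) (by simp [mtch]) (by simp)
    · exact key s(B, p) (by simp [mtch]) (by simp)
    · exact key s(p, E) (by simp [mtch]) (by simp)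
    · exact key s(D, p) (by simp [mtch]) (by simp)
  · intro e he f hf hef
    simp only [mtch, Finset.mem_insert, Finset.mem_singleton] at he hf
    rcases he with rfl | rfl | rfl <;> rcases hf with rfl | rfl | rfl <;>
      first
      | exact absurd rfl hef
      | assumption
      | (apply Disjoint.symm; assumption)

theorem Conf.uniq {S : Finset Pt} {Q A B C D E : Pt} (h : Conf Q A B C D E)
    (hS : ∀ p, p ∈ S ↔ p = Q ∨ p = A ∨ p = B ∨ p = C ∨ p = D ∨ p = E)
    {M : Finset (Sym2 Pt)} (hM : IsNCMatching S M) (hQ : s(Q, A) ∈ M) :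
    M = mtch Q A B C D E := by
  obtain ⟨n1, n2, n3⟩ := ne_of_side h.qab
  obtain ⟨-, n4, n5⟩ := ne_of_side h.qcd
  obtain ⟨-, n6, n7⟩ := ne_of_side h.qea
  obtain ⟨-, n8, -⟩ := ne_of_side h.qbc
  obtain ⟨-, n9, -⟩ := ne_of_side h.qde
  obtain ⟨-, n10, -⟩ := ne_of_side h.qac
  obtain ⟨-, n11, -⟩ := ne_of_side h.qbd
  obtain ⟨-, n12, -⟩ := ne_of_side h.qce
  obtain ⟨-, n13, -⟩ := ne_of_side h.qda
  obtain ⟨n15, n14, -⟩ := ne_of_side h.qeb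
  have n16 := (ne_of_side h.qcd).1
  obtain ⟨m1, m2, m3, m4⟩ := hM
  have un : ∀ p x y, s(p, x) ∈ M → s(p, y) ∈ M → x = y := by
    intro p x y hx hy
    have hp : p ∈ S := m2 _ hx p (by simp)
    have := (m3 p hp).unique ⟨hx, by simp⟩ ⟨hy, by simp⟩
    exact Sym2.congr_right.mp this
  have ex : ∀ p ∈ S, ∃ y ∈ S, s(p, y) ∈ M ∧ p ≠ y := by
    intro p hp
    obtain ⟨e, ⟨he, hpe⟩, -⟩ := m3 p hp
    obtain ⟨y, rfl⟩ := Sym2.mem_iff_exists.mp hpe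
    exact ⟨y, m2 _ he y (by simp), he, by simpa using m1 _ he⟩
  have sw : ∀ x y, s(x, y) ∈ M → s(y, x) ∈ M := by
    intro x y hx; rwa [Sym2.eq_swap]
  have cr : ∀ x y z w, s(x, y) ∈ M → s(z, w) ∈ M → x ≠ z → x ≠ w →
      Disjoint (segment ℝ x y) (segment ℝ z w) := by
    intro x y z w hx hy h1 h2
    refine m4 _ hx _ hy ?_
    intro he
    rw [Sym2.eq_iff] at he
    tauto
  have hBC : s(B, C) ∈ M := by
    obtain ⟨y, hy, hBy, hne⟩ := ex B ((hS B).2 (by tauto))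
    rcases (hS y).1 hy with rfl | rfl | rfl | rfl | rfl | rfl
    · exact absurd (un _ _ _ hQ (sw _ _ hBy)) n2
    · exact absurd (un _ _ _ (sw _ _ hQ) (sw _ _ hBy)) n3
    · exact absurd rfl hne
    · exact hBy
    · exfalso
      obtain ⟨z, hz, hCz, hne'⟩ := ex C ((hS C).2 (by tauto))
      rcases (hS z).1 hz with rfl | rfl | rfl | rfl | rfl | rfl
      · exact absurd (un _ _ _ hQ (sw _ _ hCz)) n10
      · exact absurd (un _ _ _ (sw _ _ hQ) (sw _ _ hCz)) n16
      · exact absurd (un _ _ _ hBy (sw _ _ hCz)) n4.symm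
      · exact absurd rfl hne'
      · exact absurd (un _ _ _ (sw _ _ hBy) (sw _ _ hCz)) n8
      · have hd := cr _ _ _ _ hBy (sw _ _ hCz) n14.symm n8
        refine cross ?_ ?_ ?_ ?_ hd
        · have : sideOf B y z = sideOf Q B y + sideOf Q y z + sideOf Q z B := by
            simp only [sideOf]; ring
          have := h.qbd; have := h.qde; have := h.qeb
          linarith
        · have : sideOf B y C = - sideOf B C y := by simp only [sideOf]; ring
          have := h.bcd; linarith
        · have : sideOf z C y = sideOf C y z := by simp only [sideOf]; ring
          have := h.cde; linarith
        · have : sideOf z C B = - (sideOf Q B C + sideOf Q C z + sideOf Q z B) := by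
            simp only [sideOf]; ring
          have := h.qbc; have := h.qce; have := h.qeb
          linarith
    · exfalso
      have hd := cr _ _ _ _ hQ hBy n3 n15
      refine cross ?_ ?_ ?_ ?_ hd
      · exact h.qab
      · have : sideOf Q A y = - sideOf Q y A := by simp only [sideOf]; ring
        have := h.qea; linarith
      · have : sideOf B y A = sideOf y A B := by simp only [sideOf]; ring
        have := h.eab; linarith
      · have : sideOf B y Q = - sideOf Q y B := by simp only [sideOf]; ring
        have := h.qeb; linarith
  have hDE : s(D, E) ∈ M := by
    obtain ⟨y, hy, hDy, hne⟩ := ex D ((hS D).2 (by tauto))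
    rcases (hS y).1 hy with rfl | rfl | rfl | rfl | rfl | rfl
    · exact absurd (un _ _ _ hQ (sw _ _ hDy)) n13.symm
    · exact absurd (un _ _ _ (sw _ _ hQ) (sw _ _ hDy)) n5
    · exact absurd (un _ _ _ hBC (sw _ _ hDy)) n4
    · exact absurd (un _ _ _ (sw _ _ hBC) (sw _ _ hDy)) n11
    · exact absurd rfl hne
    · exact hDy
  ext e
  simp only [mtch, Finset.mem_insert, Finset.mem_singleton]
  constructor
  · intro he
    induction e using Sym2.ind with
    | _ x y =>
    have hx := (hS x).1 (m2 _ he x (by simp))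
    rcases hx with rfl | rfl | rfl | rfl | rfl | rfl
    · left; rw [un _ _ _ he hQ]
    · left; rw [un _ _ _ he (sw _ _ hQ), Sym2.eq_swap]
    · right; left; rw [un _ _ _ he hBC]
    · right; left; rw [un _ _ _ he (sw _ _ hBC), Sym2.eq_swap]
    · right; right; rw [un _ _ _ he hDE]
    · right; right; rw [un _ _ _ he (sw _ _ hDE), Sym2.eq_swap]
  · rintro (rfl | rfl | rfl) <;> assumption

theorem Conf.pm {S : Finset Pt} {Q A B C D E : Pt} (h : Conf Q A B C D E)
    (hS : ∀ p, p ∈ S ↔ p = Q ∨ p = A ∨ p = B ∨ p = C ∨ p = D ∨ p = E) :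
    pm S = 5 := by
  have hB := h.rot
  have hC := hB.rot
  have hD := hC.rot
  have hE := hD.rot
  have sB : ∀ p, p ∈ S ↔ p = Q ∨ p = B ∨ p = C ∨ p = D ∨ p = E ∨ p = A := by
    intro p; rw [hS]; tauto
  have sC : ∀ p, p ∈ S ↔ p = Q ∨ p = C ∨ p = D ∨ p = E ∨ p = A ∨ p = B := by
    intro p; rw [hS]; tauto
  have sD : ∀ p, p ∈ S ↔ p = Q ∨ p = D ∨ p = E ∨ p = A ∨ p = B ∨ p = C := by
    intro p; rw [hS]; tauto
  have sE : ∀ p, p ∈ S ↔ p = Q ∨ p = E ∨ p = A ∨ p = B ∨ p = C ∨ p = D := by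
    intro p; rw [hS]; tauto
  have key : {M : Finset (Sym2 Pt) | IsNCMatching S M} =
      ((({mtch Q A B C D E, mtch Q B C D E A, mtch Q C D E A B, mtch Q D E A B C, mtch Q E A B C D} :
        Finset (Finset (Sym2 Pt)))) : Set (Finset (Sym2 Pt))) := by
    ext M
    simp only [Set.mem_setOf_eq, Finset.coe_insert, Finset.coe_singleton, Set.mem_insert_iff,
      Set.mem_singleton_iff]
    constructor
    · intro hM
      obtain ⟨e, ⟨he, hpe⟩, -⟩ := hM.2.2.1 Q ((hS Q).2 (by tauto))
      obtain ⟨y, rfl⟩ := Sym2.mem_iff_exists.mp hpe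
      have hy := (hS y).1 (hM.2.1 _ he y (by simp))
      rcases hy with rfl | rfl | rfl | rfl | rfl | rfl
      · exact absurd (by simp) (hM.1 _ he)
      · left; exact h.uniq hS hM he
      · right; left; exact hB.uniq sB hM he
      · right; right; left; exact hC.uniq sC hM he
      · right; right; right; left; exact hD.uniq sD hM he
      · right; right; right; right; exact hE.uniq sE hM he
    · rintro (rfl | rfl | rfl | rfl | rfl)
      · exact h.nc hS
      · exact hB.nc sB
      · exact hC.nc sC
      · exact hD.nc sD
      · exact hE.nc sE
  obtain ⟨n1, n2, n3⟩ := ne_of_side h.qab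
  obtain ⟨-, n4, n5⟩ := ne_of_side h.qcd
  obtain ⟨-, n6, n7⟩ := ne_of_side h.qea
  obtain ⟨-, n8, -⟩ := ne_of_side h.qbc
  obtain ⟨-, n9, -⟩ := ne_of_side h.qde
  obtain ⟨-, n10, -⟩ := ne_of_side h.qac
  obtain ⟨-, n11, -⟩ := ne_of_side h.qbd
  obtain ⟨-, n12, -⟩ := ne_of_side h.qce
  obtain ⟨-, n13, -⟩ := ne_of_side h.qda
  obtain ⟨n15, n14, -⟩ := ne_of_side h.qeb
  have n16 := (ne_of_side h.qcd).1
  have ne : ∀ {X Y x1 x2 x3 x4 y1 y2 y3 y4 : Pt}, Q ≠ X → X ≠ Y → Q ≠ y1 → Q ≠ y2 → Q ≠ y3 →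
      Q ≠ y4 → mtch Q X x1 x2 x3 x4 ≠ mtch Q Y y1 y2 y3 y4 := by
    intro X Y x1 x2 x3 x4 y1 y2 y3 y4 a1 a2 a3 a4 a5 a6 he
    have : s(Q, X) ∈ mtch Q Y y1 y2 y3 y4 := by rw [← he]; simp [mtch]
    simp only [mtch, Finset.mem_insert, Finset.mem_singleton, Sym2.eq_iff] at this
    tauto
  unfold _root_.pm
  rw [key, Set.ncard_coe_finset]
  have e1 : mtch Q A B C D E ≠ mtch Q B C D E A := by apply ne <;> first | assumption | (apply Ne.symm; assumption)
  have e2 : mtch Q A B C D E ≠ mtch Q C D E A B := by apply ne <;> first | assumption | (apply Ne.symm; assumption)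
  have e3 : mtch Q A B C D E ≠ mtch Q D E A B C := by apply ne <;> first | assumption | (apply Ne.symm; assumption)
  have e4 : mtch Q A B C D E ≠ mtch Q E A B C D := by apply ne <;> first | assumption | (apply Ne.symm; assumption)
  have e5 : mtch Q B C D E A ≠ mtch Q C D E A B := by apply ne <;> first | assumption | (apply Ne.symm; assumption)
  have e6 : mtch Q B C D E A ≠ mtch Q D E A B C := by apply ne <;> first | assumption | (apply Ne.symm; assumption)
  have e7 : mtch Q B C D E A ≠ mtch Q E A B C D := by apply ne <;> first | assumption | (apply Ne.symm; assumption)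
  have e8 : mtch Q C D E A B ≠ mtch Q D E A B C := by apply ne <;> first | assumption | (apply Ne.symm; assumption)
  have e9 : mtch Q C D E A B ≠ mtch Q E A B C D := by apply ne <;> first | assumption | (apply Ne.symm; assumption)
  have e10 : mtch Q D E A B C ≠ mtch Q E A B C D := by apply ne <;> first | assumption | (apply Ne.symm; assumption)
  rw [Finset.card_insert_of_notMem (by simp [*]), Finset.card_insert_of_notMem (by simp [*]),
    Finset.card_insert_of_notMem (by simp [*]), Finset.card_insert_of_notMem (by simp [*]),
    Finset.card_singleton]

theorem two_of_filter {S : Finset Pt} {f : Pt → Prop} {x y : Pt}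
    (hc : (S.filter f).card = 2) (h : ∀ p ∈ S, f p → p = x ∨ p = y) : f x ∧ f y := by
  have hsub : S.filter f ⊆ {x, y} := by
    intro p hp
    rw [Finset.mem_filter] at hp
    simpa using h p hp.1 hp.2
  have heq := Finset.eq_of_subset_of_card_le hsub (by rw [hc]; exact Finset.card_le_two)
  have hx : x ∈ S.filter f := by rw [heq]; simp
  have hy : y ∈ S.filter f := by rw [heq]; simp
  exact ⟨(Finset.mem_filter.1 hx).2, (Finset.mem_filter.1 hy).2⟩

theorem side_anti (Q A B : Pt) : sideOf Q B A = - sideOf Q A B := by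
  simp only [sideOf]; ring

/-- two points on one side, ordered -/
theorem ordered_pair {S : Finset Pt} (hgp : GeneralPosition S) {Q : Pt} (hQ : Q ∈ S)
    {f : Pt → Prop} (hf : ¬ f Q) (hc : (S.filter f).card = 2) :
    ∃ x y, x ∈ S ∧ y ∈ S ∧ 0 < sideOf Q x y ∧ ∀ p, p ∈ S ∧ f p ↔ p = x ∨ p = y := by
  obtain ⟨x, y, hxy, he⟩ := Finset.card_eq_two.1 hc
  have hm : ∀ p, p ∈ S ∧ f p ↔ p = x ∨ p = y := by
    intro p; rw [← Finset.mem_filter, he]; simp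
  obtain ⟨hx, fx⟩ := (hm x).2 (Or.inl rfl)
  obtain ⟨hy, fy⟩ := (hm y).2 (Or.inr rfl)
  have q1 : Q ≠ x := by rintro rfl; exact hf fx
  have q2 : Q ≠ y := by rintro rfl; exact hf fy
  rcases lt_trichotomy 0 (sideOf Q x y) with h | h | h
  · exact ⟨x, y, hx, hy, h, hm⟩
  · exact absurd (collinear_of_side h.symm q1) (hgp Q hQ x hx y hy q1 q2 hxy)
  · exact ⟨y, x, hy, hx, by rw [side_anti]; linarith, fun p => by rw [hm p]; tauto⟩

/-- A set of six points in general position with the exceptional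
order type has exactly `5 = C_3` non-crossing perfect matchings. -/
theorem pm_of_exceptional (S : Finset Pt) (hcard : S.card = 6)
    (hgp : GeneralPosition S) (Q : Pt) (hQ : Q ∈ S)
    (hexc : ExceptionalAt S Q) :
    pm S = 5 := by
  obtain ⟨hint, hreg⟩ := hexc
  obtain ⟨A, hA, hAQ⟩ : ∃ A ∈ S, A ≠ Q :=
    Finset.exists_mem_ne (by omega) Q
  obtain ⟨hp, hn⟩ := hreg A hA hAQ
  have z : sideOf Q A Q = 0 := by simp [sideOf]
  have zA : sideOf Q A A = 0 := by simp only [sideOf]; ring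
  obtain ⟨B, C, hB, hC, qbc, mp⟩ := ordered_pair hgp hQ (by rw [z]; exact lt_irrefl _) hp
  obtain ⟨D, E, hD, hE, qde, mn⟩ := ordered_pair hgp hQ (by rw [z]; exact lt_irrefl _) hn
  have qab := ((mp B).2 (Or.inl rfl)).2
  have qac := ((mp C).2 (Or.inr rfl)).2
  have qad := ((mn D).2 (Or.inl rfl)).2
  have qae := ((mn E).2 (Or.inr rfl)).2
  have hS : ∀ p, p ∈ S ↔ p = Q ∨ p = A ∨ p = B ∨ p = C ∨ p = D ∨ p = E := by
    intro p
    constructor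
    · intro h
      by_cases h1 : p = Q
      · tauto
      by_cases h2 : p = A
      · tauto
      rcases lt_trichotomy 0 (sideOf Q A p) with h' | h' | h'
      · have := (mp p).1 ⟨h, h'⟩; tauto
      · exact absurd (collinear_of_side h'.symm hAQ.symm)
          (hgp Q hQ A hA p h hAQ.symm (Ne.symm h1) (Ne.symm h2))
      · have := (mn p).1 ⟨h, h'⟩; tauto
    · rintro (rfl | rfl | rfl | rfl | rfl | rfl) <;> assumption
  have qda : 0 < sideOf Q D A := by rw [side_anti]; linarith
  have qea : 0 < sideOf Q E A := by rw [side_anti]; linarith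
  have zq : ∀ X, sideOf Q X Q = 0 := by intro X; simp [sideOf]
  have zs : ∀ X, sideOf Q X X = 0 := by intro X; simp only [sideOf]; ring
  obtain ⟨qcd, qce⟩ : 0 < sideOf Q C D ∧ 0 < sideOf Q C E := by
    refine two_of_filter (hreg C hC (ne_of_side qac).2.2.symm).1 ?_
    intro p hp h
    rcases (hS p).1 hp with rfl | rfl | rfl | rfl | rfl | rfl
    · linarith [zq C]
    · linarith [side_anti Q C p]
    · linarith [side_anti Q C p]
    · linarith [zs p]
    · tauto
    · tauto
  obtain ⟨-, qeb⟩ : 0 < sideOf Q E A ∧ 0 < sideOf Q E B := by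
    refine two_of_filter (hreg E hE (ne_of_side qea).1.symm).1 ?_
    intro p hp h
    rcases (hS p).1 hp with rfl | rfl | rfl | rfl | rfl | rfl
    · linarith [zq E]
    · tauto
    · tauto
    · linarith [side_anti Q E p]
    · linarith [side_anti Q E p]
    · linarith [zs p]
  obtain ⟨qdb, -⟩ : sideOf Q D B < 0 ∧ sideOf Q D C < 0 := by
    refine two_of_filter (hreg D hD (ne_of_side qda).1.symm).2 ?_
    intro p hp h
    rcases (hS p).1 hp with rfl | rfl | rfl | rfl | rfl | rfl
    · linarith [zq D]
    · linarith
    · tauto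
    · tauto
    · linarith [zs p]
    · linarith
  have qbd : 0 < sideOf Q B D := by rw [side_anti]; linarith
  refine Conf.pm (S := S) (Q := Q) (A := A) (B := B) (C := C) (D := D) (E := E) ?_ hS
  exact ⟨qab, qbc, qcd, qde, qea, qac, qbd, qce, qda, qeb,
    consec hgp hint hQ hA hB hC qab qbc qac,
    consec hgp hint hQ hB hC hD qbc qcd qbd,
    consec hgp hint hQ hC hD hE qcd qde qce,
    consec hgp hint hQ hD hE hA qde qea qda,
    consec hgp hint hQ hE hA hB qea qab qeb⟩
end

section
/- Let S be a set of 2k points in the plane in general position, and let Q be a point of S lying in the interior of the convex hull of S. Then there exists a point A ∈ S with A ≠ Q such that the line through Q and A halves S: each of the two open half-planes bounded by this line contains exactly k − 1 points of S. -/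
open scoped Classical

lemma comb_aux_pos {ι : Type*} (T : Finset ι) (κ : ι → ℝ) (hκ : Set.InjOn κ T) (ε : ι → ℤ)
    (hε : ∀ i, ε i = 1 ∨ ε i = -1) (hodd : Odd (∑ i ∈ T, ε i)) (hpos : 0 < ∑ i ∈ T, ε i) :
    ∃ a ∈ T, ∑ b ∈ T with κ a < κ b, ε b = ∑ b ∈ T with κ b < κ a, ε b := by
  have hne : T.Nonempty := by
    rw [Finset.nonempty_iff_ne_empty]
    rintro rfl
    simp at hpos
  set s := ∑ i ∈ T, ε i with hs
  let L : ι → ℤ := fun a => ∑ b ∈ T with κ b ≤ κ a, ε b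
  have hU : (T.filter (fun a => s < 2 * L a)).Nonempty := by
    obtain ⟨m, hm, hmax⟩ := T.exists_max_image κ hne
    refine ⟨m, Finset.mem_filter.2 ⟨hm, ?_⟩⟩
    have : L m = s := by
      simp only [L, hs]
      rw [Finset.filter_true_of_mem hmax]
    omega
  obtain ⟨a, ha, hmin⟩ := Finset.exists_min_image _ κ hU
  obtain ⟨haT, hLa⟩ := Finset.mem_filter.1 ha
  have hLa' : L a = (∑ b ∈ T with κ b < κ a, ε b) + ε a := by
    have : T.filter (fun b => κ b ≤ κ a) = insert a (T.filter (fun b => κ b < κ a)) := by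
      ext b
      simp only [Finset.mem_filter, Finset.mem_insert]
      constructor
      · rintro ⟨hb, h⟩
        rcases h.lt_or_eq with h | h
        · exact Or.inr ⟨hb, h⟩
        · exact Or.inl (hκ hb haT h)
      · rintro (rfl | ⟨hb, h⟩)
        · exact ⟨haT, le_rfl⟩
        · exact ⟨hb, h.le⟩
    simp only [L]
    rw [this, Finset.sum_insert (by simp), add_comm]
  have hsplit : s = L a + ∑ b ∈ T with κ a < κ b, ε b := by
    simp only [L, hs]
    rw [← Finset.sum_filter_add_sum_filter_not T (fun b => κ b ≤ κ a)]
    simp only [not_le]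
  have hlow : 2 * (∑ b ∈ T with κ b < κ a, ε b) ≤ s := by
    rcases (T.filter (fun b => κ b < κ a)).eq_empty_or_nonempty with h | h
    · rw [h]; simp; omega
    · obtain ⟨c, hc, hmax⟩ := Finset.exists_max_image _ κ h
      obtain ⟨hcT, hca⟩ := Finset.mem_filter.1 hc
      have h1 : ∑ b ∈ T with κ b < κ a, ε b = L c := by
        simp only [L]
        congr 1
        ext b
        simp only [Finset.mem_filter, and_congr_right_iff]
        intro hb
        exact ⟨fun h => hmax b (Finset.mem_filter.2 ⟨hb, h⟩), fun h => h.trans_lt hca⟩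
      rw [h1]
      by_contra hcon
      push Not at hcon
      have := hmin c (Finset.mem_filter.2 ⟨hcT, hcon⟩)
      linarith
  refine ⟨a, haT, ?_⟩
  obtain ⟨r, hr⟩ := hodd
  rcases hε a with h | h <;> omega

lemma comb_aux {ι : Type*} (T : Finset ι) (κ : ι → ℝ) (hκ : Set.InjOn κ T) (ε : ι → ℤ)
    (hε : ∀ i, ε i = 1 ∨ ε i = -1) (hodd : Odd (∑ i ∈ T, ε i)) :
    ∃ a ∈ T, ∑ b ∈ T with κ a < κ b, ε b = ∑ b ∈ T with κ b < κ a, ε b := by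
  rcases lt_trichotomy 0 (∑ i ∈ T, ε i) with h | h | h
  · exact comb_aux_pos T κ hκ ε hε hodd h
  · rw [← h] at hodd; simp at hodd
  · obtain ⟨a, ha, h⟩ := comb_aux_pos T κ hκ (fun i => - ε i)
      (fun i => by rcases hε i with h | h <;> simp [h])
      (by rw [Finset.sum_neg_distrib]; exact hodd.neg)
      (by rw [Finset.sum_neg_distrib]; omega)
    simp only [Finset.sum_neg_distrib, neg_inj] at h
    exact ⟨a, ha, h⟩

lemma sideOf_ne {S : Finset Pt} (hgp : GeneralPosition S) {Q A X : Pt} (hQ : Q ∈ S) (hA : A ∈ S)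
    (hX : X ∈ S) (h1 : A ≠ Q) (h2 : X ≠ Q) (h3 : A ≠ X) : sideOf Q A X ≠ 0 := by
  intro h
  apply hgp Q hQ A hA X hX h1.symm h2.symm h3
  rw [collinear_iff_of_mem (p₀ := Q) (by simp)]
  refine ⟨A - Q, ?_⟩
  unfold sideOf at h
  have hX' : ∃ r : ℝ, X = r • (A - Q) +ᵥ Q := by
    by_cases hx : A.1 - Q.1 = 0
    · have hy : A.2 - Q.2 ≠ 0 := fun hy => h1 (Prod.ext (by linarith) (by linarith))
      refine ⟨(X.2 - Q.2) / (A.2 - Q.2), Prod.ext ?_ ?_⟩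
      · simp [hx] at h ⊢
        rcases h with h | h
        · exact absurd h hy
        · linarith
      · simp; field_simp; ring
    · refine ⟨(X.1 - Q.1) / (A.1 - Q.1), Prod.ext ?_ ?_⟩
      · simp; field_simp; ring
      · simp; field_simp; linarith
  intro p hp
  simp only [Set.mem_insert_iff, Set.mem_singleton_iff] at hp
  rcases hp with rfl | rfl | rfl
  · exact ⟨0, by simp⟩
  · exact ⟨1, by simp⟩
  · exact hX'

/-- If `Q` is a point of a `2k`-point set `S` in general position
lying in the interior of the convex hull of `S`, then some line through `Q`
and another point `A` of `S` halves `S`: each open half-plane it bounds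
contains exactly `k - 1` points of `S`. -/
theorem exists_halving_line (k : ℕ) (S : Finset Pt) (hcard : S.card = 2 * k)
    (hgp : GeneralPosition S) (Q : Pt) (hQ : Q ∈ S)
    (hint : Q ∈ interior (convexHull ℝ (S : Set Pt))) :
    ∃ A ∈ S, A ≠ Q ∧
      (S.filter (fun X => 0 < sideOf Q A X)).card = k - 1 ∧
      (S.filter (fun X => sideOf Q A X < 0)).card = k - 1 := by
  set T := S.erase Q with hT
  have hTc : T.card = 2 * k - 1 := by rw [hT, Finset.card_erase_of_mem hQ, hcard]
  have hk : 0 < k := by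
    have := Finset.card_pos.2 ⟨Q, hQ⟩
    omega
  obtain ⟨t, ht⟩ := Infinite.exists_notMem_finset
    (T.image (fun X : Pt => -(X.1 - Q.1) / (X.2 - Q.2)) ∪ {0})
  obtain ⟨t, ht⟩ : ∃ t : ℝ, ∀ X ∈ T, (X.1 - Q.1) + t * (X.2 - Q.2) ≠ 0 := by
    by_cases hex : ∃ X ∈ T, X.1 - Q.1 = 0 ∧ X.2 - Q.2 = 0
    · obtain ⟨X, hX, h1, h2⟩ := hex
      exact absurd (Prod.ext (by linarith) (by linarith)) (Finset.ne_of_mem_erase hX)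
    · refine ⟨t, fun X hX h => ht ?_⟩
      have hy : X.2 - Q.2 ≠ 0 := by
        intro hy
        exact hex ⟨X, hX, by rw [hy] at h; linarith, hy⟩
      refine Finset.mem_union_left _ (Finset.mem_image.2 ⟨X, hX, ?_⟩)
      field_simp
      linarith
  let D : Pt → ℝ := fun X => (X.1 - Q.1) + t * (X.2 - Q.2)
  let κ : Pt → ℝ := fun X => (X.2 - Q.2) / D X
  let ε : Pt → ℤ := fun X => if 0 < D X then 1 else -1
  have hD : ∀ X ∈ T, D X ≠ 0 := ht
  have hcross : ∀ A ∈ T, ∀ X ∈ T, sideOf Q A X = D A * D X * (κ X - κ A) := by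
    intro A hA X hX
    have h1 : κ A * D A = A.2 - Q.2 := div_mul_cancel₀ _ (hD A hA)
    have h2 : κ X * D X = X.2 - Q.2 := div_mul_cancel₀ _ (hD X hX)
    have : D A * D X * (κ X - κ A) = D A * (κ X * D X) - D X * (κ A * D A) := by ring
    rw [this, h1, h2]
    simp only [D, sideOf]
    ring
  have hside : ∀ A ∈ T, ∀ X ∈ T, A ≠ X → sideOf Q A X ≠ 0 := fun A hA X hX h =>
    sideOf_ne hgp hQ (Finset.mem_of_mem_erase hA) (Finset.mem_of_mem_erase hX)
      (Finset.ne_of_mem_erase hA) (Finset.ne_of_mem_erase hX) h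
  have hκ : Set.InjOn κ T := by
    intro A hA X hX h
    by_contra hne
    apply hside A hA X hX hne
    rw [hcross A hA X hX, h]; ring
  have hε : ∀ i, ε i = 1 ∨ ε i = -1 := by
    intro i; simp only [ε]; split_ifs <;> simp
  have hodd : Odd (∑ i ∈ T, ε i) := by
    have h2 : (2 : ℤ) ∣ ∑ i ∈ T, (ε i - 1) := by
      refine Finset.dvd_sum fun i _ => ?_
      rcases hε i with h | h <;> rw [h] <;> decide
    rw [Finset.sum_sub_distrib, Finset.sum_const, hTc] at h2
    obtain ⟨c, hc⟩ := h2
    simp only [nsmul_eq_mul, mul_one] at hc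
    exact ⟨c + k - 1, by omega⟩
  obtain ⟨A, hA, hsum⟩ := comb_aux T κ hκ ε hε hodd
  have hQside : sideOf Q A Q = 0 := by simp [sideOf]
  have hAside : sideOf Q A A = 0 := by simp only [sideOf]; ring
  have e1 : S.filter (fun X => 0 < sideOf Q A X) = T.filter (fun X => 0 < sideOf Q A X) := by
    ext X
    simp only [hT, Finset.mem_filter, Finset.mem_erase]
    constructor
    · rintro ⟨h, h'⟩
      exact ⟨⟨by rintro rfl; linarith, h⟩, h'⟩
    · tauto
  have e2 : S.filter (fun X => sideOf Q A X < 0) = T.filter (fun X => sideOf Q A X < 0) := by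
    ext X
    simp only [hT, Finset.mem_filter, Finset.mem_erase]
    constructor
    · rintro ⟨h, h'⟩
      exact ⟨⟨by rintro rfl; linarith, h⟩, h'⟩
    · tauto
  refine ⟨A, Finset.mem_of_mem_erase hA, Finset.ne_of_mem_erase hA, ?_⟩
  rw [e1, e2]
  have hadd : (T.filter (fun X => 0 < sideOf Q A X)).card
      + (T.filter (fun X => sideOf Q A X < 0)).card = 2 * k - 2 := by
    rw [← Finset.card_union_of_disjoint]
    · have : T.filter (fun X => 0 < sideOf Q A X) ∪ T.filter (fun X => sideOf Q A X < 0)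
          = T.erase A := by
        ext X
        simp only [Finset.mem_union, Finset.mem_filter, Finset.mem_erase]
        constructor
        · rintro (⟨h, h'⟩ | ⟨h, h'⟩)
          · exact ⟨by rintro rfl; linarith, h⟩
          · exact ⟨by rintro rfl; linarith, h⟩
        · rintro ⟨h, h'⟩
          rcases lt_or_gt_of_ne (hside A hA X h' (Ne.symm h)) with h1 | h1
          · exact Or.inr ⟨h', h1⟩
          · exact Or.inl ⟨h', h1⟩
      rw [this, Finset.card_erase_of_mem hA, hTc]
      omega
    · rw [Finset.disjoint_filter]
      intro X _ h1 h2
      linarith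
  have hsub : ((T.filter (fun X => 0 < sideOf Q A X)).card : ℤ)
      - (T.filter (fun X => sideOf Q A X < 0)).card = 0 := by
    have : ((T.filter (fun X => 0 < sideOf Q A X)).card : ℤ)
      - (T.filter (fun X => sideOf Q A X < 0)).card =
      ε A * ((∑ b ∈ T with κ A < κ b, ε b) - ∑ b ∈ T with κ b < κ A, ε b) := by
      rw [Finset.card_filter, Finset.card_filter, Finset.sum_filter, Finset.sum_filter]
      push_cast
      rw [← Finset.sum_sub_distrib, ← Finset.sum_sub_distrib, Finset.mul_sum]
      refine Finset.sum_congr rfl fun X hX => ?_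
      rw [hcross A hA X hX]
      simp only [ε]
      rcases lt_or_gt_of_ne (hD A hA) with ha | ha <;>
      rcases lt_or_gt_of_ne (hD X hX) with hx | hx <;>
      rcases lt_trichotomy (κ A) (κ X) with hc | hc | hc <;>
      first
      | (have hp : 0 < D A * D X * (κ X - κ A) := by
          first
          | exact mul_pos (mul_pos ha hx) (sub_pos.2 hc)
          | exact mul_pos (mul_pos_of_neg_of_neg ha hx) (sub_pos.2 hc)
          | exact mul_pos_of_neg_of_neg (mul_neg_of_neg_of_pos ha hx) (sub_neg.2 hc)
          | exact mul_pos_of_neg_of_neg (mul_neg_of_pos_of_neg ha hx) (sub_neg.2 hc)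
         simp [hp, hp.not_gt, ha, hx, hc, ha.not_gt, hx.not_gt, hc.not_gt])
      | (have hp : D A * D X * (κ X - κ A) < 0 := by
          first
          | exact mul_neg_of_pos_of_neg (mul_pos ha hx) (sub_neg.2 hc)
          | exact mul_neg_of_pos_of_neg (mul_pos_of_neg_of_neg ha hx) (sub_neg.2 hc)
          | exact mul_neg_of_neg_of_pos (mul_neg_of_neg_of_pos ha hx) (sub_pos.2 hc)
          | exact mul_neg_of_neg_of_pos (mul_neg_of_pos_of_neg ha hx) (sub_pos.2 hc)
         simp [hp, hp.not_gt, ha, hx, hc, ha.not_gt, hx.not_gt, hc.not_gt])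
      | simp [hc]
    rw [this, hsum]; ring
  omega
end

section
/- Let S be a set of points in the plane in general position, let A, B ∈ S be distinct, and suppose the line ℓ through A and B contains no other point of S. Let S₁ and S₂ be the subsets of S \ {A, B} lying in the two open half-planes bounded by ℓ. Then the number of non-crossing perfect matchings of S that contain the pair {A,B} is at least pm(S₁) · pm(S₂). -/
open scoped Classical

lemma aux_seg_side (A B : Pt) (c : ℝ) (e : Sym2 Pt) (h : ∀ p ∈ e, 0 < c * sideOf A B p) :
    ∀ x ∈ seg e, 0 < c * sideOf A B x := by
  induction e using Sym2.ind with
  | _ p q =>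
    have hp := h p (by simp)
    have hq := h q (by simp)
    intro x hx
    change x ∈ segment ℝ p q at hx
    obtain ⟨a, b, ha, hb, hab, rfl⟩ := hx
    have : c * sideOf A B (a • p + b • q) = a * (c * sideOf A B p) + b * (c * sideOf A B q) := by
      have hb' : b = 1 - a := by linarith
      subst hb'
      simp [sideOf]
      ring
    rw [this]
    rcases ha.eq_or_lt with rfl | ha
    · have : b = 1 := by linarith
      subst this
      simpa using hq
    · have := mul_pos ha hp
      have := mul_nonneg hb hq.le
      linarith

lemma aux_seg_zero (A B : Pt) : ∀ x ∈ seg s(A, B), sideOf A B x = 0 := by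
  intro x hx
  change x ∈ segment ℝ A B at hx
  obtain ⟨a, b, ha, hb, hab, rfl⟩ := hx
  have hb' : b = 1 - a := by linarith
  subst hb'
  simp [sideOf]
  ring

lemma aux_side_zero (A B P : Pt) (hAB : A ≠ B) (h : sideOf A B P = 0) :
    P ∈ (affineSpan ℝ ({A, B} : Set Pt) : Set Pt) := by
  have key : ∃ t : ℝ, AffineMap.lineMap A B t = P := by
    obtain ⟨a1, a2⟩ := A
    obtain ⟨b1, b2⟩ := B
    obtain ⟨p1, p2⟩ := P
    simp only [sideOf] at h
    by_cases h1 : b1 - a1 = 0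
    · have h2 : b2 - a2 ≠ 0 := by
        intro h2
        apply hAB
        ext
        · simp; linarith
        · simp; linarith
      refine ⟨(p2 - a2) / (b2 - a2), ?_⟩
      have h3 : p1 - a1 = 0 := by
        rw [h1] at h
        have : (b2 - a2) * (p1 - a1) = 0 := by linarith
        exact (mul_eq_zero.mp this).resolve_left h2
      ext
      · simp [AffineMap.lineMap_apply, h1]; linarith
      · simp [AffineMap.lineMap_apply]; field_simp; ring
    · refine ⟨(p1 - a1) / (b1 - a1), ?_⟩
      ext
      · simp [AffineMap.lineMap_apply]; field_simp; ring
      · simp [AffineMap.lineMap_apply]; field_simp; linarith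
  obtain ⟨t, rfl⟩ := key
  exact AffineMap.lineMap_mem_affineSpan_pair t A B

lemma aux_finite (S : Finset Pt) : {M : Finset (Sym2 Pt) | IsNCMatching S M}.Finite := by
  refine (S.sym2.powerset.finite_toSet).subset ?_
  intro M hM
  simp only [Finset.coe_powerset, Set.mem_preimage, Set.mem_powerset_iff]
  intro e he
  simp only [Finset.mem_coe, Finset.mem_sym2_iff]
  exact hM.2.1 e he

lemma aux_union (S S₁ S₂ : Finset Pt) (A B : Pt) (hAB : A ≠ B)
    (h1 : ∀ p, p ∈ S₁ ↔ p ∈ S ∧ 0 < sideOf A B p)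
    (h2 : ∀ p, p ∈ S₂ ↔ p ∈ S ∧ sideOf A B p < 0)
    (hA : A ∈ S) (hB : B ∈ S)
    (h0 : ∀ p ∈ S, sideOf A B p = 0 → p = A ∨ p = B)
    (M₁ M₂ : Finset (Sym2 Pt)) (hM₁ : IsNCMatching S₁ M₁) (hM₂ : IsNCMatching S₂ M₂) :
    IsNCMatching S (insert s(A, B) (M₁ ∪ M₂)) := by
  have hsA : sideOf A B A = 0 := by simp [sideOf]
  have hsB : sideOf A B B = 0 := by simp [sideOf]; ring
  obtain ⟨d1, s1, u1, n1⟩ := hM₁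
  obtain ⟨d2, s2, u2, n2⟩ := hM₂
  have pos : ∀ e ∈ M₁, ∀ p ∈ e, 0 < sideOf A B p := fun e he p hp => ((h1 p).1 (s1 e he p hp)).2
  have neg : ∀ e ∈ M₂, ∀ p ∈ e, sideOf A B p < 0 := fun e he p hp => ((h2 p).1 (s2 e he p hp)).2
  have zer : ∀ p ∈ s(A, B), sideOf A B p = 0 := by
    intro p hp
    rcases Sym2.mem_iff.1 hp with rfl | rfl <;> assumption
  have posS : ∀ e ∈ M₁, ∀ p ∈ seg e, 0 < sideOf A B p := by
    intro e he p hp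
    have := aux_seg_side A B 1 e (fun q hq => by simpa using pos e he q hq) p hp
    linarith
  have negS : ∀ e ∈ M₂, ∀ p ∈ seg e, sideOf A B p < 0 := by
    intro e he p hp
    have := aux_seg_side A B (-1) e (fun q hq => by simpa using neg e he q hq) p hp
    linarith
  have zerS := aux_seg_zero A B
  refine ⟨?_, ?_, ?_, ?_⟩
  · intro e he
    simp only [Finset.mem_insert, Finset.mem_union] at he
    rcases he with rfl | he | he
    · simpa using hAB
    · exact d1 e he
    · exact d2 e he
  · intro e he p hp
    simp only [Finset.mem_insert, Finset.mem_union] at he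
    rcases he with rfl | he | he
    · rcases Sym2.mem_iff.1 hp with rfl | rfl <;> assumption
    · exact ((h1 p).1 (s1 e he p hp)).1
    · exact ((h2 p).1 (s2 e he p hp)).1
  · intro p hp
    simp only [Finset.mem_insert, Finset.mem_union]
    rcases lt_trichotomy (sideOf A B p) 0 with h | h | h
    · obtain ⟨e, ⟨he, hpe⟩, hu⟩ := u2 p ((h2 p).2 ⟨hp, h⟩)
      refine ⟨e, ⟨Or.inr (Or.inr he), hpe⟩, ?_⟩
      rintro f ⟨rfl | hf | hf, hpf⟩
      · exact absurd (zer p hpf) h.ne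
      · exact absurd (pos f hf p hpf) h.not_gt
      · exact hu f ⟨hf, hpf⟩
    · refine ⟨s(A, B), ⟨Or.inl rfl, Sym2.mem_iff.2 (h0 p hp h)⟩, ?_⟩
      rintro f ⟨rfl | hf | hf, hpf⟩
      · rfl
      · exact absurd (pos f hf p hpf) h.not_gt
      · exact absurd (neg f hf p hpf) h.not_lt
    · obtain ⟨e, ⟨he, hpe⟩, hu⟩ := u1 p ((h1 p).2 ⟨hp, h⟩)
      refine ⟨e, ⟨Or.inr (Or.inl he), hpe⟩, ?_⟩
      rintro f ⟨rfl | hf | hf, hpf⟩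
      · exact absurd (zer p hpf) h.ne'
      · exact hu f ⟨hf, hpf⟩
      · exact absurd (neg f hf p hpf) h.not_gt
  · intro e he f hf hef
    simp only [Finset.mem_insert, Finset.mem_union] at he hf
    rcases he with rfl | he | he <;> rcases hf with rfl | hf | hf
    · exact absurd rfl hef
    · exact Set.disjoint_left.2 fun x hx hy => by linarith [zerS x hx, posS f hf x hy]
    · exact Set.disjoint_left.2 fun x hx hy => by linarith [zerS x hx, negS f hf x hy]
    · exact Set.disjoint_left.2 fun x hx hy => by linarith [zerS x hy, posS e he x hx]
    · exact n1 e he f hf hef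
    · exact Set.disjoint_left.2 fun x hx hy => by linarith [posS e he x hx, negS f hf x hy]
    · exact Set.disjoint_left.2 fun x hx hy => by linarith [zerS x hy, negS e he x hx]
    · exact Set.disjoint_left.2 fun x hx hy => by linarith [posS f hf x hy, negS e he x hx]
    · exact n2 e he f hf hef

lemma aux_exists_mem (e : Sym2 Pt) : ∃ p, p ∈ e := by
  induction e using Sym2.ind with
  | _ p q => exact ⟨p, by simp⟩

lemma aux_sub (M₁ M₂ N₁ N₂ : Finset (Sym2 Pt)) (g : Sym2 Pt) (σ : Pt → ℝ)
    (hM₁ : ∀ e ∈ M₁, ∀ p ∈ e, 0 < σ p) (hN₂ : ∀ e ∈ N₂, ∀ p ∈ e, σ p < 0)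
    (hg : ∀ p ∈ g, σ p = 0)
    (h : insert g (M₁ ∪ M₂) = insert g (N₁ ∪ N₂)) : M₁ ⊆ N₁ := by
  intro e he
  obtain ⟨p, hp⟩ := aux_exists_mem e
  have h1 : e ∈ insert g (N₁ ∪ N₂) := by rw [← h]; simp [he]
  simp only [Finset.mem_insert, Finset.mem_union] at h1
  have h2 := hM₁ e he p hp
  rcases h1 with rfl | h1 | h1
  · exact absurd (hg p hp) h2.ne'
  · exact h1
  · exact absurd (hN₂ e h1 p hp) h2.not_gt

/-- If the line through two points `A, B` of `S` contains no
other point of `S`, then the number of non-crossing perfect matchings of `S`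
containing the pair `{A, B}` is at least `pm S₁ * pm S₂`, where `S₁` and `S₂`
are the parts of `S` in the two open half-planes bounded by that line. -/
theorem mul_pm_le_card_matchings_through_edge (S : Finset Pt)
    (hgp : GeneralPosition S)
    (A B : Pt) (hA : A ∈ S) (hB : B ∈ S) (hAB : A ≠ B)
    (hline : ∀ P ∈ S, P ≠ A → P ≠ B →
      P ∉ (affineSpan ℝ ({A, B} : Set Pt) : Set Pt)) :
    pm (S.filter (fun X => 0 < sideOf A B X)) *
      pm (S.filter (fun X => sideOf A B X < 0)) ≤
    Set.ncard {M : Finset (Sym2 Pt) | IsNCMatching S M ∧ s(A, B) ∈ M} := by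
  have h0 : ∀ p ∈ S, sideOf A B p = 0 → p = A ∨ p = B := by
    intro p hp h
    by_contra hc
    push Not at hc
    exact hline p hp hc.1 hc.2 (aux_side_zero A B p hAB h)
  have hsA : sideOf A B A = 0 := by simp [sideOf]
  have hsB : sideOf A B B = 0 := by simp [sideOf]; ring
  have zer : ∀ p ∈ s(A, B), sideOf A B p = 0 := by
    intro p hp
    rcases Sym2.mem_iff.1 hp with rfl | rfl <;> assumption
  unfold pm
  rw [← Set.ncard_prod]
  refine Set.ncard_le_ncard_of_injOn (fun x => insert s(A, B) (x.1 ∪ x.2)) ?_ ?_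
    ((aux_finite S).subset fun M hM => hM.1)
  · rintro ⟨M₁, M₂⟩ ⟨h1, h2⟩
    exact ⟨aux_union S _ _ A B hAB (by simp) (by simp) hA hB h0 M₁ M₂ h1 h2, by simp⟩
  · rintro ⟨M₁, M₂⟩ ⟨h1, h2⟩ ⟨N₁, N₂⟩ ⟨k1, k2⟩ h
    dsimp only at h h1 h2 k1 k2
    have pM : ∀ e ∈ M₁, ∀ p ∈ e, 0 < sideOf A B p := fun e he p hp =>
      (Finset.mem_filter.1 (h1.2.1 e he p hp)).2
    have pN : ∀ e ∈ N₁, ∀ p ∈ e, 0 < sideOf A B p := fun e he p hp =>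
      (Finset.mem_filter.1 (k1.2.1 e he p hp)).2
    have nM : ∀ e ∈ M₂, ∀ p ∈ e, sideOf A B p < 0 := fun e he p hp =>
      (Finset.mem_filter.1 (h2.2.1 e he p hp)).2
    have nN : ∀ e ∈ N₂, ∀ p ∈ e, sideOf A B p < 0 := fun e he p hp =>
      (Finset.mem_filter.1 (k2.2.1 e he p hp)).2
    have h' : insert s(A, B) (M₂ ∪ M₁) = insert s(A, B) (N₂ ∪ N₁) := by
      rw [Finset.union_comm M₂, Finset.union_comm N₂]; exact h
    have e1 : M₁ = N₁ := Finset.Subset.antisymm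
      (aux_sub M₁ M₂ N₁ N₂ _ _ pM nN zer h) (aux_sub N₁ N₂ M₁ M₂ _ _ pN nM zer h.symm)
    have zer' : ∀ p ∈ s(A, B), -sideOf A B p = 0 := fun p hp => by simp [zer p hp]
    have e2 : M₂ = N₂ := Finset.Subset.antisymm
      (aux_sub M₂ M₁ N₂ N₁ _ (fun p => -sideOf A B p)
        (fun e he p hp => by simpa using nM e he p hp)
        (fun e he p hp => by simpa using pN e he p hp) zer' h')
      (aux_sub N₂ N₁ M₂ M₁ _ (fun p => -sideOf A B p)
        (fun e he p hp => by simpa using nN e he p hp)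
        (fun e he p hp => by simpa using pM e he p hp) zer' h'.symm)
    rw [e1, e2]
end

section
/- Let S be a set of 2k points in the plane in general position. If S is not in convex position and it is not the case that k = 3 with the exceptional order type (exactly one point Q of S in the interior of the convex hull of S such that for every other point P of S, each of the two open half-planes bounded by the line through Q and P contains exactly 2 points of S), then the number of non-crossing perfect matchings of S is strictly greater than C_k: pm(S) > C_k. -/
open scoped Classical

/-! ### Orientation basics -/

lemma side_swap_s10 (a b x : Pt) : sideOf b a x = - sideOf a b x := by
  unfold sideOf; ring

lemma side_rot_s10 (a b x : Pt) : sideOf a b x = sideOf b x a := by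
  unfold sideOf; ring

lemma side_swap' (a b x : Pt) : sideOf a x b = - sideOf a b x := by
  unfold sideOf; ring

lemma side_self1 (a b : Pt) : sideOf a b a = 0 := by
  unfold sideOf; ring

lemma side_self2 (a b : Pt) : sideOf a b b = 0 := by
  unfold sideOf; ring

def GP (S : Finset Pt) : Prop :=
  ∀ p ∈ S, ∀ q ∈ S, ∀ r ∈ S, p ≠ q → p ≠ r → q ≠ r → sideOf p q r ≠ 0

lemma GP.mono {S T : Finset Pt} (h : GP S) (hT : T ⊆ S) : GP T :=
  fun p hp q hq r hr => h p (hT hp) q (hT hq) r (hT hr)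

lemma gp_of {S : Finset Pt} (h : GeneralPosition S) : GP S := by
  intro p hp q hq r hr hpq hpr hqr h0
  apply h p hp q hq r hr hpq hpr hqr
  rw [collinear_iff_of_mem (p₀ := p) (by simp)]
  refine ⟨q - p, ?_⟩
  have hne : q.1 - p.1 ≠ 0 ∨ q.2 - p.2 ≠ 0 := by
    by_contra hc
    push Not at hc
    apply hpq
    ext
    · linarith [hc.1]
    · linarith [hc.2]
  intro x hx
  simp only [Set.mem_insert_iff, Set.mem_singleton_iff] at hx
  rcases hx with rfl | rfl | rfl
  · exact ⟨0, by simp⟩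
  · exact ⟨1, by simp⟩
  · unfold sideOf at h0
    rcases hne with hn | hn
    · refine ⟨(x.1 - p.1) / (q.1 - p.1), ?_⟩
      ext
      · simp; field_simp; ring
      · simp; field_simp; linarith
    · refine ⟨(x.2 - p.2) / (q.2 - p.2), ?_⟩
      ext
      · simp; field_simp; linarith
      · simp; field_simp; ring

lemma side_comb (a b p q : Pt) (s t : ℝ) (h : s + t = 1) :
    sideOf a b (s • p + t • q) = s * sideOf a b p + t * sideOf a b q := by
  have : s = 1 - t := by linarith
  subst this
  simp [sideOf]; ring

lemma seg_disj {a b p q r s : Pt} (hp : 0 < sideOf a b p) (hq : 0 < sideOf a b q)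
    (hr : sideOf a b r ≤ 0) (hs : sideOf a b s ≤ 0) :
    Disjoint (segment ℝ p q) (segment ℝ r s) := by
  rw [Set.disjoint_left]
  rintro x ⟨s1, t1, hs1, ht1, h1, rfl⟩ ⟨s2, t2, hs2, ht2, h2, he⟩
  have e1 := side_comb a b p q s1 t1 h1
  have e2 := side_comb a b r s s2 t2 h2
  rw [he] at e2
  rw [e1] at e2
  have : 0 < s1 * sideOf a b p + t1 * sideOf a b q := by
    rcases hs1.eq_or_lt with h | h
    · have : t1 = 1 := by linarith
      rw [← h, this]; simpa using hq
    · have := mul_pos h hp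
      have := mul_nonneg ht1 hq.le
      linarith
  have h3 := mul_nonneg hs2 (neg_nonneg.2 hr)
  have h4 := mul_nonneg ht2 (neg_nonneg.2 hs)
  nlinarith

/-! ### Matchings -/

lemma seg_mk (a b : Pt) : seg s(a, b) = segment ℝ a b := rfl

lemma glue {S₁ S₂ : Finset Pt} {M₁ M₂ : Finset (Sym2 Pt)} (a b : Pt)
    (h1 : IsNCMatching S₁ M₁) (h2 : IsNCMatching S₂ M₂)
    (hp : ∀ x ∈ S₁, 0 < sideOf a b x) (hn : ∀ x ∈ S₂, sideOf a b x ≤ 0) :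
    IsNCMatching (S₁ ∪ S₂) (M₁ ∪ M₂) := by
  obtain ⟨a1, b1, c1, d1⟩ := h1
  obtain ⟨a2, b2, c2, d2⟩ := h2
  have hdis : ∀ x ∈ S₁, x ∉ S₂ := fun x h h' => absurd (hp x h) (not_lt.2 (hn x h'))
  have key : ∀ e ∈ M₁, ∀ f ∈ M₂, Disjoint (seg e) (seg f) := by
    intro e he f hf
    induction e with | _ p q =>
    induction f with | _ r s =>
    rw [seg_mk, seg_mk]
    exact seg_disj (hp p (b1 _ he p (by simp))) (hp q (b1 _ he q (by simp)))
      (hn r (b2 _ hf r (by simp))) (hn s (b2 _ hf s (by simp)))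
  refine ⟨?_, ?_, ?_, ?_⟩
  · intro e he
    rcases Finset.mem_union.1 he with he | he
    · exact a1 e he
    · exact a2 e he
  · intro e he p hpe
    rcases Finset.mem_union.1 he with he | he
    · exact Finset.mem_union_left _ (b1 e he p hpe)
    · exact Finset.mem_union_right _ (b2 e he p hpe)
  · intro p hpS
    rcases Finset.mem_union.1 hpS with hpS | hpS
    · obtain ⟨e, ⟨he, hpe⟩, hu⟩ := c1 p hpS
      refine ⟨e, ⟨Finset.mem_union_left _ he, hpe⟩, ?_⟩
      rintro f ⟨hf, hpf⟩
      rcases Finset.mem_union.1 hf with hf | hf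
      · exact hu f ⟨hf, hpf⟩
      · exact absurd (b2 f hf p hpf) (hdis p hpS)
    · obtain ⟨e, ⟨he, hpe⟩, hu⟩ := c2 p hpS
      refine ⟨e, ⟨Finset.mem_union_right _ he, hpe⟩, ?_⟩
      rintro f ⟨hf, hpf⟩
      rcases Finset.mem_union.1 hf with hf | hf
      · exact absurd hpS (hdis p (b1 f hf p hpf))
      · exact hu f ⟨hf, hpf⟩
  · intro e he f hf hef
    rcases Finset.mem_union.1 he with he | he <;> rcases Finset.mem_union.1 hf with hf | hf
    · exact d1 e he f hf hef
    · exact key e he f hf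
    · exact (key f hf e he).symm
    · exact d2 e he f hf hef

lemma nc_pair {a b : Pt} (h : a ≠ b) : IsNCMatching {a, b} {s(a, b)} := by
  refine ⟨by simpa using h, by simp, ?_, ?_⟩
  · intro p hp
    refine ⟨s(a, b), ⟨by simp, by simpa using hp⟩, ?_⟩
    rintro f ⟨hf, -⟩
    simpa using hf
  · intro e he f hf hef
    simp at he hf
    exact absurd (he.trans hf.symm) hef

noncomputable def NC (S : Finset Pt) : Finset (Finset (Sym2 Pt)) :=
  S.sym2.powerset.filter (IsNCMatching S)

lemma mem_NC {S : Finset Pt} {M : Finset (Sym2 Pt)} : M ∈ NC S ↔ IsNCMatching S M := by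
  unfold NC
  rw [Finset.mem_filter, Finset.mem_powerset]
  refine ⟨fun h => h.2, fun h => ⟨fun e he => ?_, h⟩⟩
  rw [Finset.mem_sym2_iff]
  exact fun p hp => h.2.1 e he p hp

lemma pm_eq (S : Finset Pt) : pm S = (NC S).card := by
  unfold pm
  rw [← Set.ncard_coe_finset]
  congr 1
  ext M
  simp [mem_NC]

lemma pm_empty : 1 ≤ pm ∅ := by
  rw [pm_eq, Nat.one_le_iff_ne_zero, Finset.card_ne_zero]
  exact ⟨∅, mem_NC.2 ⟨by simp, by simp, by simp, by simp⟩⟩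

noncomputable def Rt (A B : Pt) (S : Finset Pt) : Finset Pt := S.filter (fun x => sideOf A B x < 0)
noncomputable def Lf (A B : Pt) (S : Finset Pt) : Finset Pt := S.filter (fun x => 0 < sideOf A B x)

lemma Rt_sub (A B : Pt) (S : Finset Pt) : Rt A B S ⊆ S := Finset.filter_subset _ _
lemma Lf_sub (A B : Pt) (S : Finset Pt) : Lf A B S ⊆ S := Finset.filter_subset _ _

lemma split_eq {S : Finset Pt} (hg : GP S) {A B : Pt} (hA : A ∈ S) (hB : B ∈ S) (hAB : A ≠ B) :
    Rt A B S ∪ (Lf A B S ∪ {A, B}) = S := by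
  ext x
  simp only [Rt, Lf, Finset.mem_union, Finset.mem_filter, Finset.mem_insert, Finset.mem_singleton]
  constructor
  · rintro (h | h | rfl | rfl)
    · exact h.1
    · exact h.1
    · exact hA
    · exact hB
  · intro hx
    by_cases h1 : x = A
    · simp [h1]
    by_cases h2 : x = B
    · simp [h2]
    rcases lt_or_gt_of_ne (hg A hA B hB x hx hAB (Ne.symm h1) (Ne.symm h2)) with h | h
    · exact Or.inl ⟨hx, h⟩
    · exact Or.inr (Or.inl ⟨hx, h⟩)

lemma split_card {S : Finset Pt} (hg : GP S) {A B : Pt} (hA : A ∈ S) (hB : B ∈ S) (hAB : A ≠ B) :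
    (Rt A B S).card + (Lf A B S).card + 2 = S.card := by
  conv_rhs => rw [← split_eq hg hA hB hAB]
  rw [Finset.card_union_of_disjoint, Finset.card_union_of_disjoint, Finset.card_pair hAB]
  · ring
  · rw [Finset.disjoint_left]
    simp only [Lf, Finset.mem_filter, Finset.mem_insert, Finset.mem_singleton]
    rintro x ⟨-, hx⟩ (rfl | rfl)
    · simp [side_self1] at hx
    · simp [side_self2] at hx
  · rw [Finset.disjoint_left]
    simp only [Rt, Lf, Finset.mem_union, Finset.mem_filter, Finset.mem_insert,
      Finset.mem_singleton]
    rintro x ⟨-, hx⟩ (⟨-, h⟩ | rfl | rfl)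
    · linarith
    · simp [side_self1] at hx
    · simp [side_self2] at hx

lemma nc_split {S : Finset Pt} (hg : GP S) {A B : Pt} (hA : A ∈ S) (hB : B ∈ S) (hAB : A ≠ B)
    {M₁ M₂ : Finset (Sym2 Pt)} (h1 : IsNCMatching (Rt A B S) M₁)
    (h2 : IsNCMatching (Lf A B S) M₂) : IsNCMatching S (M₁ ∪ (M₂ ∪ {s(A, B)})) := by
  have := glue A B h2 (nc_pair hAB) (by simp [Lf]) (by simp [side_self1, side_self2])
  have := glue B A h1 this ?_ ?_
  · rwa [split_eq hg hA hB hAB] at this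
  · intro x hx
    rw [side_swap_s10]
    have := (Finset.mem_filter.1 hx).2
    linarith
  · intro x hx
    rw [side_swap_s10]
    simp only [Lf, Finset.mem_union, Finset.mem_filter, Finset.mem_insert,
      Finset.mem_singleton] at hx
    rcases hx with ⟨-, h⟩ | rfl | rfl
    · linarith
    · simp [side_self1]
    · simp [side_self2]


/-! ### Counting -/

noncomputable def NS (S : Finset Pt) (A : Pt) : Finset (Finset (Sym2 Pt)) :=
  (NC S).filter (fun M => ∃ B, s(A, B) ∈ M ∧ ∀ e ∈ M, e ≠ s(A, B) →
    ∀ x ∈ e, ∀ y ∈ e, 0 < sideOf A B x * sideOf A B y)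

lemma recR {S : Finset Pt} {A B : Pt}
    {M₁ M₂ : Finset (Sym2 Pt)} (h1 : IsNCMatching (Rt A B S) M₁)
    (h2 : IsNCMatching (Lf A B S) M₂) :
    (M₁ ∪ (M₂ ∪ {s(A, B)})).filter (fun e => ∀ x ∈ e, sideOf A B x < 0) = M₁ := by
  ext e
  simp only [Finset.mem_filter, Finset.mem_union, Finset.mem_singleton]
  constructor
  · rintro ⟨h | h | rfl, hx⟩
    · exact h
    · exfalso
      induction e with | _ p q =>
      have h3 := hx p (by simp)
      have h4 := (Finset.mem_filter.1 (h2.2.1 _ h p (by simp))).2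
      linarith
    · have h3 := hx A (by simp)
      simp [side_self1] at h3
  · intro h
    exact ⟨Or.inl h, fun x hx => (Finset.mem_filter.1 (h1.2.1 e h x hx)).2⟩

lemma recL {S : Finset Pt} {A B : Pt}
    {M₁ M₂ : Finset (Sym2 Pt)} (h1 : IsNCMatching (Rt A B S) M₁)
    (h2 : IsNCMatching (Lf A B S) M₂) :
    (M₁ ∪ (M₂ ∪ {s(A, B)})).filter (fun e => ∀ x ∈ e, 0 < sideOf A B x) = M₂ := by
  ext e
  simp only [Finset.mem_filter, Finset.mem_union, Finset.mem_singleton]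
  constructor
  · rintro ⟨h | h | rfl, hx⟩
    · exfalso
      induction e with | _ p q =>
      have h3 := hx p (by simp)
      have h4 := (Finset.mem_filter.1 (h1.2.1 _ h p (by simp))).2
      linarith
    · exact h
    · have h3 := hx A (by simp)
      simp [side_self1] at h3
  · intro h
    exact ⟨Or.inr (Or.inl h), fun x hx => (Finset.mem_filter.1 (h2.2.1 e h x hx)).2⟩

lemma count {S : Finset Pt} (hg : GP S) {A : Pt} (hA : A ∈ S) :
    ∑ B ∈ S.erase A, pm (Rt A B S) * pm (Lf A B S) ≤ (NS S A).card := by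
  let F : Pt → Finset (Finset (Sym2 Pt)) := fun B =>
    (NC (Rt A B S) ×ˢ NC (Lf A B S)).image (fun m => m.1 ∪ (m.2 ∪ {s(A, B)}))
  have hF : ∀ B, (F B).card = pm (Rt A B S) * pm (Lf A B S) := by
    intro B
    rw [pm_eq, pm_eq, ← Finset.card_product]
    apply Finset.card_image_of_injOn
    rintro ⟨m1, m2⟩ hm ⟨m1', m2'⟩ hm' he
    simp only [Finset.coe_product, Set.mem_prod, Finset.mem_coe, mem_NC] at hm hm'
    simp only at he
    ext1
    · simp only
      rw [← recR hm.1 hm.2, he, recR hm'.1 hm'.2]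
    · simp only
      rw [← recL hm.1 hm.2, he, recL hm'.1 hm'.2]
  rw [← Finset.sum_congr rfl (fun B _ => hF B), ← Finset.card_biUnion]
  · apply Finset.card_le_card
    intro M hM
    simp only [Finset.mem_biUnion, F, Finset.mem_image, Finset.mem_product, mem_NC,
      Finset.mem_erase] at hM
    obtain ⟨B, ⟨hBA, hB⟩, ⟨m1, m2⟩, ⟨h1, h2⟩, rfl⟩ := hM
    unfold NS
    rw [Finset.mem_filter, mem_NC]
    refine ⟨nc_split hg hA hB hBA.symm h1 h2, B, by simp, ?_⟩
    intro e he hne x hx y hy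
    simp only [Finset.mem_union, Finset.mem_singleton] at he
    rcases he with he | he | he
    · exact mul_pos_of_neg_of_neg (Finset.mem_filter.1 (h1.2.1 e he x hx)).2
        (Finset.mem_filter.1 (h1.2.1 e he y hy)).2
    · exact mul_pos (Finset.mem_filter.1 (h2.2.1 e he x hx)).2
        (Finset.mem_filter.1 (h2.2.1 e he y hy)).2
    · exact absurd he hne
  · intro B hB C hC hBC
    simp only [Finset.coe_erase, Set.mem_sdiff, Finset.mem_coe, Set.mem_singleton_iff] at hB hC
    rw [Function.onFun, Finset.disjoint_left]
    intro M hM hM'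
    simp only [F, Finset.mem_image, Finset.mem_product, mem_NC] at hM hM'
    obtain ⟨⟨m1, m2⟩, ⟨h1, h2⟩, rfl⟩ := hM
    obtain ⟨⟨m1', m2'⟩, ⟨h1', h2'⟩, he⟩ := hM'
    have hN := nc_split hg hA hB.1 (Ne.symm hB.2) h1 h2
    have hm : s(A, C) ∈ m1 ∪ (m2 ∪ {s(A, B)}) := by
      rw [← he]; simp
    obtain ⟨e, -, hu⟩ := hN.2.2.1 A hA
    have e1 := hu _ ⟨hm, by simp⟩
    have e2 := hu s(A, B) ⟨by simp, by simp⟩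
    have := e2.trans e1.symm
    simp only [Sym2.eq_iff] at this
    rcases this with ⟨-, h⟩ | ⟨h, h'⟩
    · exact hBC h
    · exact hBC (h'.trans h)

/-- extreme point, with a witness functional -/
def ExtP (S : Finset Pt) (A : Pt) : Prop :=
  A ∈ S ∧ ∃ u v : ℝ, ∀ x ∈ S, x ≠ A → 0 < u * (x.1 - A.1) + v * (x.2 - A.2)

lemma ext_of_notMem {S : Finset Pt} {A : Pt} (hA : A ∈ S)
    (h : A ∉ convexHull ℝ (↑(S.erase A) : Set Pt)) : ExtP S A := by
  refine ⟨hA, ?_⟩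
  have hc : IsClosed (convexHull ℝ (↑(S.erase A) : Set Pt)) :=
    (Set.Finite.isCompact_convexHull (𝕜 := ℝ) (Finset.finite_toSet _)).isClosed
  obtain ⟨f, w, hf, hw⟩ := geometric_hahn_banach_point_closed (convex_convexHull ℝ _) hc h
  have hlin : ∀ x : Pt, f x = f (1, 0) * x.1 + f (0, 1) * x.2 := by
    intro x
    have : x = x.1 • ((1, 0) : Pt) + x.2 • ((0, 1) : Pt) := by ext <;> simp
    conv_lhs => rw [this]
    rw [map_add, map_smul, map_smul]
    simp; ring
  refine ⟨f (1, 0), f (0, 1), fun x hx hxA => ?_⟩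
  have h1 := hw x (subset_convexHull ℝ _ (by simp [hx, hxA]))
  rw [hlin] at h1 hf
  linarith

lemma notMem_of_ext {S : Finset Pt} {A : Pt} (h : ExtP S A) :
    A ∉ convexHull ℝ (↑(S.erase A) : Set Pt) := by
  obtain ⟨hA, u, v, h⟩ := h
  intro hm
  have hconv : Convex ℝ {x : Pt | 0 < u * (x.1 - A.1) + v * (x.2 - A.2)} := by
    intro x hx y hy s t hs ht hst
    simp only [Set.mem_ofPred_eq] at *
    simp only [Prod.fst_add, Prod.smul_fst, Prod.snd_add, Prod.smul_snd, smul_eq_mul]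
    have : s = 1 - t := by linarith
    subst this
    rcases ht.eq_or_lt with h0 | h0
    · subst h0; simpa using hx
    · have := mul_pos h0 hy
      have := mul_nonneg hs hx.le
      nlinarith
  have := convexHull_min (s := (↑(S.erase A) : Set Pt)) ?_ hconv hm
  · simp at this
  · intro x hx
    simp at hx
    exact h x hx.1 hx.2

lemma exists_ext {S : Finset Pt} (h : S.Nonempty) : ∃ A, ExtP S A := by
  have hc := Set.Finite.isCompact_convexHull (𝕜 := ℝ) (Finset.finite_toSet S)
  obtain ⟨A, hA⟩ := hc.extremePoints_nonempty (by
    rw [convexHull_nonempty_iff]; exact_mod_cast h)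
  have hAS : A ∈ S := by exact_mod_cast extremePoints_convexHull_subset hA
  refine ⟨A, ext_of_notMem hAS ?_⟩
  rw [(convex_convexHull ℝ _).mem_extremePoints_iff_convex_sdiff] at hA
  intro hm
  have := convexHull_min (s := (↑(S.erase A) : Set Pt)) ?_ hA.2 hm
  · simp at this
  · intro x hx
    simp at hx
    exact ⟨subset_convexHull ℝ _ (by simpa using hx.1), by simpa using hx.2⟩

lemma ext_trans {S : Finset Pt} {A b c d : Pt} (h : ExtP S A) (hb : b ∈ S) (hc : c ∈ S) (hd : d ∈ S)
    (hbA : b ≠ A) (hcA : c ≠ A) (hdA : d ≠ A)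
    (h1 : 0 < sideOf A b c) (h2 : 0 < sideOf A c d) : 0 < sideOf A b d := by
  obtain ⟨hA, u, v, h⟩ := h
  have k1 := h b hb hbA
  have k2 := h c hc hcA
  have k3 := h d hd hdA
  have e : sideOf A b d * (u * (c.1 - A.1) + v * (c.2 - A.2)) =
      sideOf A c d * (u * (b.1 - A.1) + v * (b.2 - A.2)) +
      sideOf A b c * (u * (d.1 - A.1) + v * (d.2 - A.2)) := by
    unfold sideOf; ring
  have : 0 < sideOf A b d * (u * (c.1 - A.1) + v * (c.2 - A.2)) := by
    rw [e]; positivity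
  exact pos_of_mul_pos_left this k2.le

lemma rank_lt {S : Finset Pt} {A b c : Pt} (h : ExtP S A) (hb : b ∈ S) (hc : c ∈ S)
    (hbA : b ≠ A) (hcA : c ≠ A) (h1 : 0 < sideOf A b c) :
    (Rt A b S).card < (Rt A c S).card := by
  apply Finset.card_lt_card
  rw [Finset.ssubset_iff_of_subset]
  · refine ⟨b, ?_, ?_⟩
    · simp only [Rt, Finset.mem_filter]
      refine ⟨hb, ?_⟩
      rw [side_swap']; linarith
    · simp [Rt, side_self2]
  · intro x hx
    simp only [Rt, Finset.mem_filter] at hx ⊢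
    refine ⟨hx.1, ?_⟩
    have hxA : x ≠ A := by
      rintro rfl
      simp [side_self1] at hx
    have := ext_trans h hx.1 hb hc hxA hbA hcA (by rw [side_swap']; linarith [hx.2]) h1
    rw [side_swap']; linarith

lemma rank_inj {S : Finset Pt} (hg : GP S) {A b c : Pt} (h : ExtP S A) (hb : b ∈ S) (hc : c ∈ S)
    (hbA : b ≠ A) (hcA : c ≠ A) (h1 : (Rt A b S).card = (Rt A c S).card) : b = c := by
  by_contra hbc
  rcases lt_or_gt_of_ne (hg A h.1 b hb c hc hbA.symm hcA.symm hbc) with h2 | h2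
  · have := rank_lt h hc hb hcA hbA (by rw [side_swap']; linarith)
    omega
  · have := rank_lt h hb hc hbA hcA h2
    omega

lemma rank_surj {S : Finset Pt} (hg : GP S) {A : Pt} (h : ExtP S A) {i : ℕ} (hi : i + 1 < S.card) :
    ∃ b ∈ S, b ≠ A ∧ (Rt A b S).card = i := by
  have := Finset.surj_on_of_inj_on_of_card_le (s := S.erase A) (t := Finset.range (S.card - 1))
    (fun b _ => (Rt A b S).card) ?_ ?_ ?_ i (by simp; omega)
  · obtain ⟨b, hb, e⟩ := this
    simp at hb
    exact ⟨b, hb.2, hb.1, e.symm⟩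
  · intro b hb
    simp at hb
    have := split_card hg h.1 hb.2 (Ne.symm hb.1)
    simp; omega
  · intro b c hb hc e
    simp at hb hc
    exact rank_inj hg h hb.2 hc.2 hb.1 hc.1 e
  · simp [Finset.card_erase_of_mem h.1]

lemma sum_catalan {S : Finset Pt} (hg : GP S) {A : Pt} (h : ExtP S A) {n : ℕ}
    (hc : S.card = 2 * (n + 1)) :
    ∑ B ∈ (S.erase A).filter (fun B => Even (Rt A B S).card),
      catalan ((Rt A B S).card / 2) * catalan ((Lf A B S).card / 2) = catalan (n + 1) := by
  rw [catalan_succ', Finset.Nat.sum_antidiagonal_eq_sum_range_succ_mk]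
  apply Finset.sum_bij (fun B _ => (Rt A B S).card / 2)
  · intro B hB
    simp at hB
    have := split_card hg h.1 hB.1.2 (Ne.symm hB.1.1)
    simp; omega
  · intro b hb c hc e
    simp at hb hc
    apply rank_inj hg h hb.1.2 hc.1.2 hb.1.1 hc.1.1
    have := hb.2; have := hc.2
    simp only [Nat.even_iff] at *
    omega
  · intro i hi
    simp at hi
    obtain ⟨b, hb, hbA, e⟩ := rank_surj hg h (i := 2 * i) (by omega)
    refine ⟨b, ?_, ?_⟩
    · simp [hb, hbA, e]
    · simp [e]
  · intro B hB
    simp at hB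
    have := split_card hg h.1 hB.1.2 (Ne.symm hB.1.1)
    obtain ⟨⟨-, -⟩, h3⟩ := hB
    simp only
    congr 2
    rw [Nat.even_iff] at h3
    omega

lemma NS_le {S : Finset Pt} {A : Pt} : (NS S A).card ≤ pm S := by
  rw [pm_eq]; exact Finset.card_le_card (Finset.filter_subset _ _)

theorem catalan_le_pm : ∀ (k : ℕ) (S : Finset Pt), S.card = 2 * k → GP S → catalan k ≤ pm S := by
  intro k
  induction k using Nat.strong_induction_on with
  | _ k ih =>
  intro S hc hg
  rcases k with _ | n
  · have : S = ∅ := by simpa using hc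
    subst this
    simpa using pm_empty
  · obtain ⟨A, hA⟩ := exists_ext (S := S) (by rw [← Finset.card_pos]; omega)
    rw [← sum_catalan hg hA hc]
    refine le_trans ?_ ((count hg hA.1).trans NS_le)
    refine le_trans (Finset.sum_le_sum ?_) (Finset.sum_le_sum_of_subset (Finset.filter_subset _ _))
    intro B hB
    simp at hB
    have := split_card hg hA.1 hB.1.2 (Ne.symm hB.1.1)
    obtain ⟨⟨-, -⟩, h3⟩ := hB
    rw [Nat.even_iff] at h3
    exact Nat.mul_le_mul (ih _ (by omega) _ (by omega) (hg.mono (Rt_sub _ _ _)))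
      (ih _ (by omega) _ (by omega) (hg.mono (Lf_sub _ _ _)))

lemma catalan_le_NS {S : Finset Pt} (hg : GP S) {A : Pt} (hA : ExtP S A) {k : ℕ}
    (hc : S.card = 2 * k) : catalan k ≤ (NS S A).card := by
  rcases k with _ | n
  · have : S = ∅ := by simpa using hc
    subst this
    exact absurd hA.1 (by simp)
  · rw [← sum_catalan hg hA hc]
    refine le_trans ?_ (count hg hA.1)
    refine le_trans (Finset.sum_le_sum ?_) (Finset.sum_le_sum_of_subset (Finset.filter_subset _ _))
    intro B hB
    simp at hB
    have := split_card hg hA.1 hB.1.2 (Ne.symm hB.1.1)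
    obtain ⟨⟨-, -⟩, h3⟩ := hB
    rw [Nat.even_iff] at h3
    exact Nat.mul_le_mul (catalan_le_pm _ _ (by omega) (hg.mono (Rt_sub _ _ _)))
      (catalan_le_pm _ _ (by omega) (hg.mono (Lf_sub _ _ _)))

lemma catalan_pos' (n : ℕ) : 0 < catalan n := by
  have h := succ_mul_catalan_eq_centralBinom n
  have := Nat.centralBinom_pos n
  rcases Nat.eq_zero_or_pos (catalan n) with h0 | h0
  · rw [h0] at h; omega
  · exact h0

/-- a matching exists -/
lemma exists_nc {S : Finset Pt} (hg : GP S) (hc : Even S.card) : ∃ M, IsNCMatching S M := by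
  obtain ⟨k, hk⟩ := hc
  have := catalan_le_pm k S (by omega) hg
  have h2 := catalan_pos' k
  rw [pm_eq] at this
  obtain ⟨M, hM⟩ := Finset.card_pos.1 (lt_of_lt_of_le h2 this)
  exact ⟨M, mem_NC.1 hM⟩

/-- piercing gives strictness -/
lemma lt_of_pierce {S : Finset Pt} (hg : GP S) {k : ℕ} (hc : S.card = 2 * k) {A Q C D : Pt}
    (hA : ExtP S A) {M : Finset (Sym2 Pt)} (hM : IsNCMatching S M) (h1 : s(A, Q) ∈ M)
    (h2 : s(C, D) ∈ M) (hC : 0 < sideOf A Q C) (hD : sideOf A Q D < 0) : catalan k < pm S := by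
  refine lt_of_le_of_lt (catalan_le_NS hg hA hc) ?_
  rw [pm_eq]
  apply Finset.card_lt_card
  unfold NS
  rw [Finset.ssubset_iff_of_subset (Finset.filter_subset _ _)]
  refine ⟨M, mem_NC.2 hM, ?_⟩
  rw [Finset.mem_filter]
  rintro ⟨-, B, hB, h⟩
  obtain ⟨e, -, hu⟩ := hM.2.2.1 A hA.1
  have e1 := (hu _ ⟨hB, by simp⟩).trans (hu _ ⟨h1, by simp⟩).symm
  have hBQ : B = Q := by
    simp only [Sym2.eq_iff] at e1
    rcases e1 with ⟨-, h⟩ | ⟨h, h'⟩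
    · exact h
    · exact h'.trans h
  subst hBQ
  have := h _ h2 ?_ C (by simp) D (by simp)
  · nlinarith
  · intro e
    simp only [Sym2.eq_iff] at e
    rcases e with ⟨rfl, rfl⟩ | ⟨rfl, rfl⟩
    · simp [side_self1] at hC
    · simp [side_self2] at hC

/-- strictness by induction from a hull edge -/
lemma lt_of_edge {S : Finset Pt} (hg : GP S) {n : ℕ} (hc : S.card = 2 * (n + 1)) {X Y : Pt}
    (hX : ExtP S X) (hY : Y ∈ S) (hXY : Y ≠ X) (h0 : (Rt X Y S).card = 0)
    (hlt : catalan n < pm ((S.erase X).erase Y)) : catalan (n + 1) < pm S := by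
  have hL : Lf X Y S = (S.erase X).erase Y := by
    have h1 := split_eq hg hX.1 hY hXY.symm
    have h2 := split_card hg hX.1 hY hXY.symm
    rw [Finset.card_eq_zero] at h0
    apply Finset.eq_of_subset_of_card_le
    · intro x hx
      simp only [Lf, Finset.mem_filter] at hx
      simp only [Finset.mem_erase]
      refine ⟨?_, ?_, hx.1⟩
      · rintro rfl; simp [side_self2] at hx
      · rintro rfl; simp [side_self1] at hx
    · rw [Finset.card_erase_of_mem (by simp [hXY, hY]), Finset.card_erase_of_mem hX.1]
      rw [h0] at h2
      simp at h2
      omega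
  rw [← sum_catalan hg hX hc]
  refine lt_of_lt_of_le ?_ ((count hg hX.1).trans NS_le)
  refine lt_of_lt_of_le (Finset.sum_lt_sum ?_ ?_)
    (Finset.sum_le_sum_of_subset (Finset.filter_subset (fun B => Even (Rt X B S).card) _))
  · intro B hB
    simp at hB
    have := split_card hg hX.1 hB.1.2 (Ne.symm hB.1.1)
    obtain ⟨⟨-, -⟩, h3⟩ := hB
    rw [Nat.even_iff] at h3
    exact Nat.mul_le_mul (catalan_le_pm _ _ (by omega) (hg.mono (Rt_sub _ _ _)))
      (catalan_le_pm _ _ (by omega) (hg.mono (Lf_sub _ _ _)))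
  · refine ⟨Y, by simp [hXY, hY, h0], ?_⟩
    have h2 := split_card hg hX.1 hY hXY.symm
    have h3 : (Lf X Y S).card / 2 = n := by omega
    rw [h3, hL, h0]
    rw [Finset.card_eq_zero] at h0
    rw [h0]
    have := pm_empty
    simp only [Nat.zero_div, catalan_zero, one_mul]
    nlinarith


/-! ### Non-extreme points -/

lemma side_comb3 (a b p q r : Pt) (s t w : ℝ) (h : s + t + w = 1) :
    sideOf a b (s • p + t • q + w • r) =
      s * sideOf a b p + t * sideOf a b q + w * sideOf a b r := by
  have : s = 1 - t - w := by linarith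
  subst this
  simp [sideOf]; ring

lemma tri {S : Finset Pt} (hg : GP S) {Q : Pt} (hQ : Q ∈ S) (hn : ¬ ExtP S Q) :
    ∃ u ∈ S, ∃ v ∈ S, ∃ w ∈ S, u ≠ Q ∧ v ≠ Q ∧ w ≠ Q ∧ u ≠ v ∧ u ≠ w ∧ v ≠ w ∧
      ∃ a b c : ℝ, 0 < a ∧ 0 < b ∧ 0 < c ∧ a + b + c = 1 ∧ Q = a • u + b • v + c • w := by
  have hm : Q ∈ convexHull ℝ (↑(S.erase Q) : Set Pt) := by
    by_contra h
    exact hn (ext_of_notMem hQ h)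
  obtain ⟨ι, hι, z, w, hz, hai, hw, hs, hsum⟩ := eq_pos_convex_span_of_mem_convexHull hm
  have hcard : Fintype.card ι ≤ 3 := by
    refine hai.card_le_finrank_succ.trans (Nat.succ_le_succ ((Submodule.finrank_le _).trans ?_))
    simp
  have hz' : ∀ i, z i ∈ S ∧ z i ≠ Q := by
    intro i
    have := hz (Set.mem_range_self i)
    simpa using this
  have e := Fintype.equivFin ι
  rw [← e.symm.sum_comp] at hs hsum
  generalize hn' : Fintype.card ι = n at *
  have hinj : ∀ i j, i ≠ j → z (e.symm i) ≠ z (e.symm j) := by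
    intro i j hij h
    exact hij (e.symm.injective (hai.injective h))
  interval_cases n
  · simp at hs
  · simp at hs hsum
    rw [hs, one_smul] at hsum
    exact absurd hsum (hz' _).2
  · rw [Fin.sum_univ_two] at hs hsum
    exfalso
    have := side_comb (z (e.symm 0)) (z (e.symm 1)) (z (e.symm 0)) (z (e.symm 1)) _ _ hs
    rw [hsum, side_self1, side_self2] at this
    refine hg _ (hz' (e.symm 0)).1 _ (hz' (e.symm 1)).1 Q hQ (hinj 0 1 (by simp))
      (hz' _).2 (hz' _).2 ?_
    simpa using this
  · rw [Fin.sum_univ_three] at hs hsum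
    exact ⟨_, (hz' (e.symm 0)).1, _, (hz' (e.symm 1)).1, _, (hz' (e.symm 2)).1,
      (hz' _).2, (hz' _).2, (hz' _).2, hinj 0 1 (by simp), hinj 0 2 (by simp),
      hinj 1 2 (by simp), _, _, _, hw _, hw _, hw _, hs, hsum.symm⟩

lemma both_sides {S : Finset Pt} (hg : GP S) {Q P : Pt} (hQ : Q ∈ S) (hn : ¬ ExtP S Q)
    (hP : P ∈ S) (hPQ : P ≠ Q) : ∃ x ∈ S, 0 < sideOf Q P x := by
  obtain ⟨u, hu, v, hv, w, hw, huQ, hvQ, hwQ, huv, huw, hvw, a, b, c, ha, hb, hc, hs, he⟩ :=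
    tri hg hQ hn
  by_contra hcon
  push Not at hcon
  have h1 := hcon u hu
  have h2 := hcon v hv
  have h3 := hcon w hw
  have h4 := side_comb3 Q P u v w a b c hs
  rw [← he, side_self1] at h4
  have k1 := mul_nonneg ha.le (neg_nonneg.2 h1)
  have k2 := mul_nonneg hb.le (neg_nonneg.2 h2)
  have k3 := mul_nonneg hc.le (neg_nonneg.2 h3)
  have z1 : a * sideOf Q P u = 0 := by linarith
  have z2 : b * sideOf Q P v = 0 := by linarith
  have e1 : u = P := by
    by_contra h
    exact hg Q hQ P hP u hu hPQ.symm huQ.symm (Ne.symm h) (by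
      rcases mul_eq_zero.1 z1 with h | h
      · linarith
      · exact h)
  have e2 : v = P := by
    by_contra h
    exact hg Q hQ P hP v hv hPQ.symm hvQ.symm (Ne.symm h) (by
      rcases mul_eq_zero.1 z2 with h | h
      · linarith
      · exact h)
  exact huv (e1.trans e2.symm)

lemma both_sides' {S : Finset Pt} (hg : GP S) {Q P : Pt} (hQ : Q ∈ S) (hn : ¬ ExtP S Q)
    (hP : P ∈ S) (hPQ : P ≠ Q) : ∃ x ∈ S, sideOf Q P x < 0 := by
  obtain ⟨u, hu, v, hv, w, hw, huQ, hvQ, hwQ, huv, huw, hvw, a, b, c, ha, hb, hc, hs, he⟩ :=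
    tri hg hQ hn
  by_contra hcon
  push Not at hcon
  have h1 := hcon u hu
  have h2 := hcon v hv
  have h3 := hcon w hw
  have h4 := side_comb3 Q P u v w a b c hs
  rw [← he, side_self1] at h4
  have k1 := mul_nonneg ha.le h1
  have k2 := mul_nonneg hb.le h2
  have k3 := mul_nonneg hc.le h3
  have z1 : a * sideOf Q P u = 0 := by linarith
  have z2 : b * sideOf Q P v = 0 := by linarith
  have e1 : u = P := by
    by_contra h
    exact hg Q hQ P hP u hu hPQ.symm huQ.symm (Ne.symm h) (by
      rcases mul_eq_zero.1 z1 with h | h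
      · linarith
      · exact h)
  have e2 : v = P := by
    by_contra h
    exact hg Q hQ P hP v hv hPQ.symm hvQ.symm (Ne.symm h) (by
      rcases mul_eq_zero.1 z2 with h | h
      · linarith
      · exact h)
  exact huv (e1.trans e2.symm)

lemma tri_interior {u v w Q : Pt} (hpos : 0 < sideOf u v w) {a b c : ℝ} (ha : 0 < a) (hb : 0 < b)
    (hc : 0 < c) (hs : a + b + c = 1) (he : Q = a • u + b • v + c • w) {T : Set Pt}
    (hu : u ∈ T) (hv : v ∈ T) (hw : w ∈ T) : Q ∈ interior (convexHull ℝ T) := by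
  rw [mem_interior]
  have cont : ∀ p q : Pt, Continuous (fun x => sideOf p q x) := by
    intro p q
    unfold sideOf
    fun_prop
  refine ⟨{x | 0 < sideOf u v x} ∩ {x | 0 < sideOf v w x} ∩ {x | 0 < sideOf w u x}, ?_, ?_, ?_⟩
  · rintro x ⟨⟨h1, h2⟩, h3⟩
    simp only [Set.mem_ofPred_eq] at h1 h2 h3
    have hsum : sideOf v w x + sideOf w u x + sideOf u v x = sideOf u v w := by
      unfold sideOf; ring
    have hx : x = (sideOf v w x / sideOf u v w) • u + (sideOf w u x / sideOf u v w) • v +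
        (sideOf u v x / sideOf u v w) • w := by
      have hne := hpos.ne'
      ext
      · simp only [Prod.fst_add, Prod.smul_fst, smul_eq_mul]
        field_simp
        unfold sideOf; ring
      · simp only [Prod.snd_add, Prod.smul_snd, smul_eq_mul]
        field_simp
        unfold sideOf; ring
    rw [hx]
    have hcv := convex_convexHull ℝ T
    have := hcv.sum_mem (t := (Finset.univ : Finset (Fin 3)))
      (w := ![sideOf v w x / sideOf u v w, sideOf w u x / sideOf u v w,
        sideOf u v x / sideOf u v w]) (z := ![u, v, w]) ?_ ?_ ?_
    · simpa [Fin.sum_univ_three] using this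
    · intro i _
      fin_cases i <;> simp <;> positivity
    · simp only [Fin.sum_univ_three]
      simp
      rw [← add_div, ← add_div, hsum, div_self hpos.ne']
    · intro i _
      apply subset_convexHull
      fin_cases i <;> simp [hu, hv, hw]
  · refine IsOpen.inter (IsOpen.inter ?_ ?_) ?_
    · exact isOpen_lt continuous_const (cont u v)
    · exact isOpen_lt continuous_const (cont v w)
    · exact isOpen_lt continuous_const (cont w u)
  · have e1 := side_comb3 u v u v w a b c hs
    have e2 := side_comb3 v w u v w a b c hs
    have e3 := side_comb3 w u u v w a b c hs
    rw [← he] at e1 e2 e3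
    simp only [side_self1, side_self2, mul_zero, zero_add, add_zero] at e1 e2 e3
    rw [← side_rot_s10 u v w] at e2
    rw [side_rot_s10 w u v] at e3
    refine ⟨⟨?_, ?_⟩, ?_⟩
    · simp only [Set.mem_ofPred_eq, e1]; positivity
    · simp only [Set.mem_ofPred_eq, e2]; positivity
    · simp only [Set.mem_ofPred_eq, e3]; positivity

lemma mem_interior_of {S : Finset Pt} (hg : GP S) {Q : Pt} (hQ : Q ∈ S) (hn : ¬ ExtP S Q) :
    Q ∈ interior (convexHull ℝ (S : Set Pt)) := by
  obtain ⟨u, hu, v, hv, w, hw, huQ, hvQ, hwQ, huv, huw, hvw, a, b, c, ha, hb, hc, hs, he⟩ :=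
    tri hg hQ hn
  rcases lt_or_gt_of_ne (hg u hu v hv w hw huv huw hvw) with h | h
  · refine tri_interior (u := u) (v := w) (w := v) (a := a) (b := c) (c := b) ?_ ha hc hb
      (by linarith) ?_ hu hw hv
    · rw [side_swap']; linarith
    · rw [he]; abel
  · exact tri_interior h ha hb hc hs he hu hv hw

lemma notMem_interior_of {S : Finset Pt} {A B : Pt} (h : ExtP S A) (hB : B ∈ S) (hBA : B ≠ A) :
    A ∉ interior (convexHull ℝ (S : Set Pt)) := by
  obtain ⟨hA, u, v, h⟩ := h
  have hB' := h B hB hBA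
  have huv : 0 < u * u + v * v := by
    by_contra hc
    have h1 : u * u = 0 := by nlinarith [mul_self_nonneg u, mul_self_nonneg v]
    have h2 : v * v = 0 := by nlinarith [mul_self_nonneg u, mul_self_nonneg v]
    rw [mul_self_eq_zero.1 h1, mul_self_eq_zero.1 h2] at hB'
    simp at hB'
  have hsub : convexHull ℝ (S : Set Pt) ⊆ {x : Pt | 0 ≤ u * (x.1 - A.1) + v * (x.2 - A.2)} := by
    apply convexHull_min
    · intro x hx
      simp only [Set.mem_ofPred_eq]
      by_cases hxA : x = A
      · simp [hxA]
      · exact (h x (by simpa using hx) hxA).le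
    · intro x hx y hy s t hs ht hst
      simp only [Set.mem_ofPred_eq] at *
      simp only [Prod.fst_add, Prod.smul_fst, Prod.snd_add, Prod.smul_snd, smul_eq_mul]
      have : s = 1 - t := by linarith
      subst this
      nlinarith [mul_nonneg hs hx, mul_nonneg ht hy]
  intro hI
  have hc : Continuous (fun t : ℝ => ((A.1 - t * u, A.2 - t * v) : Pt)) := by fun_prop
  have hev : ∀ᶠ t in nhds (0 : ℝ), ((A.1 - t * u, A.2 - t * v) : Pt) ∈
      interior (convexHull ℝ (S : Set Pt)) := by
    apply hc.continuousAt.eventually_mem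
    apply isOpen_interior.mem_nhds
    simpa using hI
  obtain ⟨t, ht, ht0⟩ := ((hev.filter_mono nhdsWithin_le_nhds).and
    (self_mem_nhdsWithin (s := Set.Ioi (0 : ℝ)))).exists
  have := hsub (interior_subset ht)
  simp only [Set.mem_ofPred_eq] at this
  have ht1 : 0 < t := ht0
  nlinarith [mul_pos ht1 huv]

/-- Odd split at a non-extreme point yields a piercing matching. -/
lemma pierce_odd {S : Finset Pt} (hg : GP S) {k : ℕ} (hc : S.card = 2 * k) {A Q : Pt}
    (hA : ExtP S A) (hQ : Q ∈ S) (hn : ¬ ExtP S Q) (hodd : ¬ Even (Rt A Q S).card) :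
    catalan k < pm S := by
  have hAQ : A ≠ Q := by
    rintro rfl; exact hn hA
  have hsc := split_card hg hA.1 hQ hAQ
  have hoddL : ¬ Even (Lf A Q S).card := by
    rw [Nat.even_iff] at *; omega
  have hRne : (Rt A Q S).Nonempty := by
    rw [Finset.nonempty_iff_ne_empty]; intro h; simp [h] at hodd
  have hLne : (Lf A Q S).Nonempty := by
    rw [Finset.nonempty_iff_ne_empty]; intro h; simp [h] at hoddL
  obtain ⟨⟨C, D⟩, hCD, hmax⟩ := Finset.exists_max_image (Lf A Q S ×ˢ Rt A Q S)
    (fun p => sideOf p.2 p.1 A / (sideOf A Q p.1 - sideOf A Q p.2)) (hLne.product hRne)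
  simp only [Finset.mem_product] at hCD
  obtain ⟨hCL, hDR⟩ := hCD
  have hCL' := Finset.mem_filter.1 hCL
  have hDR' := Finset.mem_filter.1 hDR
  obtain ⟨hC, hC0⟩ := hCL'
  obtain ⟨hD, hD0⟩ := hDR'
  have hLge : ∀ X ∈ Lf A Q S, 0 ≤ sideOf D C X := by
    intro X hX
    have h := hmax (X, D) (Finset.mem_product.2 ⟨hX, hDR⟩)
    simp only at h
    have hX0 := (Finset.mem_filter.1 hX).2
    rw [div_le_div_iff₀ (by linarith) (by linarith)] at h
    have e : sideOf D C A * (sideOf A Q X - sideOf A Q D) -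
        sideOf D X A * (sideOf A Q C - sideOf A Q D) = (- sideOf A Q D) * sideOf D C X := by
      unfold sideOf; ring
    have : 0 ≤ (- sideOf A Q D) * sideOf D C X := by rw [← e]; linarith
    exact nonneg_of_mul_nonneg_right this (by linarith)
  have hRge : ∀ X ∈ Rt A Q S, 0 ≤ sideOf D C X := by
    intro X hX
    have h := hmax (C, X) (Finset.mem_product.2 ⟨hCL, hX⟩)
    simp only at h
    have hX0 := (Finset.mem_filter.1 hX).2
    rw [div_le_div_iff₀ (by linarith) (by linarith)] at h
    have e : sideOf D C A * (sideOf A Q C - sideOf A Q X) -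
        sideOf X C A * (sideOf A Q C - sideOf A Q D) = (sideOf A Q C) * sideOf D C X := by
      unfold sideOf; ring
    have : 0 ≤ (sideOf A Q C) * sideOf D C X := by rw [← e]; linarith
    exact nonneg_of_mul_nonneg_right this (by linarith)
  have hCA : C ≠ A := by rintro rfl; simp [side_self1] at hC0
  have hCQ : C ≠ Q := by rintro rfl; simp [side_self2] at hC0
  have hDA : D ≠ A := by rintro rfl; simp [side_self1] at hD0
  have hDQ : D ≠ Q := by rintro rfl; simp [side_self2] at hD0
  have hDC : D ≠ C := by rintro rfl; linarith
  have hdiff : sideOf D C A = sideOf D C Q + (sideOf A Q C - sideOf A Q D) := by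
    unfold sideOf; ring
  have hspl := split_eq hg hA.1 hQ hAQ
  have hQpos : 0 < sideOf D C Q := by
    by_contra hcon
    have hlt : sideOf D C Q < 0 := lt_of_le_of_ne (not_lt.1 hcon) (hg D hD C hC Q hQ hDC hDQ hCQ)
    apply hn
    refine ⟨hQ, -(C.2 - D.2), C.1 - D.1, ?_⟩
    intro x hx hxQ
    have e : -(C.2 - D.2) * (x.1 - Q.1) + (C.1 - D.1) * (x.2 - Q.2) =
        sideOf D C x - sideOf D C Q := by unfold sideOf; ring
    rw [e]
    rw [← hspl] at hx
    simp only [Finset.mem_union, Finset.mem_insert, Finset.mem_singleton] at hx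
    rcases hx with h | h | rfl | h
    · have := hRge x h; linarith
    · have := hLge x h; linarith
    · linarith
    · exact absurd h hxQ
  have hL' : (insert C ((Lf A Q S).erase C)) = Lf A Q S := Finset.insert_erase hCL
  have hR' : (insert D ((Rt A Q S).erase D)) = Rt A Q S := Finset.insert_erase hDR
  obtain ⟨ML, hML⟩ := exists_nc (S := (Lf A Q S).erase C)
    (hg.mono ((Finset.erase_subset _ _).trans (Lf_sub _ _ _)))
    (by rw [Finset.card_erase_of_mem hCL]; rw [Nat.even_iff] at *; omega)
  obtain ⟨MR, hMR⟩ := exists_nc (S := (Rt A Q S).erase D)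
    (hg.mono ((Finset.erase_subset _ _).trans (Rt_sub _ _ _)))
    (by rw [Finset.card_erase_of_mem hDR]; rw [Nat.even_iff] at *; omega)
  have g1 := glue A Q hML (nc_pair hAQ)
    (fun x hx => (Finset.mem_filter.1 (Finset.mem_of_mem_erase hx)).2)
    (by simp [side_self1, side_self2])
  have g2 := glue Q A hMR g1
    (fun x hx => by
      have := (Finset.mem_filter.1 (Finset.mem_of_mem_erase hx)).2
      rw [side_swap_s10]; linarith)
    (fun x hx => by
      rw [side_swap_s10]
      rcases Finset.mem_union.1 hx with hx | hx
      · have := (Finset.mem_filter.1 (Finset.mem_of_mem_erase hx)).2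
        linarith
      · simp only [Finset.mem_insert, Finset.mem_singleton] at hx
        rcases hx with rfl | rfl
        · simp [side_self1]
        · simp [side_self2])
  have g3 := glue D C g2 (nc_pair hDC.symm)
    (fun x hx => by
      simp only [Finset.mem_union, Finset.mem_insert, Finset.mem_singleton,
        Finset.mem_erase] at hx
      rcases hx with ⟨h1, h⟩ | ⟨h1, h⟩ | rfl | rfl
      · refine lt_of_le_of_ne (hRge x h) (Ne.symm (hg D hD C hC x (Rt_sub _ _ _ h) hDC (Ne.symm h1) ?_))
        rintro rfl
        have := (Finset.mem_filter.1 h).2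
        linarith
      · refine lt_of_le_of_ne (hLge x h) (Ne.symm (hg D hD C hC x (Lf_sub _ _ _ h) hDC ?_ (Ne.symm h1)))
        rintro rfl
        have := (Finset.mem_filter.1 h).2
        linarith
      · linarith
      · exact hQpos)
    (by simp [side_self1, side_self2])
  have hS : ((Rt A Q S).erase D ∪ ((Lf A Q S).erase C ∪ {A, Q})) ∪ {C, D} = S := by
    conv_rhs => rw [← hspl, ← hL', ← hR']
    ext x
    simp only [Finset.mem_union, Finset.mem_insert, Finset.mem_singleton]
    tauto
  rw [hS] at g3
  exact lt_of_pierce hg hc hA g3 (by simp) (C := C) (D := D) (by simp) hC0 hD0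


/-! ### Final case analysis -/

def Par (S : Finset Pt) : Prop :=
  ∀ A, ExtP S A → ∀ Q ∈ S, ¬ ExtP S Q → Even (Rt A Q S).card

lemma rank_bounds {S : Finset Pt} (hg : GP S) {A Q : Pt} (hA : ExtP S A) (hQ : Q ∈ S)
    (hn : ¬ ExtP S Q) : 0 < (Rt A Q S).card ∧ 0 < (Lf A Q S).card := by
  have hAQ : A ≠ Q := by
    rintro rfl; exact hn hA
  obtain ⟨x, hx, h1⟩ := both_sides hg hQ hn hA.1 hAQ
  obtain ⟨y, hy, h2⟩ := both_sides' hg hQ hn hA.1 hAQ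
  rw [side_swap_s10] at h1 h2
  exact ⟨Finset.card_pos.2 ⟨x, Finset.mem_filter.2 ⟨hx, by linarith⟩⟩,
    Finset.card_pos.2 ⟨y, Finset.mem_filter.2 ⟨hy, by linarith⟩⟩⟩

lemma nonext_card {S : Finset Pt} (hg : GP S) {k : ℕ} (hc : S.card = 2 * k)
    (hk : 1 ≤ k) (hp : Par S) : (S.filter (fun Q => ¬ ExtP S Q)).card ≤ k - 2 := by
  obtain ⟨A, hA⟩ := exists_ext (S := S) (by rw [← Finset.card_pos]; omega)
  have : (Finset.Icc 1 (k - 2)).card = k - 2 := by simp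
  rw [← this]
  apply Finset.card_le_card_of_injOn (fun Q => (Rt A Q S).card / 2)
  · intro Q hQ
    simp only [Finset.coe_filter, Set.mem_ofPred_eq] at hQ
    have h1 := rank_bounds hg hA hQ.1 hQ.2
    have h2 := hp A hA Q hQ.1 hQ.2
    have hAQ : A ≠ Q := by
      rintro rfl; exact hQ.2 hA
    have h3 := split_card hg hA.1 hQ.1 hAQ
    rw [Nat.even_iff] at h2
    simp only [Finset.coe_Icc, Set.mem_Icc]
    omega
  · intro Q hQ Q' hQ' he
    simp only [Finset.coe_filter, Set.mem_ofPred_eq] at hQ hQ'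
    have h2 := hp A hA Q hQ.1 hQ.2
    have h2' := hp A hA Q' hQ'.1 hQ'.2
    rw [Nat.even_iff] at h2 h2'
    simp only at he
    apply rank_inj hg hA hQ.1 hQ'.1 _ _ (by omega)
    · rintro rfl; exact hQ.2 hA
    · rintro rfl; exact hQ'.2 hA

lemma Lf_eq_Rt (P Q : Pt) (S : Finset Pt) : Lf Q P S = Rt P Q S := by
  unfold Lf Rt
  apply Finset.filter_congr
  intro x _
  rw [side_swap_s10 P Q]
  constructor <;> intro h <;> linarith

lemma exceptional_of {S : Finset Pt} (hg : GP S) (hc : S.card = 6) (hp : Par S) {Q : Pt}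
    (hQ : Q ∈ S) (hn : ¬ ExtP S Q) : Exceptional S := by
  have hN := nonext_card (k := 3) hg hc (by norm_num) hp
  have hun : ∀ P ∈ S, P ≠ Q → ExtP S P := by
    intro P hP hPQ
    by_contra h
    exact hPQ (Finset.card_le_one.1 hN P (by simp [hP, h]) Q (by simp [hQ, hn]))
  refine ⟨Q, hQ, ?_, ?_⟩
  · ext x
    simp only [Set.mem_inter_iff, Finset.mem_coe, Set.mem_singleton_iff]
    constructor
    · rintro ⟨hx, hi⟩
      by_contra hxQ
      exact notMem_interior_of (hun x hx hxQ) hQ (Ne.symm hxQ) hi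
    · rintro rfl
      exact ⟨hQ, mem_interior_of hg hQ hn⟩
  · intro P hP hPQ
    have h1 := rank_bounds hg (hun P hP hPQ) hQ hn
    have h2 := hp P (hun P hP hPQ) Q hQ hn
    have h3 := split_card hg hP hQ hPQ
    rw [Nat.even_iff] at h2
    have e1 : S.filter (fun X => 0 < sideOf Q P X) = Rt P Q S := Lf_eq_Rt P Q S
    have e2 : S.filter (fun X => sideOf Q P X < 0) = Lf P Q S := (Lf_eq_Rt Q P S).symm
    rw [e1, e2]
    omega

lemma not_one {S : Finset Pt} (hg : GP S) (hc : S.card = 8) (hp : Par S) {Q : Pt}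
    (hQ : Q ∈ S) (hn : ¬ ExtP S Q) (hun : ∀ P ∈ S, P ≠ Q → ExtP S P) : False := by
  have hT : (S.erase Q).card = 7 := by rw [Finset.card_erase_of_mem hQ]; omega
  have key := Finset.sum_card_bipartiteAbove_eq_sum_card_bipartiteBelow
    (s := S.erase Q) (t := S.erase Q) (fun P R => 0 < sideOf Q P R)
  have e1 : ∀ P ∈ S.erase Q,
      ((S.erase Q).bipartiteAbove (fun P R => 0 < sideOf Q P R) P) = Lf Q P S := by
    intro P hP
    ext x
    simp only [Finset.bipartiteAbove, Lf, Finset.mem_filter, Finset.mem_erase]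
    constructor
    · tauto
    · rintro ⟨h1, h2⟩
      refine ⟨⟨?_, h1⟩, h2⟩
      rintro rfl; simp [side_self1] at h2
  have e2 : ∀ P ∈ S.erase Q,
      ((S.erase Q).bipartiteBelow (fun P R => 0 < sideOf Q P R) P) = Rt Q P S := by
    intro P hP
    ext x
    simp only [Finset.bipartiteBelow, Rt, Finset.mem_filter, Finset.mem_erase]
    rw [side_swap' Q P x]
    constructor
    · rintro ⟨⟨h0, h1⟩, h2⟩
      exact ⟨h1, by linarith⟩
    · rintro ⟨h1, h2⟩
      refine ⟨⟨?_, h1⟩, by linarith⟩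
      rintro rfl; simp [side_self1] at h2
  rw [Finset.sum_congr rfl (fun P hP => congrArg Finset.card (e1 P hP)),
    Finset.sum_congr rfl (fun P hP => congrArg Finset.card (e2 P hP))] at key
  have hsum : ∑ P ∈ S.erase Q, ((Rt Q P S).card + (Lf Q P S).card) = ∑ P ∈ S.erase Q, 6 := by
    apply Finset.sum_congr rfl
    intro P hP
    simp at hP
    have := split_card hg hQ hP.2 (Ne.symm hP.1)
    omega
  rw [Finset.sum_add_distrib, Finset.sum_const, hT] at hsum
  have hev : Even (∑ P ∈ S.erase Q, (Lf Q P S).card) := by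
    apply Finset.even_sum
    intro P hP
    simp at hP
    rw [Lf_eq_Rt]
    exact hp P (hun P hP.2 hP.1) Q hQ hn
  rw [Nat.even_iff] at hev
  simp at hsum
  omega

structure Hex (S : Finset Pt) (v0 v1 v2 v3 v4 v5 q r : Pt) : Prop where
  S_eq : S = {v0, v1, v2, v3, v4, v5, q, r}
  nd : [v0, v1, v2, v3, v4, v5, q, r].Nodup
  ext : ∀ x ∈ [v0, v1, v2, v3, v4, v5], ExtP S x
  nq : ¬ ExtP S q
  nr : ¬ ExtP S r
  e01 : ∀ x ∈ S, x ≠ v0 → x ≠ v1 → 0 < sideOf v0 v1 x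
  e12 : ∀ x ∈ S, x ≠ v1 → x ≠ v2 → 0 < sideOf v1 v2 x
  e23 : ∀ x ∈ S, x ≠ v2 → x ≠ v3 → 0 < sideOf v2 v3 x
  e34 : ∀ x ∈ S, x ≠ v3 → x ≠ v4 → 0 < sideOf v3 v4 x
  e45 : ∀ x ∈ S, x ≠ v4 → x ≠ v5 → 0 < sideOf v4 v5 x
  e50 : ∀ x ∈ S, x ≠ v5 → x ≠ v0 → 0 < sideOf v5 v0 x
  t024 : 0 < sideOf v0 v2 v4
  t135 : 0 < sideOf v1 v3 v5

lemma Hex.rot {S : Finset Pt} {v0 v1 v2 v3 v4 v5 q r : Pt} (h : Hex S v0 v1 v2 v3 v4 v5 q r) :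
    Hex S v1 v2 v3 v4 v5 v0 q r where
  S_eq := by
    rw [h.S_eq]; ext x; simp only [Finset.mem_insert, Finset.mem_singleton]; tauto
  nd := by
    have := h.nd
    simp only [List.nodup_cons, List.mem_cons, not_or, List.not_mem_nil] at *
    grind
  ext := by
    intro x hx
    apply h.ext
    simp only [List.mem_cons] at *
    tauto
  nq := h.nq
  nr := h.nr
  e01 := h.e12
  e12 := h.e23
  e23 := h.e34
  e34 := h.e45
  e45 := h.e50
  e50 := h.e01
  t024 := h.t135
  t135 := by rw [← side_rot_s10]; exact h.t024

lemma Hex.swap {S : Finset Pt} {v0 v1 v2 v3 v4 v5 q r : Pt} (h : Hex S v0 v1 v2 v3 v4 v5 q r) :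
    Hex S v0 v1 v2 v3 v4 v5 r q where
  S_eq := by
    rw [h.S_eq]; ext x; simp only [Finset.mem_insert, Finset.mem_singleton]; tauto
  nd := by
    have := h.nd
    simp only [List.nodup_cons, List.mem_cons, not_or, List.not_mem_nil] at *
    grind
  ext := h.ext
  nq := h.nr
  nr := h.nq
  e01 := h.e01
  e12 := h.e12
  e23 := h.e23
  e34 := h.e34
  e45 := h.e45
  e50 := h.e50
  t024 := h.t024
  t135 := h.t135

lemma card_filter8 {v0 v1 v2 v3 v4 v5 q r : Pt} (nd : [v0, v1, v2, v3, v4, v5, q, r].Nodup)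
    (p : Pt → Prop) :
    (Finset.filter p {v0, v1, v2, v3, v4, v5, q, r}).card =
      (if p v0 then 1 else 0) + (if p v1 then 1 else 0) + (if p v2 then 1 else 0) +
      (if p v3 then 1 else 0) + (if p v4 then 1 else 0) + (if p v5 then 1 else 0) +
      (if p q then 1 else 0) + (if p r then 1 else 0) := by
  simp only [List.nodup_cons, List.mem_cons, not_or, List.not_mem_nil] at nd
  obtain ⟨⟨a1, a2, a3, a4, a5, a6, a7, -⟩, ⟨b2, b3, b4, b5, b6, b7, -⟩, ⟨c3, c4, c5, c6, c7, -⟩,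
    ⟨d4, d5, d6, d7, -⟩, ⟨f5, f6, f7, -⟩, ⟨g6, g7, -⟩, ⟨i7, -⟩, -⟩ := nd
  rw [Finset.card_filter]
  rw [Finset.sum_insert, Finset.sum_insert, Finset.sum_insert, Finset.sum_insert,
    Finset.sum_insert, Finset.sum_insert, Finset.sum_insert, Finset.sum_singleton]
  · ring
  all_goals simp only [Finset.mem_insert, Finset.mem_singleton, not_or]
  all_goals tauto

lemma hex_sector_aux {S : Finset Pt} (hg : GP S) (hp : Par S) {v0 v1 v2 v3 v4 v5 q r : Pt}
    (h : Hex S v0 v1 v2 v3 v4 v5 q r) (hqr : 0 < sideOf v0 r q) :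
    sideOf v0 v4 q < 0 ∧ sideOf v0 v4 r < 0 ∧ 0 < sideOf v0 v3 q ∧ sideOf v0 v3 r < 0 := by
  have nd := h.nd
  have S_eq := h.S_eq
  simp only [List.nodup_cons, List.mem_cons, not_or, List.not_mem_nil] at nd
  obtain ⟨⟨a1, a2, a3, a4, a5, a6, a7, -⟩, ⟨b2, b3, b4, b5, b6, b7, -⟩, ⟨c3, c4, c5, c6, c7, -⟩,
    ⟨d4, d5, d6, d7, -⟩, ⟨f5, f6, f7, -⟩, ⟨g6, g7, -⟩, ⟨i7, -⟩, -⟩ := nd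
  have m0 : v0 ∈ S := by rw [S_eq]; simp
  have m1 : v1 ∈ S := by rw [S_eq]; simp
  have m2 : v2 ∈ S := by rw [S_eq]; simp
  have m3 : v3 ∈ S := by rw [S_eq]; simp
  have m4 : v4 ∈ S := by rw [S_eq]; simp
  have m5 : v5 ∈ S := by rw [S_eq]; simp
  have m6 : q ∈ S := by rw [S_eq]; simp
  have m7 : r ∈ S := by rw [S_eq]; simp
  have hx0 : ExtP S v0 := h.ext v0 (by simp)
  have p1 := hp v0 hx0 q m6 h.nq
  have p2 := hp v0 hx0 r m7 h.nr
  have E : ∀ x y : Pt, sideOf v0 x y < 0 ↔ 0 < sideOf v0 y x := by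
    intro x y
    rw [side_swap' v0 y x]
    constructor <;> intro h <;> linarith
  have Z : ∀ x : Pt, ¬ (0 < sideOf v0 x x) := by intro x; simp [side_self2]
  have Z0 : ∀ x : Pt, ¬ (0 < sideOf v0 v0 x) := by intro x; simp [sideOf]
  unfold Rt at p1 p2
  simp only [E] at p1 p2 ⊢
  have w1q : 0 < sideOf v0 v1 q := h.e01 q m6 (Ne.symm a6) (Ne.symm b6)
  have w1r : 0 < sideOf v0 v1 r := h.e01 r m7 (Ne.symm a7) (Ne.symm b7)
  have w5q : ¬ 0 < sideOf v0 v5 q := by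
    have := h.e50 q m6 (Ne.symm g6) (Ne.symm a6)
    rw [side_swap_s10] at this; linarith
  have w5r : ¬ 0 < sideOf v0 v5 r := by
    have := h.e50 r m7 (Ne.symm g7) (Ne.symm a7)
    rw [side_swap_s10] at this; linarith
  have hrq : ¬ 0 < sideOf v0 q r := by rw [side_swap']; linarith
  have o23 : 0 < sideOf v0 v2 v3 := by rw [side_rot_s10]; exact h.e23 v0 m0 a2 a3
  have o34 : 0 < sideOf v0 v3 v4 := by rw [side_rot_s10]; exact h.e34 v0 m0 a3 a4
  have M1q := ext_trans hx0 m2 m3 m6 (Ne.symm a2) (Ne.symm a3) (Ne.symm a6) o23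
  have M1r := ext_trans hx0 m2 m3 m7 (Ne.symm a2) (Ne.symm a3) (Ne.symm a7) o23
  have M2q := ext_trans hx0 m3 m4 m6 (Ne.symm a3) (Ne.symm a4) (Ne.symm a6) o34
  have M2r := ext_trans hx0 m3 m4 m7 (Ne.symm a3) (Ne.symm a4) (Ne.symm a7) o34
  have N2 := fun t => ext_trans hx0 m2 m7 m6 (Ne.symm a2) (Ne.symm a7) (Ne.symm a6) t hqr
  have N3 := fun t => ext_trans hx0 m3 m7 m6 (Ne.symm a3) (Ne.symm a7) (Ne.symm a6) t hqr
  have N4 := fun t => ext_trans hx0 m4 m7 m6 (Ne.symm a4) (Ne.symm a7) (Ne.symm a6) t hqr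
  have G : ∀ x ∈ S, ∀ y ∈ S, v0 ≠ x → v0 ≠ y → x ≠ y → ¬ 0 < sideOf v0 x y →
      0 < sideOf v0 y x := by
    intro x hx y hy h1 h2 h3 h4
    have := hg v0 m0 x hx y hy h1 h2 h3
    rw [← E]
    exact lt_of_le_of_ne (not_lt.1 h4) this
  have G4q := G v4 m4 q m6 a4 a6 f6
  have G4r := G v4 m4 r m7 a4 a7 f7
  have G3r := G v3 m3 r m7 a3 a7 d7
  have cf1 := card_filter8 h.nd (fun x => 0 < sideOf v0 x q)
  have cf2 := card_filter8 h.nd (fun x => 0 < sideOf v0 x r)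
  rw [← S_eq] at cf1 cf2
  rw [cf1] at p1
  rw [cf2] at p2
  simp only [if_neg (Z _), if_neg (Z0 _), if_pos w1q, if_pos w1r, if_neg w5q, if_neg w5r,
    if_pos hqr, if_neg hrq] at p1 p2
  clear cf1 cf2 E Z Z0 G
  by_cases x2 : 0 < sideOf v0 v2 q <;> by_cases x3 : 0 < sideOf v0 v3 q <;>
  by_cases x4 : 0 < sideOf v0 v4 q <;> by_cases y2 : 0 < sideOf v0 v2 r <;>
  by_cases y3 : 0 < sideOf v0 v3 r <;> by_cases y4 : 0 < sideOf v0 v4 r <;>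
  simp only [if_pos, if_neg, x2, x3, x4, y2, y3, y4, if_true, if_false] at p1 p2 <;>
  first
    | exact absurd (M1q x3) x2
    | exact absurd (M2q x4) x3
    | exact absurd (M1r y3) y2
    | exact absurd (M2r y4) y3
    | exact absurd (N2 y2) x2
    | exact absurd (N3 y3) x3
    | exact absurd (N4 y4) x4
    | exact absurd p1 (by decide)
    | exact absurd p2 (by decide)
    | exact ⟨G4q x4, G4r y4, x3, G3r y3⟩

lemma hexM {S : Finset Pt} (hg : GP S) {v0 v1 v2 v3 v4 v5 q r : Pt}
    (h : Hex S v0 v1 v2 v3 v4 v5 q r) (h1 : 0 < sideOf v0 v3 q) (h2 : sideOf v0 v4 q < 0)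
    (h3 : 0 < sideOf v2 v5 q) (h4 : sideOf v2 v5 r < 0) : catalan 4 < pm S := by
  have nd := h.nd
  have S_eq := h.S_eq
  have hc : S.card = 2 * 4 := by
    rw [S_eq]
    have := card_filter8 nd (fun _ => True)
    simpa using this
  simp only [List.nodup_cons, List.mem_cons, not_or, List.not_mem_nil] at nd
  obtain ⟨⟨a1, a2, a3, a4, a5, a6, a7, -⟩, ⟨b2, b3, b4, b5, b6, b7, -⟩, ⟨c3, c4, c5, c6, c7, -⟩,
    ⟨d4, d5, d6, d7, -⟩, ⟨f5, f6, f7, -⟩, ⟨g6, g7, -⟩, ⟨i7, -⟩, -⟩ := nd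
  have m0 : v0 ∈ S := by rw [S_eq]; simp
  have m1 : v1 ∈ S := by rw [S_eq]; simp
  have m2 : v2 ∈ S := by rw [S_eq]; simp
  have m3 : v3 ∈ S := by rw [S_eq]; simp
  have m4 : v4 ∈ S := by rw [S_eq]; simp
  have m5 : v5 ∈ S := by rw [S_eq]; simp
  have m6 : q ∈ S := by rw [S_eq]; simp
  have m7 : r ∈ S := by rw [S_eq]; simp
  have k0 : 0 < sideOf v2 v5 v0 := by
    rw [side_rot_s10]
    exact h.e50 v2 m2 c5 (Ne.symm a2)
  have g1 := glue v2 v5 (nc_pair a6) (nc_pair g7)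
    (by simp [k0, h3]) (by simp [side_self2, h4.le])
  have g2 := glue v1 v2 g1 (nc_pair b2) (by
    intro x hx
    simp only [Finset.mem_union, Finset.mem_insert, Finset.mem_singleton] at hx
    rcases hx with (rfl | rfl) | (rfl | rfl)
    · exact h.e12 _ m0 a1 a2
    · exact h.e12 _ m6 (Ne.symm b6) (Ne.symm c6)
    · exact h.e12 _ m5 (Ne.symm b5) (Ne.symm c5)
    · exact h.e12 _ m7 (Ne.symm b7) (Ne.symm c7)) (by simp [side_self1, side_self2])
  have g3 := glue v3 v4 g2 (nc_pair d4) (by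
    intro x hx
    simp only [Finset.mem_union, Finset.mem_insert, Finset.mem_singleton] at hx
    rcases hx with ((rfl | rfl) | (rfl | rfl)) | (rfl | rfl)
    · exact h.e34 _ m0 a3 a4
    · exact h.e34 _ m6 (Ne.symm d6) (Ne.symm f6)
    · exact h.e34 _ m5 (Ne.symm d5) (Ne.symm f5)
    · exact h.e34 _ m7 (Ne.symm d7) (Ne.symm f7)
    · exact h.e34 _ m1 b3 b4
    · exact h.e34 _ m2 c3 c4) (by simp [side_self1, side_self2])
  have hS : (({v0, q} ∪ {v5, r}) ∪ {v1, v2}) ∪ {v3, v4} = S := by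
    rw [S_eq]; ext x
    simp only [Finset.mem_union, Finset.mem_insert, Finset.mem_singleton]; tauto
  rw [hS] at g3
  refine lt_of_pierce hg hc (A := v0) (Q := q) (C := v4) (D := v3) (h.ext v0 (by simp)) g3
    (by simp) (by simp [Sym2.eq_swap]) ?_ ?_
  · rw [side_swap']; linarith
  · rw [side_swap']; linarith

lemma hex_sector {S : Finset Pt} (hg : GP S) (hp : Par S) {v0 v1 v2 v3 v4 v5 q r : Pt}
    (h : Hex S v0 v1 v2 v3 v4 v5 q r) :
    sideOf v0 v4 q < 0 ∧ sideOf v0 v4 r < 0 ∧ ((0 < sideOf v0 v3 q ∧ sideOf v0 v3 r < 0) ∨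
      (sideOf v0 v3 q < 0 ∧ 0 < sideOf v0 v3 r)) := by
  have nd := h.nd
  simp only [List.nodup_cons, List.mem_cons, not_or, List.not_mem_nil] at nd
  have hne := hg v0 (by rw [h.S_eq]; simp) r (by rw [h.S_eq]; simp) q (by rw [h.S_eq]; simp)
    (by tauto) (by tauto) (by grind)
  rcases lt_or_gt_of_ne hne with h0 | h0
  · have := hex_sector_aux hg hp h.swap (by rw [side_swap']; linarith)
    tauto
  · have := hex_sector_aux hg hp h h0
    tauto

lemma hex_main {S : Finset Pt} (hg : GP S) (hp : Par S) {v0 v1 v2 v3 v4 v5 q r : Pt}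
    (h : Hex S v0 v1 v2 v3 v4 v5 q r) : catalan 4 < pm S := by
  wlog hq : 0 < sideOf v0 v3 q ∧ sideOf v0 v3 r < 0 generalizing q r
  · apply this h.swap
    have := (hex_sector hg hp h).2.2
    tauto
  have s0 := hex_sector hg hp h
  have s1 := hex_sector hg hp h.rot
  have s2 := hex_sector hg hp h.rot.rot
  have s4 := hex_sector hg hp h.rot.rot.rot.rot
  have s5 := hex_sector hg hp h.rot.rot.rot.rot.rot
  rcases s2.2.2 with ⟨i1, i2⟩ | ⟨i1, i2⟩
  · exact hexM hg h hq.1 s0.1 i1 i2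
  rcases s1.2.2 with ⟨j1, j2⟩ | ⟨j1, j2⟩
  · exact hexM hg h.rot.rot.rot.rot.rot (by rw [side_swap_s10]; linarith) s5.1 j1 j2
  · exact hexM hg h.rot.rot.rot.rot (by rw [side_swap_s10]; linarith) s4.1 hq.1 hq.2

lemma conv3 {S : Finset Pt} {A a b c : Pt} (hb : ExtP S b) (hA : A ∈ S) (ha : a ∈ S) (hc : c ∈ S)
    (h1 : 0 < sideOf A a b) (h2 : 0 < sideOf A b c) : 0 < sideOf a b c := by
  obtain ⟨-, u, v, h⟩ := hb
  have hAb : A ≠ b := by rintro rfl; simp [side_self1] at h1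
  have hab : a ≠ b := by rintro rfl; simp [side_self2] at h1
  have hcb : c ≠ b := by rintro rfl; simp [side_self2] at h2
  have k1 := h A hA hAb
  have k2 := h a ha hab
  have k3 := h c hc hcb
  have e : sideOf a b c * (u * (A.1 - b.1) + v * (A.2 - b.2)) =
      sideOf A b c * (u * (a.1 - b.1) + v * (a.2 - b.2)) +
      sideOf A a b * (u * (c.1 - b.1) + v * (c.2 - b.2)) := by
    unfold sideOf; ring
  have : 0 < sideOf a b c * (u * (A.1 - b.1) + v * (A.2 - b.2)) := by rw [e]; positivity
  exact pos_of_mul_pos_left this k1.le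


lemma two_case {S : Finset Pt} (hg : GP S) (hc : S.card = 8) (hp : Par S)
    (hN : (S.filter (fun Q => ¬ ExtP S Q)).card = 2) : catalan 4 < pm S := by
  obtain ⟨A, hA⟩ := exists_ext (S := S) (by rw [← Finset.card_pos]; omega)
  have hs : ∀ i : Fin 7, ∃ b ∈ S, b ≠ A ∧ (Rt A b S).card = i := fun i =>
    rank_surj hg hA (by omega)
  choose p hpS hpA hpr using hs
  have hord : ∀ i j : Fin 7, i < j → 0 < sideOf A (p i) (p j) := by
    intro i j hij
    have hne : p i ≠ p j := by
      intro h
      have := hpr i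
      rw [h, hpr j] at this
      omega
    rcases lt_or_gt_of_ne (hg A hA.1 _ (hpS i) _ (hpS j) (hpA i).symm (hpA j).symm hne) with h | h
    · have := rank_lt hA (hpS j) (hpS i) (hpA j) (hpA i) (by rw [side_swap']; linarith)
      rw [hpr, hpr] at this
      omega
    · exact h
  have hinj : ∀ i j : Fin 7, i ≠ j → p i ≠ p j := by
    intro i j hij h
    have := hpr i
    rw [h, hpr j] at this
    omega
  have hall : ∀ x ∈ S, x ≠ A → ∃ i, x = p i := by
    intro x hx hxA
    have h1 := split_card hg hA.1 hx hxA.symm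
    refine ⟨⟨(Rt A x S).card, by omega⟩, ?_⟩
    apply rank_inj hg hA hx (hpS _) hxA (hpA _)
    rw [hpr]
  have hnon : ∀ i, ¬ ExtP S (p i) → i = 2 ∨ i = 4 := by
    intro i hi
    have h1 := hp A hA (p i) (hpS i) hi
    have h2 := rank_bounds hg hA (hpS i) hi
    have h3 := split_card hg hA.1 (hpS i) (hpA i).symm
    rw [Nat.even_iff] at h1
    rw [hpr] at h1 h2 h3
    omega
  have hsub : S.filter (fun Q => ¬ ExtP S Q) ⊆ {p 2, p 4} := by
    intro x hx
    simp only [Finset.mem_filter] at hx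
    obtain ⟨i, rfl⟩ := hall x hx.1 (by rintro rfl; exact hx.2 hA)
    rcases hnon i hx.2 with rfl | rfl <;> simp
  have heq := Finset.eq_of_subset_of_card_le hsub (by
    rw [hN]; exact Finset.card_le_two)
  have n2 : ¬ ExtP S (p 2) := by
    have : p 2 ∈ S.filter (fun Q => ¬ ExtP S Q) := by rw [heq]; simp
    exact (Finset.mem_filter.1 this).2
  have n4 : ¬ ExtP S (p 4) := by
    have : p 4 ∈ S.filter (fun Q => ¬ ExtP S Q) := by rw [heq]; simp
    exact (Finset.mem_filter.1 this).2
  have hext : ∀ i, i ≠ 2 → i ≠ 4 → ExtP S (p i) := by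
    intro i h1 h2
    by_contra h
    rcases hnon i h with h | h
    · exact h1 h
    · exact h2 h
  have tr : ∀ i j l : Fin 7, i < j → j < l → j ≠ 2 → j ≠ 4 → 0 < sideOf (p i) (p j) (p l) :=
    fun i j l h1 h2 h3 h4 => conv3 (hext j h3 h4) hA.1 (hpS i) (hpS l) (hord i j h1) (hord j l h2)
  -- a chord having all other points but one on its left has that one on its left as well
  have chord : ∀ a ∈ S, ∀ b ∈ S, ∀ c ∈ S, a ≠ b → ¬ ExtP S c → c ≠ a → c ≠ b →
      (∀ x ∈ S, x ≠ a → x ≠ b → x ≠ c → 0 < sideOf a b x) →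
      ∀ x ∈ S, x ≠ a → x ≠ b → 0 < sideOf a b x := by
    intro a ha b hb c hc hab hnc hca hcb hx
    have hcpos : 0 < sideOf a b c := by
      by_contra hcon
      have hlt := lt_of_le_of_ne (not_lt.1 hcon) (hg a ha b hb c hc hab hca.symm hcb.symm)
      apply hnc
      refine ⟨hc, -(b.2 - a.2), b.1 - a.1, ?_⟩
      intro y hy hyc
      have e : -(b.2 - a.2) * (y.1 - c.1) + (b.1 - a.1) * (y.2 - c.2) =
        sideOf a b y - sideOf a b c := by unfold sideOf; ring
      rw [e]
      by_cases hya : y = a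
      · rw [hya, side_self1]; linarith
      by_cases hyb : y = b
      · rw [hyb, side_self2]; linarith
      have := hx y hy hya hyb hyc
      linarith
    intro x hxS h1 h2
    by_cases h3 : x = c
    · rw [h3]; exact hcpos
    · exact hx x hxS h1 h2 h3
  have hfin : ∀ P : Pt → Prop, (P A) → (P (p 0)) → (P (p 1)) → (P (p 2)) → (P (p 3)) → (P (p 4)) →
      (P (p 5)) → (P (p 6)) → ∀ x ∈ S, P x := by
    intro P hA h0 h1 h2 h3 h4 h5 h6 x hx
    by_cases hxA : x = A
    · rw [hxA]; exact hA
    · obtain ⟨i, rfl⟩ := hall x hx hxA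
      fin_cases i <;> assumption
  have rA : ∀ i j : Fin 7, i < j → 0 < sideOf (p i) (p j) A := by
    intro i j h
    rw [← side_rot_s10]; exact hord i j h
  have H : Hex S A (p 0) (p 1) (p 3) (p 5) (p 6) (p 2) (p 4) := by
    refine ⟨?_, ?_, ?_, n2, n4, ?_, ?_, ?_, ?_, ?_, ?_, hord 1 5 (by decide),
      tr 0 3 6 (by decide) (by decide) (by decide) (by decide)⟩
    · apply Finset.Subset.antisymm
      · exact hfin _ (by simp) (by simp) (by simp) (by simp) (by simp) (by simp) (by simp) (by simp)
      · intro x hx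
        simp only [Finset.mem_insert, Finset.mem_singleton] at hx
        rcases hx with rfl | rfl | rfl | rfl | rfl | rfl | rfl | rfl
        · exact hA.1
        all_goals exact hpS _
    · have hA' : ∀ i, A ≠ p i := fun i => (hpA i).symm
      have hd : ∀ i j : Fin 7, i ≠ j → p i ≠ p j := hinj
      simp only [List.nodup_cons, List.mem_cons, not_or, List.not_mem_nil, not_false_eq_true,
        List.nodup_nil, and_true]
      refine ⟨⟨hA' _, hA' _, hA' _, hA' _, hA' _, hA' _, hA' _⟩, ⟨?_, ?_, ?_, ?_, ?_, ?_⟩,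
        ⟨?_, ?_, ?_, ?_, ?_⟩, ⟨?_, ?_, ?_, ?_⟩, ⟨?_, ?_, ?_⟩, ⟨?_, ?_⟩, ?_⟩
      all_goals exact hd _ _ (by decide)
    · intro x hx
      simp only [List.mem_cons, List.not_mem_nil, or_false] at hx
      rcases hx with rfl | rfl | rfl | rfl | rfl | rfl
      · exact hA
      all_goals exact hext _ (by decide) (by decide)
    · refine hfin _ ?_ ?_ ?_ ?_ ?_ ?_ ?_ ?_
      · simp
      · simp
      all_goals intro _ _; exact hord _ _ (by decide)
    · refine hfin _ ?_ ?_ ?_ ?_ ?_ ?_ ?_ ?_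
      · intro _ _; exact rA _ _ (by decide)
      · simp
      · simp
      all_goals intro _ _; exact tr _ _ _ (by decide) (by decide) (by decide) (by decide)
    · apply chord _ (hpS _) _ (hpS _) (p 2) (hpS _) (hinj _ _ (by decide)) n2
        (hinj _ _ (by decide)) (hinj _ _ (by decide))
      refine hfin _ ?_ ?_ ?_ ?_ ?_ ?_ ?_ ?_
      · intro _ _ _; exact rA _ _ (by decide)
      · intro _ _ _; rw [← side_rot_s10]; exact tr _ _ _ (by decide) (by decide) (by decide) (by decide)
      · simp
      · simp
      · simp
      all_goals intro _ _ _; exact tr _ _ _ (by decide) (by decide) (by decide) (by decide)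
    · apply chord _ (hpS _) _ (hpS _) (p 4) (hpS _) (hinj _ _ (by decide)) n4
        (hinj _ _ (by decide)) (hinj _ _ (by decide))
      refine hfin _ ?_ ?_ ?_ ?_ ?_ ?_ ?_ ?_
      · intro _ _ _; exact rA _ _ (by decide)
      · intro _ _ _; rw [← side_rot_s10]; exact tr _ _ _ (by decide) (by decide) (by decide) (by decide)
      · intro _ _ _; rw [← side_rot_s10]; exact tr _ _ _ (by decide) (by decide) (by decide) (by decide)
      · intro _ _ _; rw [← side_rot_s10]; exact tr _ _ _ (by decide) (by decide) (by decide) (by decide)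
      · simp
      · simp
      · simp
      all_goals intro _ _ _; exact tr _ _ _ (by decide) (by decide) (by decide) (by decide)
    · refine hfin _ ?_ ?_ ?_ ?_ ?_ ?_ ?_ ?_
      · intro _ _; exact rA _ _ (by decide)
      · intro _ _; rw [← side_rot_s10]; exact tr _ _ _ (by decide) (by decide) (by decide) (by decide)
      · intro _ _; rw [← side_rot_s10]; exact tr _ _ _ (by decide) (by decide) (by decide) (by decide)
      · intro _ _; rw [← side_rot_s10]; exact tr _ _ _ (by decide) (by decide) (by decide) (by decide)
      · intro _ _; rw [← side_rot_s10]; exact tr _ _ _ (by decide) (by decide) (by decide) (by decide)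
      · intro _ _; rw [← side_rot_s10]; exact tr _ _ _ (by decide) (by decide) (by decide) (by decide)
      · simp
      · simp
    · refine hfin _ ?_ ?_ ?_ ?_ ?_ ?_ ?_ ?_
      · simp
      all_goals try simp; done
      all_goals intro _ _; rw [side_rot_s10]; exact hord _ _ (by decide)
  exact hex_main hg hp H

lemma exists_edge {S : Finset Pt} (hg : GP S) (hc2 : 2 ≤ S.card) (T : Finset Pt) (hT : T.card ≤ 3)
    (hE : 7 ≤ (S.filter (fun X => ExtP S X)).card) :
    ∃ X Y, ExtP S X ∧ Y ∈ S ∧ Y ≠ X ∧ (Rt X Y S).card = 0 ∧ X ∉ T ∧ Y ∉ T := by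
  have hs : ∀ X, ExtP S X → ∃ Y ∈ S, Y ≠ X ∧ (Rt X Y S).card = 0 := fun X hX =>
    rank_surj hg hX (by omega)
  choose! f hfS hfX hf0 using hs
  by_contra hcon
  push Not at hcon
  have hle : ((S.filter (fun X => ExtP S X)) \ T).card ≤ T.card := by
    apply Finset.card_le_card_of_injOn f
    · intro X hX
      simp only [Finset.coe_sdiff, Finset.coe_filter, Set.mem_sdiff, Set.mem_ofPred_eq,
        Finset.mem_coe] at hX
      exact hcon X (f X) hX.1.2 (hfS X hX.1.2) (hfX X hX.1.2) (hf0 X hX.1.2) hX.2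
    · intro X hX X' hX' he
      simp only [Finset.coe_sdiff, Finset.coe_filter, Set.mem_sdiff, Set.mem_ofPred_eq,
        Finset.mem_coe] at hX hX'
      by_contra hne
      have hx := hX.1.2
      have hx' := hX'.1.2
      have key : ∀ U V, ExtP S U → V ∈ S → ¬ (sideOf U (f U) V < 0) := by
        intro U V hU hV h
        have := hf0 U hU
        rw [Finset.card_eq_zero] at this
        have hm : V ∈ Rt U (f U) S := Finset.mem_filter.2 ⟨hV, h⟩
        rw [this] at hm
        simp at hm
      have k1 := key X X' hx hx'.1
      have k2 := key X' X hx' hx.1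
      rw [← he, side_rot_s10, side_swap_s10] at k2
      exact hg X hx.1 (f X) (hfS X hx) X' hx'.1 (hfX X hx).symm hne
        (by rw [he]; exact hfX X' hx') (by linarith)
  have h2 := Finset.card_le_card_sdiff_add_card (s := S.filter (fun X => ExtP S X)) (t := T)
  omega

theorem main_aux : ∀ (k : ℕ) (S : Finset Pt), S.card = 2 * k → GP S →
    (∃ Q ∈ S, ¬ ExtP S Q) → ¬ (k = 3 ∧ Exceptional S) → catalan k < pm S := by
  intro k
  induction k using Nat.strong_induction_on with
  | _ k ih =>
  intro S hc hg hQ hexc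
  obtain ⟨Q, hQ, hn⟩ := hQ
  by_cases hp : Par S
  swap
  · unfold Par at hp
    push Not at hp
    obtain ⟨A, hA, Q', hQ', hn', hodd⟩ := hp
    exact pierce_odd hg hc hA hQ' hn' hodd
  have hk1 : 1 ≤ k := by
    have := Finset.card_pos.2 ⟨Q, hQ⟩
    omega
  have hN := nonext_card hg hc hk1 hp
  have hNpos : 0 < (S.filter (fun Q => ¬ ExtP S Q)).card :=
    Finset.card_pos.2 ⟨Q, Finset.mem_filter.2 ⟨hQ, hn⟩⟩
  have hE := Finset.card_filter_add_card_filter_not (s := S) (fun X => ExtP S X)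
  rcases lt_trichotomy k 4 with hk | hk | hk
  · have hk3 : k = 3 := by omega
    subst hk3
    exact absurd ⟨rfl, exceptional_of hg hc hp hQ hn⟩ hexc
  · subst hk
    by_cases h1 : (S.filter (fun Q => ¬ ExtP S Q)).card = 1
    · exfalso
      refine not_one hg hc hp hQ hn ?_
      intro P hP hPQ
      by_contra h
      exact hPQ (Finset.card_le_one.1 h1.le P (by simp [hP, h]) Q (by simp [hQ, hn]))
    · exact two_case hg hc hp (by omega)
  · obtain ⟨n, rfl⟩ : ∃ n, k = n + 1 := ⟨k - 1, by omega⟩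
    obtain ⟨u, hu, v, hv, w, hw, huQ, hvQ, hwQ, huv, huw, hvw, a, b, c, ha, hb, hc', hs, he⟩ :=
      tri hg hQ hn
    obtain ⟨X, Y, hX, hY, hYX, h0, hXT, hYT⟩ := exists_edge hg (by omega) {u, v, w}
      Finset.card_le_three (by omega)
    simp only [Finset.mem_insert, Finset.mem_singleton, not_or] at hXT hYT
    refine lt_of_edge hg hc hX hY hYX h0 ?_
    have hQX : Q ≠ X := by rintro rfl; exact hn hX
    have hQY : Q ≠ Y := by
      rintro rfl
      have := (rank_bounds hg hX hQ hn).1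
      omega
    have hsub : (S.erase X).erase Y ⊆ S :=
      (Finset.erase_subset _ _).trans (Finset.erase_subset _ _)
    refine ih n (by omega) _ ?_ (hg.mono hsub) ⟨Q, by simp [hQ, hQX, hQY], ?_⟩ (by omega)
    · rw [Finset.card_erase_of_mem (by simp [hYX, hY]), Finset.card_erase_of_mem hX.1]
      omega
    · rintro ⟨-, s, t, h⟩
      have k1 := h u (by simp [hu, Ne.symm hXT.1, Ne.symm hYT.1]) huQ
      have k2 := h v (by simp [hv, Ne.symm hXT.2.1, Ne.symm hYT.2.1]) hvQ
      have k3 := h w (by simp [hw, Ne.symm hXT.2.2, Ne.symm hYT.2.2]) hwQ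
      have e1 : Q.1 = a * u.1 + b * v.1 + c * w.1 := by rw [he]; simp
      have e2 : Q.2 = a * u.2 + b * v.2 + c * w.2 := by rw [he]; simp
      have l1 := mul_pos ha k1
      have l2 := mul_pos hb k2
      have l3 := mul_pos hc' k3
      have hz : a * (s * (u.1 - Q.1) + t * (u.2 - Q.2)) + b * (s * (v.1 - Q.1) + t * (v.2 - Q.2)) +
          c * (s * (w.1 - Q.1) + t * (w.2 - Q.2)) = 0 := by
        have : a = 1 - b - c := by linarith
        rw [e1, e2, this]; ring
      linarith


/-- If a set `S` of `2k` points in general position is neither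
in convex position nor (for `k = 3`) of the exceptional order type, then
`pm S > C_k`. -/
theorem catalan_lt_pm_of_not_convex_not_exceptional (k : ℕ) (S : Finset Pt)
    (hcard : S.card = 2 * k) (hgp : GeneralPosition S)
    (hconv : ¬ ConvexPosition S) (hexc : ¬ (k = 3 ∧ Exceptional S)) :
    catalan k < pm S := by
  refine main_aux k S hcard (gp_of hgp) ?_ hexc
  unfold ConvexPosition at hconv
  push Not at hconv
  obtain ⟨p, hp, hm⟩ := hconv
  exact ⟨p, hp, fun h => notMem_of_ext h hm⟩
end
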